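/- arXiv:1708.03257 — 7 statements merged into one kernel-verified Lean document; each statement's English description precedes it below -/
import Mathlib

section
/- There is a universal constant C such that the following holds. Let α < 1/2, let d be a positive integer, σ ≥ 0, let p be a polynomial of degree at most d, and let m ≥ C·d/(1−2α) be a positive integer. Suppose the samples (x_1,y_1),…,(x_n,y_n) ∈ [-1,1]×ℝ are α-good for the size-m Chebyshev partition with respect to p and σ. Then any polynomial p̂ of degree at most d minimizing the ℓ1-regression objective Σ_{j=1}^m |I_j| · (mean over i with x_i ∈ I_j of |y_i − q(x_i)|) over degree-d polynomials q satisfies ‖p̂ − p‖_1 ≤ 4σ/(1−2α). -/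
open Polynomial

/-- The `j`-th interval of the size-`m` Chebyshev partition of `[-1,1]`. -/
noncomputable def chebInterval (m j : ℕ) : Set ℝ :=
  Set.Icc (Real.cos (Real.pi * j / m)) (Real.cos (Real.pi * ((j : ℝ) - 1) / m))

/-- The length `|I_j|` of the `j`-th interval of the size-`m` Chebyshev partition. -/
noncomputable def chebLen (m j : ℕ) : ℝ :=
  Real.cos (Real.pi * ((j : ℝ) - 1) / m) - Real.cos (Real.pi * j / m)

open Classical in
/-- The set `S_j` of indices of samples falling in the interval `I_j`. -/
noncomputable def sampleSet {n : ℕ} (m j : ℕ) (x : Fin n → ℝ) : Finset (Fin n) :=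
  Finset.univ.filter (fun i => x i ∈ chebInterval m j)

open Classical in
/-- The samples `(x_i, y_i)` are `α`-good for the size-`m` Chebyshev partition with respect to
the polynomial `p` and the noise level `σ`: every interval contains a sample point and strictly
fewer than an `α` fraction of the samples in each interval are outliers
(i.e. have `|y_i - p(x_i)| > σ`). -/
def AlphaGood {n : ℕ} (m : ℕ) (x y : Fin n → ℝ) (p : Polynomial ℝ) (σ α : ℝ) : Prop :=
  ∀ j ∈ Finset.Icc 1 m, (sampleSet m j x).Nonempty ∧
    (((sampleSet m j x).filter (fun i => σ < |y i - p.eval (x i)|)).card : ℝ) <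
      α * ((sampleSet m j x).card : ℝ)

/-- The `ℓ1` regression objective
`∑_j |I_j| · (mean over i with x_i ∈ I_j of |y_i − q(x_i)|)`. -/
noncomputable def l1Obj {n : ℕ} (m : ℕ) (x y : Fin n → ℝ) (q : Polynomial ℝ) : ℝ :=
  ∑ j ∈ Finset.Icc 1 m, chebLen m j *
    ((∑ i ∈ sampleSet m j x, |y i - q.eval (x i)|) / ((sampleSet m j x).card : ℝ))

/-!
Let `r = p̂ - p`. By Bernstein's inequality for the weight `|sin θ|` on the cosine side, the
oscillation of a polynomial of degree at most `d` over the Chebyshev partition is at most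
`ε (1 - 2α)` times its `L¹` norm, so sample means and integrals of Lipschitz functions of such
polynomials agree up to that error. Comparing `r` with `0` in the objective, where an outlier can
only hide the excess of `|r|` over `σ`, gives `(1 - 2α) ‖r‖₁ ≤ 4σ(1 - α) + 4ε(1 - 2α) ‖r‖₁`, which
suffices as soon as `α ≥ 4ε`.

If `α < 4ε`, replacing the outliers by `0` makes all the noise bounded by `σ` and changes the
objective negligibly. Suppose then that `‖r‖₁ > 4σ`. The comparison with `0` is nearly an equality,
which forces the truncation of `r` at `±σ` to be almost everywhere close to `±σ`. Passing from one
of these two wells to the other costs an amount of `r'` and of the potential `σ - |clip σ r|`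
(Modica–Mortola), and Bernstein's inequality limits `r'`; hence the truncation has a small `L¹`
modulus of continuity at scale `1 / d`, and convolving it with the Fejér–Korovkin kernel yields a
polynomial `q` of degree at most `d` that fits the data better than `r`.
-/

namespace L1Regression

open Real

theorem abs_sub_le_integral_abs_deriv {f f' : ℝ → ℝ} (hf : ∀ x, HasDerivAt f (f' x) x)
    (hf' : Continuous f') {a b x y : ℝ} (hx : x ∈ Set.Icc a b) (hy : y ∈ Set.Icc a b) :
    |f y - f x| ≤ ∫ t in a..b, |f' t| := by
  wlog hxy : x ≤ y generalizing x y
  · rw [abs_sub_comm]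
    exact this hy hx (le_of_not_ge hxy)
  calc |f y - f x| = |∫ t in x..y, f' t| := by
        rw [intervalIntegral.integral_eq_sub_of_hasDerivAt (fun t _ => hf t)
          (hf'.intervalIntegrable x y)]
    _ ≤ ∫ t in x..y, |f' t| := intervalIntegral.abs_integral_le_integral_abs hxy
    _ ≤ ∫ t in a..b, |f' t| :=
        intervalIntegral.integral_mono_interval hx.1 hxy hy.2
          (.of_forall fun t => abs_nonneg (f' t)) (hf'.abs.intervalIntegrable a b)

theorem integral_interval_swap {F : ℝ → ℝ → ℝ} (hF : Continuous (Function.uncurry F))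
    (a b c d : ℝ) :
    ∫ s in a..b, ∫ t in c..d, F s t = ∫ t in c..d, ∫ s in a..b, F s t :=
  MeasureTheory.intervalIntegral_intervalIntegral_swap <|
    (hF.continuousOn.integrableOn_compact (isCompact_uIcc.prod isCompact_uIcc)).mono_set
      (Set.prod_mono Set.uIoc_subset_uIcc Set.uIoc_subset_uIcc)

theorem integral_comp_add_of_periodic {g : ℝ → ℝ} (hg : Function.Periodic g (2 * π)) (h : ℝ) :
    ∫ θ in -π..π, g (θ + h) = ∫ θ in -π..π, g θ := by
  rw [intervalIntegral.integral_comp_add_right]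
  convert hg.intervalIntegral_add_eq (-π + h) (-π) using 2 <;> ring

theorem integral_symm_eq_zero_of_odd {g : ℝ → ℝ} (hg : ∀ t, g (-t) = -g t) (a : ℝ) :
    ∫ t in -a..a, g t = 0 := by
  have h := intervalIntegral.integral_comp_neg (a := -a) (b := a) g
  simp only [hg, intervalIntegral.integral_neg, neg_neg] at h
  linarith

theorem integral_symm_eq_two_mul_of_even {g : ℝ → ℝ} (hg : ∀ t, g (-t) = g t) {a : ℝ}
    (hi : ∀ b c, IntervalIntegrable g MeasureTheory.volume b c) :
    ∫ t in -a..a, g t = 2 * ∫ t in 0..a, g t := by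
  have h := intervalIntegral.integral_comp_neg (a := 0) (b := a) g
  simp only [hg, neg_zero] at h
  rw [← intervalIntegral.integral_add_adjacent_intervals (hi (-a) 0) (hi 0 a), ← h, two_mul]

/-! ### Squared trigonometric sums as kernels -/

theorem integral_cos_intCast_mul (p : ℤ) :
    ∫ t in -π..π, cos (p * t) = if p = 0 then 2 * π else 0 := by
  split_ifs with hp
  · simp [hp, two_mul]
  · have hp' : (p : ℝ) ≠ 0 := by exact_mod_cast hp
    rw [intervalIntegral.integral_comp_mul_left (fun t => cos t) hp', integral_cos]
    simp [sin_int_mul_pi]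

theorem integral_cos_mul_cos (p : ℤ) (j : ℕ) :
    ∫ t in -π..π, cos (p * t) * cos (j * t) =
      π * ((if p = j then 1 else 0) + if p = -j then 1 else 0) := by
  have product_to_sum (t : ℝ) : cos (p * t) * cos (j * t) =
      (cos ((p - j : ℤ) * t) + cos ((p + j : ℤ) * t)) / 2 := by
    push_cast
    rw [sub_mul, add_mul, ← two_mul_cos_mul_cos]
    ring
  simp_rw [product_to_sum, intervalIntegral.integral_div]
  rw [intervalIntegral.integral_add (Continuous.intervalIntegrable (by fun_prop) _ _)
    (Continuous.intervalIntegrable (by fun_prop) _ _), integral_cos_intCast_mul,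
    integral_cos_intCast_mul]
  simp only [sub_eq_zero, add_eq_zero_iff_eq_neg]
  split_ifs <;> ring

theorem sum_mul_ite_sub_eq (N : ℕ) (a : ℕ → ℝ) (j : ℕ) :
    ∑ k ∈ Finset.range N, ∑ l ∈ Finset.range N, a k * a l * (if (k - l : ℤ) = j then 1 else 0) =
      ∑ l ∈ Finset.range (N - j), a l * a (l + j) := by
  have inner (l : ℕ) : ∑ k ∈ Finset.range N, a k * a l * (if (k - l : ℤ) = j then 1 else 0) =
      if l + j < N then a l * a (l + j) else 0 := by
    have (k : ℕ) : (k - l : ℤ) = j ↔ l + j = k := by omega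
    simp only [this, mul_ite, mul_one, mul_zero, Finset.sum_ite_eq, Finset.mem_range,
      mul_comm (a l)]
  have range_eq : {l ∈ Finset.range N | l + j < N} = Finset.range (N - j) := by
    ext l
    simp only [Finset.mem_filter, Finset.mem_range]
    omega
  rw [Finset.sum_comm]
  simp only [inner, ← Finset.sum_filter, range_eq]

theorem sum_mul_ite_sub_eq_neg (N : ℕ) (a : ℕ → ℝ) (j : ℕ) :
    ∑ k ∈ Finset.range N, ∑ l ∈ Finset.range N, a k * a l * (if (k - l : ℤ) = -j then 1 else 0) =
      ∑ l ∈ Finset.range (N - j), a l * a (l + j) := by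
  have (k l : ℕ) : (k - l : ℤ) = -j ↔ (l - k : ℤ) = j := by omega
  rw [← sum_mul_ite_sub_eq, Finset.sum_comm]
  simp only [this, mul_comm (a _) (a _)]

/-- The squared modulus of the trigonometric sum `∑ l < N, a l * exp (i l t)`, a nonnegative
summation kernel. The Fejér and the Fejér–Korovkin kernels are of this form. -/
noncomputable def squareKernel (N : ℕ) (a : ℕ → ℝ) (t : ℝ) : ℝ :=
  (∑ l ∈ Finset.range N, a l * cos (l * t)) ^ 2 + (∑ l ∈ Finset.range N, a l * sin (l * t)) ^ 2

section squareKernel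

variable (N : ℕ) (a : ℕ → ℝ)

theorem squareKernel_nonneg (t : ℝ) : 0 ≤ squareKernel N a t := by
  unfold squareKernel; positivity

theorem squareKernel_neg (t : ℝ) : squareKernel N a (-t) = squareKernel N a t := by
  simp [squareKernel]

@[fun_prop]
theorem continuous_squareKernel : Continuous (squareKernel N a) := by
  unfold squareKernel; fun_prop

theorem squareKernel_eq_sum (t : ℝ) :
    squareKernel N a t =
      ∑ k ∈ Finset.range N, ∑ l ∈ Finset.range N, a k * a l * cos ((k - l : ℤ) * t) := by
  rw [squareKernel, sq, sq, Finset.sum_mul_sum, Finset.sum_mul_sum, ← Finset.sum_add_distrib]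
  refine Finset.sum_congr rfl fun k _ => ?_
  rw [← Finset.sum_add_distrib]
  refine Finset.sum_congr rfl fun l _ => ?_
  push_cast
  rw [sub_mul, cos_sub]
  ring

theorem integral_squareKernel_mul_cos (j : ℕ) :
    ∫ t in -π..π, squareKernel N a t * cos (j * t) =
      2 * π * ∑ l ∈ Finset.range (N - j), a l * a (l + j) := by
  have integral_term (k l : ℕ) :
      ∫ t in -π..π, a k * a l * cos ((k - l : ℤ) * t) * cos (j * t) =
        π * (a k * a l * (if (k - l : ℤ) = j then 1 else 0) +
          a k * a l * (if (k - l : ℤ) = -j then 1 else 0)) := by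
    simp_rw [mul_assoc (a k * a l)]
    rw [intervalIntegral.integral_const_mul, integral_cos_mul_cos]
    ring
  simp_rw [squareKernel_eq_sum, ← Finset.sum_product', Finset.sum_mul]
  rw [intervalIntegral.integral_finsetSum fun q _ =>
    Continuous.intervalIntegrable (by fun_prop) _ _]
  simp_rw [integral_term, ← Finset.mul_sum, Finset.sum_add_distrib, Finset.sum_product,
    sum_mul_ite_sub_eq, sum_mul_ite_sub_eq_neg]
  ring

theorem integral_squareKernel :
    ∫ t in -π..π, squareKernel N a t = 2 * π * ∑ l ∈ Finset.range N, a l ^ 2 := by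
  simpa [sq] using integral_squareKernel_mul_cos N a 0

end squareKernel

/-! ### Trigonometric polynomials and the `L¹` Bernstein inequality -/

/-- The real trigonometric polynomials of degree at most `n`. Allowing phases and negative
frequencies makes closure under products and derivatives immediate. -/
noncomputable def trigPoly (n : ℕ) : Submodule ℝ (ℝ → ℝ) :=
  Submodule.span ℝ {f | ∃ (k : ℤ) (φ : ℝ), k.natAbs ≤ n ∧ f = fun θ => cos (k * θ + φ)}

section trigPoly

variable {n k : ℕ} {f g : ℝ → ℝ}

theorem cos_add_mem_trigPoly {k : ℤ} (hk : k.natAbs ≤ n) (φ : ℝ) :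
    (fun θ => cos (k * θ + φ)) ∈ trigPoly n :=
  Submodule.subset_span ⟨k, φ, hk, rfl⟩

theorem trigPoly_mono (h : n ≤ k) : trigPoly n ≤ trigPoly k :=
  Submodule.span_mono fun _ ⟨l, φ, hl, hf⟩ => ⟨l, φ, hl.trans h, hf⟩

theorem mul_mem_trigPoly (hf : f ∈ trigPoly n) (hg : g ∈ trigPoly k) :
    f * g ∈ trigPoly (n + k) := by
  suffices trigPoly n * trigPoly k ≤ trigPoly (n + k) from this (Submodule.mul_mem_mul hf hg)
  conv_lhs => rw [trigPoly, trigPoly, Submodule.span_mul_span]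
  rw [Submodule.span_le]
  rintro _ ⟨_, ⟨k₁, φ₁, h₁, rfl⟩, _, ⟨k₂, φ₂, h₂, rfl⟩, rfl⟩
  have product_to_sum : ((fun θ => cos (k₁ * θ + φ₁)) * fun θ => cos (k₂ * θ + φ₂)) =
      (1 / 2 : ℝ) • ((fun θ => cos ((k₁ - k₂ : ℤ) * θ + (φ₁ - φ₂))) +
        fun θ => cos ((k₁ + k₂ : ℤ) * θ + (φ₁ + φ₂))) := by
    ext θ
    have := two_mul_cos_mul_cos (k₁ * θ + φ₁) (k₂ * θ + φ₂)
    simp only [Pi.mul_apply, Pi.smul_apply, Pi.add_apply, smul_eq_mul, Int.cast_sub, Int.cast_add]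
    ring_nf at this ⊢
    linarith
  simp only [product_to_sum]
  exact Submodule.smul_mem _ _ (Submodule.add_mem _ (cos_add_mem_trigPoly (by omega) _)
    (cos_add_mem_trigPoly (by omega) _))

theorem one_mem_trigPoly : 1 ∈ trigPoly n := by
  convert cos_add_mem_trigPoly (n := n) (k := 0) (by simp) 0 using 1
  ext; simp

theorem cos_mem_trigPoly : cos ∈ trigPoly 1 := by
  simpa using cos_add_mem_trigPoly (n := 1) (k := 1) (by simp) 0

theorem sin_mem_trigPoly : sin ∈ trigPoly 1 := by
  simpa [cos_sub_pi_div_two, ← sub_eq_add_neg] using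
    cos_add_mem_trigPoly (n := 1) (k := 1) (by simp) (-(π / 2))

theorem eval_cos_mem_trigPoly {r : ℝ[X]} (hr : r.natDegree ≤ n) :
    (fun θ => r.eval (cos θ)) ∈ trigPoly n := by
  have cos_pow_mem (l : ℕ) : cos ^ l ∈ trigPoly l := by
    induction l with
    | zero => exact one_mem_trigPoly
    | succ l ih => exact pow_succ cos l ▸ mul_mem_trigPoly ih cos_mem_trigPoly
  have expand : (fun θ => r.eval (cos θ)) =
      ∑ l ∈ Finset.range (r.natDegree + 1), r.coeff l • cos ^ l := by
    ext θ
    simp [eval_eq_sum_range]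
  rw [expand]
  refine Submodule.sum_mem _ fun l hl => Submodule.smul_mem _ _ (trigPoly_mono ?_ (cos_pow_mem l))
  have := Finset.mem_range.1 hl
  omega

theorem contDiff_of_mem_trigPoly (hf : f ∈ trigPoly n) : ContDiff ℝ 1 f := by
  induction hf using Submodule.span_induction with
  | mem f hf => obtain ⟨k, φ, -, rfl⟩ := hf; fun_prop
  | zero => exact contDiff_const
  | add f g _ _ hf hg => exact hf.add hg
  | smul c f _ hf => exact hf.const_smul c

theorem continuous_of_mem_trigPoly (hf : f ∈ trigPoly n) : Continuous f :=
  (contDiff_of_mem_trigPoly hf).continuous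

theorem hasDerivAt_of_mem_trigPoly (hf : f ∈ trigPoly n) (θ : ℝ) : HasDerivAt f (deriv f θ) θ :=
  ((contDiff_of_mem_trigPoly hf).differentiable one_ne_zero θ).hasDerivAt

theorem deriv_mem_trigPoly (hf : f ∈ trigPoly n) : deriv f ∈ trigPoly n := by
  induction hf using Submodule.span_induction with
  | mem f hf =>
    obtain ⟨k, φ, hk, rfl⟩ := hf
    have : deriv (fun θ => cos (k * θ + φ)) =
        (k : ℝ) • fun θ => cos (k * θ + (φ + π / 2)) := by
      ext θ
      have := ((hasDerivAt_id' θ).const_mul (k : ℝ)).add_const φ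
      rw [this.cos.deriv]
      simp [← add_assoc, cos_add_pi_div_two, mul_comm]
    exact this ▸ Submodule.smul_mem _ _ (cos_add_mem_trigPoly hk _)
  | zero => simp
  | add f g hf hg hf' hg' =>
    have : deriv (f + g) = deriv f + deriv g := funext fun θ =>
      ((hasDerivAt_of_mem_trigPoly hf θ).add (hasDerivAt_of_mem_trigPoly hg θ)).deriv
    exact this ▸ add_mem hf' hg'
  | smul c f hf hf' =>
    have : deriv (c • f) = c • deriv f := funext fun θ =>
      ((hasDerivAt_of_mem_trigPoly hf θ).const_smul c).deriv
    exact this ▸ Submodule.smul_mem _ _ hf'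

theorem periodic_of_mem_trigPoly (hf : f ∈ trigPoly n) : Function.Periodic f (2 * π) := by
  induction hf using Submodule.span_induction with
  | mem f hf =>
    obtain ⟨k, φ, -, rfl⟩ := hf
    intro θ
    dsimp only
    rw [← cos_add_int_mul_two_pi (k * θ + φ) k]
    ring_nf
  | zero => exact fun θ => rfl
  | add f g _ _ hf hg => exact hf.add hg
  | smul c f _ hf => exact hf.smul c

theorem integral_fejer_mul_cos (n : ℕ) (k : ℤ) :
    ∫ s in -π..π, squareKernel n (fun _ => 1) s * cos (k * s) =
      2 * π * (n - k.natAbs : ℕ) := by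
  have cos_natAbs (s : ℝ) : cos (k * s) = cos (k.natAbs * s) := by
    rw [← cos_abs, abs_mul, Nat.cast_natAbs, Int.cast_abs, ← cos_abs (|(k : ℝ)| * s),
      abs_mul, abs_abs]
  simp_rw [cos_natAbs, integral_squareKernel_mul_cos]
  simp

theorem integral_cos_mul_fejer_mul_sin {k : ℤ} (hk : k.natAbs ≤ n) (φ : ℝ) :
    ∫ s in -π..π, cos (k * s + φ) * (squareKernel n (fun _ => 1) s * sin (n * s)) =
      -(π * k * sin φ) := by
  set F := squareKernel n fun _ => 1
  have split (s : ℝ) : cos (k * s + φ) * (F s * sin (n * s)) =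
      cos φ * (F s * cos (k * s) * sin (n * s)) -
        sin φ / 2 * (F s * cos ((k - n : ℤ) * s) - F s * cos ((k + n : ℤ) * s)) := by
    have := two_mul_sin_mul_sin (k * s) (n * s)
    rw [← sub_mul, ← add_mul] at this
    push_cast
    rw [cos_add]
    linear_combination -(F s * sin φ / 2) * this
  have odd_part : ∫ s in -π..π, F s * cos (k * s) * sin (n * s) = 0 :=
    integral_symm_eq_zero_of_odd (fun s => by simp [F, squareKernel_neg]) π
  have multiplier : ((n - (k - n).natAbs : ℕ) : ℝ) - (n - (k + n).natAbs : ℕ) = k := by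
    have : ((n - (k - n).natAbs : ℕ) : ℤ) - (n - (k + n).natAbs : ℕ) = k := by omega
    exact_mod_cast this
  have hF : Continuous F := continuous_squareKernel _ _
  simp_rw [split]
  rw [intervalIntegral.integral_sub (Continuous.intervalIntegrable (by fun_prop) _ _)
      (Continuous.intervalIntegrable (by fun_prop) _ _), intervalIntegral.integral_const_mul,
    intervalIntegral.integral_const_mul, odd_part,
    intervalIntegral.integral_sub (Continuous.intervalIntegrable (by fun_prop) _ _)
      (Continuous.intervalIntegrable (by fun_prop) _ _),
    integral_fejer_mul_cos, integral_fejer_mul_cos]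
  linear_combination (-(sin φ * π)) * multiplier

/-- Fejér's form of the M. Riesz interpolation formula. -/
theorem hasDerivAt_integral_fejer (hf : f ∈ trigPoly n) (θ : ℝ) :
    HasDerivAt f
      (π⁻¹ * ∫ s in -π..π, f (θ + s) * (squareKernel n (fun _ => 1) s * sin (n * s))) θ := by
  induction hf using Submodule.span_induction with
  | mem f hf =>
    obtain ⟨k, φ, hk, rfl⟩ := hf
    have phase (s : ℝ) : k * (θ + s) + φ = k * s + (k * θ + φ) := by ring
    simp only [phase, integral_cos_mul_fejer_mul_sin hk]
    convert (((hasDerivAt_id' θ).const_mul (k : ℝ)).add_const φ).cos using 1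
    field_simp
  | zero => simp
  | add f g hf hg hf' hg' =>
    have hfc := continuous_of_mem_trigPoly hf
    have hgc := continuous_of_mem_trigPoly hg
    refine (hf'.add hg').congr_deriv ?_
    rw [← mul_add, ← intervalIntegral.integral_add
      (Continuous.intervalIntegrable (by fun_prop) _ _)
      (Continuous.intervalIntegrable (by fun_prop) _ _)]
    simp only [Pi.add_apply, add_mul]
  | smul c f _ hf' =>
    refine (hf'.const_smul c).congr_deriv ?_
    simp only [Pi.smul_apply, smul_eq_mul, mul_assoc, intervalIntegral.integral_const_mul]
    ring

theorem integral_abs_deriv_le (hf : f ∈ trigPoly n) :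
    ∫ θ in -π..π, |deriv f θ| ≤ 2 * n * ∫ θ in -π..π, |f θ| := by
  set F := squareKernel n fun _ => 1
  have hF : Continuous F := continuous_squareKernel _ _
  have hfc := continuous_of_mem_trigPoly hf
  have pointwise (θ : ℝ) : |deriv f θ| ≤ π⁻¹ * ∫ s in -π..π, |f (θ + s)| * F s := by
    rw [(hasDerivAt_integral_fejer hf θ).deriv, abs_mul, abs_of_pos (inv_pos.2 pi_pos)]
    gcongr
    refine (intervalIntegral.abs_integral_le_integral_abs (by linarith [pi_pos])).trans ?_
    refine intervalIntegral.integral_mono (by linarith [pi_pos])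
      (Continuous.intervalIntegrable (by fun_prop) _ _)
      (Continuous.intervalIntegrable (by fun_prop) _ _) fun s => ?_
    dsimp only
    rw [abs_mul, abs_mul, abs_of_nonneg (squareKernel_nonneg _ _ s)]
    gcongr
    exact mul_le_of_le_one_right (squareKernel_nonneg _ _ s) (abs_sin_le_one _)
  calc ∫ θ in -π..π, |deriv f θ|
      ≤ ∫ θ in -π..π, π⁻¹ * ∫ s in -π..π, |f (θ + s)| * F s := by
        refine intervalIntegral.integral_mono (by linarith [pi_pos])
          ((continuous_of_mem_trigPoly (deriv_mem_trigPoly hf)).abs.intervalIntegrable _ _)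
          (Continuous.intervalIntegrable ?_ _ _) pointwise
        exact continuous_const.mul
          (intervalIntegral.continuous_parametric_intervalIntegral_of_continuous'
            (by fun_prop) _ _)
    _ = π⁻¹ * ∫ s in -π..π, (∫ θ in -π..π, |f (θ + s)|) * F s := by
        rw [intervalIntegral.integral_const_mul,
          integral_interval_swap (F := fun θ s => |f (θ + s)| * F s) (by fun_prop)]
        simp only [intervalIntegral.integral_mul_const]
    _ = 2 * n * ∫ θ in -π..π, |f θ| := by
        have shift (s : ℝ) := integral_comp_add_of_periodic
          ((periodic_of_mem_trigPoly hf).comp fun x => |x|) s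
        simp only [Function.comp_apply] at shift
        simp only [shift, intervalIntegral.integral_const_mul, F, integral_squareKernel]
        simp
        field_simp

end trigPoly

/-! ### The weight `|sin θ|` -/

/-- The norm of `L¹([-π, π], |sin θ| dθ)`. On functions of the form `u ∘ cos` it is twice the norm
of `u` in `L¹([-1, 1])`. -/
noncomputable def sinNorm (f : ℝ → ℝ) : ℝ :=
  ∫ θ in -π..π, |f θ| * |sin θ|

theorem sinNorm_nonneg (f : ℝ → ℝ) : 0 ≤ sinNorm f :=
  intervalIntegral.integral_nonneg (by linarith [pi_pos]) fun θ _ => by positivity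

theorem integral_comp_cos {u : ℝ → ℝ} (hu : Continuous u) :
    ∫ θ in -π..π, u (cos θ) * |sin θ| = 2 * ∫ t in (-1)..1, u t := by
  rw [integral_symm_eq_two_mul_of_even (by simp)
    fun b c => Continuous.intervalIntegrable (by fun_prop) b c]
  have change_var : ∫ θ in 0..π, u (cos θ) * -sin θ = ∫ t in cos 0..cos π, u t :=
    intervalIntegral.integral_comp_mul_deriv (fun θ _ => hasDerivAt_cos θ) (by fun_prop) hu
  have abs_sin : ∫ θ in 0..π, u (cos θ) * |sin θ| = ∫ θ in 0..π, -(u (cos θ) * -sin θ) := by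
    refine intervalIntegral.integral_congr fun θ hθ => ?_
    rw [Set.uIcc_of_le pi_pos.le] at hθ
    rw [abs_of_nonneg (sin_nonneg_of_mem_Icc hθ)]
    ring
  rw [abs_sin, intervalIntegral.integral_neg, change_var, cos_zero, cos_pi,
    ← intervalIntegral.integral_symm]

theorem le_abs_sin {δ θ : ℝ} (hδ : 0 ≤ δ) (h₁ : δ ≤ θ) (h₂ : θ ≤ π - δ) : δ / 2 ≤ |sin θ| := by
  wlog hθ : θ ≤ π / 2 generalizing θ
  · rw [← sin_pi_sub]
    exact this (by linarith) (by linarith) (by linarith)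
  have jordan : 2 / π * θ ≤ sin θ := mul_le_sin (hδ.trans h₁) hθ
  have : 1 / 2 ≤ 2 / π := by
    rw [div_le_div_iff₀ (by norm_num) pi_pos]
    linarith [pi_le_four]
  calc δ / 2 ≤ 1 / 2 * θ := by linarith
    _ ≤ 2 / π * θ := by gcongr; linarith
    _ ≤ |sin θ| := jordan.trans (le_abs_self _)

theorem integral_zero_pi_le_of_le {g : ℝ → ℝ} (hg : Continuous g) (hg₀ : ∀ θ, 0 ≤ g θ)
    {M : ℝ} (hM : ∀ θ ∈ Set.Icc 0 π, g θ ≤ M) {δ : ℝ} (hδ : 0 < δ) (hδ₁ : δ ≤ 1) :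
    ∫ θ in 0..π, g θ ≤ 2 * δ * M + 2 / δ * ∫ θ in 0..π, g θ * |sin θ| := by
  have hπ := pi_gt_three
  have hi (a b : ℝ) : IntervalIntegrable g MeasureTheory.volume a b := hg.intervalIntegrable a b
  have near_endpoint {a : ℝ} (h₁ : 0 ≤ a) (h₂ : a + δ ≤ π) : ∫ θ in a..(a + δ), g θ ≤ δ * M := by
    have := intervalIntegral.integral_mono_on (by linarith) (hi a (a + δ))
      (intervalIntegrable_const (c := M)) fun θ hθ =>
        hM θ ⟨h₁.trans hθ.1, hθ.2.trans h₂⟩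
    simpa using this
  have middle : ∫ θ in δ..(π - δ), g θ ≤ 2 / δ * ∫ θ in 0..π, g θ * |sin θ| := by
    calc ∫ θ in δ..(π - δ), g θ ≤ ∫ θ in δ..(π - δ), 2 / δ * (g θ * |sin θ|) := by
          refine intervalIntegral.integral_mono_on (by linarith) (hi _ _)
            (Continuous.intervalIntegrable (by fun_prop) _ _) fun θ hθ => ?_
          calc g θ = 2 / δ * (g θ * (δ / 2)) := by field_simp
            _ ≤ 2 / δ * (g θ * |sin θ|) := by
              gcongr
              exacts [hg₀ θ, le_abs_sin hδ.le hθ.1 hθ.2]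
      _ ≤ 2 / δ * ∫ θ in 0..π, g θ * |sin θ| := by
          rw [intervalIntegral.integral_const_mul]
          gcongr
          exact intervalIntegral.integral_mono_interval hδ.le (by linarith) (by linarith)
            (.of_forall fun θ => mul_nonneg (hg₀ θ) (abs_nonneg _))
            (Continuous.intervalIntegrable (by fun_prop) _ _)
  have left := near_endpoint (a := 0) le_rfl (by linarith)
  have right := near_endpoint (a := π - δ) (by linarith) (by linarith)
  rw [zero_add] at left
  rw [sub_add_cancel] at right
  rw [← intervalIntegral.integral_add_adjacent_intervals (hi 0 δ) (hi δ π),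
    ← intervalIntegral.integral_add_adjacent_intervals (hi δ (π - δ)) (hi (π - δ) π)]
  linarith

theorem integral_abs_le_of_le {f : ℝ → ℝ} (hf : Continuous f)
    {M : ℝ} (hM : ∀ θ ∈ Set.Icc (-π) π, |f θ| ≤ M) {δ : ℝ} (hδ : 0 < δ) (hδ₁ : δ ≤ 1) :
    ∫ θ in -π..π, |f θ| ≤ 4 * δ * M + 2 / δ * sinNorm f := by
  have half (g : ℝ → ℝ) (hg : Continuous g) :
      ∫ θ in -π..π, g θ = (∫ θ in 0..π, g θ) + ∫ θ in 0..π, g (-θ) := by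
    rw [intervalIntegral.integral_comp_neg, neg_zero, add_comm,
      intervalIntegral.integral_add_adjacent_intervals (hg.intervalIntegrable _ _)
        (hg.intervalIntegrable _ _)]
  have right := integral_zero_pi_le_of_le hf.abs (fun _ => abs_nonneg _)
    (fun θ hθ => hM θ ⟨by linarith [hθ.1, pi_pos], hθ.2⟩) hδ hδ₁
  have left := integral_zero_pi_le_of_le (g := fun θ => |f (-θ)|) (by fun_prop)
    (fun _ => abs_nonneg _)
    (fun θ hθ => hM (-θ) ⟨by linarith [hθ.2], by linarith [hθ.1, pi_pos]⟩) hδ hδ₁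
  rw [sinNorm, half _ hf.abs, half (fun θ => |f θ| * |sin θ|) (by fun_prop)]
  simp only [sin_neg, abs_neg]
  linarith

section trigPoly

variable {n : ℕ} {f : ℝ → ℝ}

theorem abs_le_integral_abs (hn : n ≠ 0) (hf : f ∈ trigPoly n) {x : ℝ} (hx : x ∈ Set.Icc (-π) π) :
    |f x| ≤ 3 * n * ∫ θ in -π..π, |f θ| := by
  have hπ := pi_gt_three
  have hn₁ : (1 : ℝ) ≤ n := by exact_mod_cast Nat.one_le_iff_ne_zero.2 hn
  set J := ∫ θ in -π..π, |f θ|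
  have hJ : 0 ≤ J := intervalIntegral.integral_nonneg (by linarith) fun _ _ => abs_nonneg _
  have close (y : ℝ) (hy : y ∈ Set.Icc (-π) π) : |f x| - 2 * n * J ≤ |f y| := by
    have deviation := abs_sub_le_integral_abs_deriv (hasDerivAt_of_mem_trigPoly hf)
      (continuous_of_mem_trigPoly (deriv_mem_trigPoly hf)) hy hx
    linarith [integral_abs_deriv_le hf, abs_sub_abs_le_abs_sub (f x) (f y)]
  have average : 2 * π * (|f x| - 2 * n * J) ≤ J := by
    have := intervalIntegral.integral_mono_on (μ := MeasureTheory.volume) (by linarith)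
      intervalIntegrable_const
      ((continuous_of_mem_trigPoly hf).abs.intervalIntegrable (-π) π) close
    rw [intervalIntegral.integral_const, smul_eq_mul] at this
    linarith
  have : |f x| - 2 * n * J ≤ J := by
    by_contra! h
    nlinarith
  nlinarith

theorem integral_abs_le_sinNorm (hn : n ≠ 0) (hf : f ∈ trigPoly n) :
    ∫ θ in -π..π, |f θ| ≤ 96 * n * sinNorm f := by
  have hn₁ : (1 : ℝ) ≤ n := by exact_mod_cast Nat.one_le_iff_ne_zero.2 hn
  have := integral_abs_le_of_le (continuous_of_mem_trigPoly hf)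
    (fun θ hθ => abs_le_integral_abs hn hf hθ) (δ := 1 / (24 * n)) (by positivity)
    (by rw [div_le_one (by positivity)]; linarith)
  field_simp at this
  linarith

/-- Bernstein's inequality for the weight `|sin|`, obtained from the unweighted one for
`f * sin`. -/
theorem sinNorm_deriv_le (hn : n ≠ 0) (hf : f ∈ trigPoly n) :
    sinNorm (deriv f) ≤ 100 * n * sinNorm f := by
  have hn₁ : (1 : ℝ) ≤ n := by exact_mod_cast Nat.one_le_iff_ne_zero.2 hn
  have hfc := continuous_of_mem_trigPoly hf
  have hfc' := continuous_of_mem_trigPoly (deriv_mem_trigPoly hf)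
  have product_mem := mul_mem_trigPoly hf sin_mem_trigPoly
  have product_deriv (θ : ℝ) : deriv (f * sin) θ = deriv f θ * sin θ + f θ * cos θ :=
    ((hasDerivAt_of_mem_trigPoly hf θ).mul (hasDerivAt_sin θ)).deriv
  have hpc := continuous_of_mem_trigPoly (deriv_mem_trigPoly product_mem)
  have pointwise (θ : ℝ) : |deriv f θ| * |sin θ| ≤ |deriv (f * sin) θ| + |f θ| := by
    calc |deriv f θ| * |sin θ| = |deriv (f * sin) θ - f θ * cos θ| := by
          rw [product_deriv, add_sub_cancel_right, abs_mul]
      _ ≤ |deriv (f * sin) θ| + |f θ| * |cos θ| := (abs_sub _ _).trans_eq (by rw [abs_mul])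
      _ ≤ |deriv (f * sin) θ| + |f θ| := by
          gcongr
          exact mul_le_of_le_one_right (abs_nonneg _) (abs_cos_le_one θ)
  have bernstein : ∫ θ in -π..π, |deriv (f * sin) θ| ≤ 2 * (n + 1) * sinNorm f := by
    simpa [sinNorm, abs_mul] using integral_abs_deriv_le product_mem
  calc sinNorm (deriv f) ≤ ∫ θ in -π..π, (|deriv (f * sin) θ| + |f θ|) :=
        intervalIntegral.integral_mono (by linarith [pi_pos])
          (Continuous.intervalIntegrable (by fun_prop) _ _)
          (Continuous.intervalIntegrable (by fun_prop) _ _) pointwise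
    _ = (∫ θ in -π..π, |deriv (f * sin) θ|) + ∫ θ in -π..π, |f θ| :=
        intervalIntegral.integral_add (hpc.abs.intervalIntegrable _ _)
          (hfc.abs.intervalIntegrable _ _)
    _ ≤ 2 * (n + 1) * sinNorm f + 96 * n * sinNorm f :=
        add_le_add bernstein (integral_abs_le_sinNorm hn hf)
    _ ≤ 100 * n * sinNorm f := by nlinarith [sinNorm_nonneg f]

theorem integral_abs_deriv_le_sinNorm (hn : n ≠ 0) (hf : f ∈ trigPoly n) :
    ∫ θ in -π..π, |deriv f θ| ≤ 200 * n ^ 2 * sinNorm f := by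
  nlinarith [integral_abs_deriv_le hf, integral_abs_le_sinNorm hn hf, sinNorm_nonneg f]

end trigPoly

/-! ### Convolution with the Fejér–Korovkin kernel -/

theorem squareKernel_periodic (N : ℕ) (a : ℕ → ℝ) :
    Function.Periodic (squareKernel N a) (2 * π) := by
  intro t
  simp only [squareKernel, mul_add, cos_add_nat_mul_two_pi, sin_add_nat_mul_two_pi]

theorem exists_eval_cos_eq_convolution (N : ℕ) (a : ℕ → ℝ) {g : ℝ → ℝ} (hg : Continuous g)
    (hper : Function.Periodic g (2 * π)) (heven : ∀ θ, g (-θ) = g θ) :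
    ∃ q : ℝ[X], q.natDegree ≤ N - 1 ∧
      ∀ θ, ∫ h in -π..π, squareKernel N a h * g (θ + h) = q.eval (cos θ) := by
  have convolution_cos (k : ℤ) (θ : ℝ) : ∫ s in -π..π, cos (k * (s - θ)) * g s =
      (∫ s in -π..π, cos (k * s) * g s) * cos (k * θ) := by
    have odd_part : ∫ s in -π..π, sin (k * s) * g s = 0 :=
      integral_symm_eq_zero_of_odd (fun s => by simp [heven]) π
    have expand (s : ℝ) : cos (k * (s - θ)) * g s =
        cos (k * s) * g s * cos (k * θ) + sin (k * s) * g s * sin (k * θ) := by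
      rw [mul_sub, cos_sub]; ring
    simp_rw [expand]
    rw [intervalIntegral.integral_add (Continuous.intervalIntegrable (by fun_prop) _ _)
      (Continuous.intervalIntegrable (by fun_prop) _ _), intervalIntegral.integral_mul_const,
      intervalIntegral.integral_mul_const, odd_part, zero_mul, add_zero]
  refine ⟨∑ q ∈ Finset.range N ×ˢ Finset.range N,
    C (a q.1 * a q.2 * ∫ s in -π..π, cos ((q.1 - q.2 : ℤ) * s) * g s) *
      Chebyshev.T ℝ (q.1 - q.2), ?_, fun θ => ?_⟩
  · refine natDegree_sum_le_of_forall_le _ _ fun q hq => (natDegree_C_mul_le _ _).trans ?_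
    rw [Chebyshev.natDegree_T]
    simp only [Finset.mem_product, Finset.mem_range] at hq
    omega
  · have shift := integral_comp_add_of_periodic (g := fun s => squareKernel N a (s - θ) * g s)
      (((squareKernel_periodic N a).sub_const θ).mul hper) θ
    simp only [add_comm _ θ, add_sub_cancel_left] at shift
    rw [shift]
    simp_rw [squareKernel_eq_sum, ← Finset.sum_product', Finset.sum_mul]
    rw [intervalIntegral.integral_finsetSum fun q _ =>
      Continuous.intervalIntegrable (by fun_prop) _ _]
    simp only [mul_assoc (a _ * a _), intervalIntegral.integral_const_mul, convolution_cos,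
      eval_finsetSum, eval_mul, eval_C]
    simp only [← Chebyshev.T_real_cos, mul_assoc]

theorem sq_le_mul_one_sub_cos {t : ℝ} (ht : |t| ≤ π) : t ^ 2 ≤ π ^ 2 / 2 * (1 - cos t) := by
  have := cos_le_one_sub_mul_cos_sq ht
  field_simp at this
  linarith

/-- Discrete eigenvalue equation: the coefficients of the Fejér–Korovkin kernel are the principal
eigenvector of the path graph. -/
theorem sum_sin_mul_sin_succ (x : ℝ) (n : ℕ) :
    2 * cos x * ∑ k ∈ Finset.range (n + 1), sin ((k + 1) * x) ^ 2 =
      2 * (∑ k ∈ Finset.range n, sin ((k + 1) * x) * sin ((k + 2) * x)) +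
        sin ((n + 1) * x) * sin ((n + 2) * x) := by
  induction n with
  | zero => simp [sin_two_mul]; ring
  | succ n ih =>
    have recurrence : 2 * cos x * sin ((n + 2) * x) = sin ((n + 1) * x) + sin ((n + 3) * x) := by
      have := two_mul_sin_mul_cos ((n + 2) * x) x
      ring_nf at this ⊢
      linarith
    have arguments : (n : ℝ) + 1 + 1 = n + 2 ∧ (n : ℝ) + 1 + 2 = n + 3 := by constructor <;> ring
    rw [Finset.sum_range_succ _ (n + 1), mul_add, ih, Finset.sum_range_succ _ n, Nat.cast_succ,
      arguments.1, arguments.2]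
    linear_combination sin ((n + 2) * x) * recurrence

theorem squareKernel_const_mul (N : ℕ) (a : ℕ → ℝ) (c t : ℝ) :
    squareKernel N (fun l => c * a l) t = c ^ 2 * squareKernel N a t := by
  simp only [squareKernel, mul_assoc, ← Finset.mul_sum]
  ring

/-- The Fejér–Korovkin kernel, not normalised: among the kernels `squareKernel (n + 1) a` it has
the largest first cosine moment relative to its integral. -/
noncomputable def fejerKorovkin (n : ℕ) : ℝ → ℝ :=
  squareKernel (n + 1) fun l => sin ((l + 1) * (π / (n + 2)))

theorem integral_fejerKorovkin_mul_one_sub_cos (n : ℕ) :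
    ∫ t in -π..π, fejerKorovkin n t * (1 - cos t) =
      (1 - cos (π / (n + 2))) * ∫ t in -π..π, fejerKorovkin n t := by
  unfold fejerKorovkin
  set x := π / (n + 2)
  set a : ℕ → ℝ := fun l => sin ((l + 1) * x)
  have eigen := sum_sin_mul_sin_succ x n
  have boundary : sin ((n + 2) * x) = 0 := by
    rw [mul_div_cancel₀ π (by positivity), sin_pi]
  have first_moment : ∫ t in -π..π, squareKernel (n + 1) a t * cos t =
      cos x * ∫ t in -π..π, squareKernel (n + 1) a t := by
    have := integral_squareKernel_mul_cos (n + 1) a 1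
    simp only [Nat.cast_one, one_mul, Nat.add_sub_cancel] at this
    have neighbour (l : ℕ) : a (l + 1) = sin ((l + 2) * x) := by
      simp only [a, Nat.cast_add, Nat.cast_one, add_assoc, one_add_one_eq_two]
    simp only [this, integral_squareKernel, neighbour]
    rw [boundary, mul_zero, add_zero] at eigen
    linear_combination -π * eigen
  have hK := continuous_squareKernel (n + 1) a
  simp_rw [mul_sub, mul_one]
  rw [intervalIntegral.integral_sub (hK.intervalIntegrable _ _)
    (Continuous.intervalIntegrable (by fun_prop) _ _), first_moment]
  ring

theorem integral_fejerKorovkin_pos (n : ℕ) : 0 < ∫ t in -π..π, fejerKorovkin n t := by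
  unfold fejerKorovkin
  rw [integral_squareKernel]
  refine mul_pos (by positivity) (Finset.sum_pos (fun l hl => pow_pos ?_ 2) (by simp))
  have hln : (l : ℝ) < n + 1 := by exact_mod_cast Finset.mem_range.1 hl
  refine sin_pos_of_pos_of_lt_pi (by positivity) ?_
  rw [← mul_div_assoc, div_lt_iff₀ (by positivity), mul_comm]
  exact mul_lt_mul_of_pos_left (by linarith) pi_pos

theorem integral_fejerKorovkin_mul_sq_le (n : ℕ) :
    ∫ t in -π..π, fejerKorovkin n t * t ^ 2 ≤
      25 / (n + 2) ^ 2 * ∫ t in -π..π, fejerKorovkin n t := by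
  have hK : Continuous (fejerKorovkin n) := continuous_squareKernel _ _
  have hK₀ (t : ℝ) : 0 ≤ fejerKorovkin n t := squareKernel_nonneg _ _ t
  set I := ∫ t in -π..π, fejerKorovkin n t
  have I_pos : 0 < I := integral_fejerKorovkin_pos n
  calc ∫ t in -π..π, fejerKorovkin n t * t ^ 2
      ≤ ∫ t in -π..π, π ^ 2 / 2 * (fejerKorovkin n t * (1 - cos t)) := by
        refine intervalIntegral.integral_mono_on (by linarith [pi_pos])
          (Continuous.intervalIntegrable (by fun_prop) _ _)
          (Continuous.intervalIntegrable (by fun_prop) _ _) fun t ht => ?_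
        rw [mul_left_comm]
        gcongr
        exacts [hK₀ t, sq_le_mul_one_sub_cos (abs_le.2 ht)]
    _ = π ^ 2 / 2 * ((1 - cos (π / (n + 2))) * I) := by
        rw [intervalIntegral.integral_const_mul, integral_fejerKorovkin_mul_one_sub_cos]
    _ ≤ π ^ 2 / 2 * ((π / (n + 2)) ^ 2 / 2 * I) := by
        gcongr
        linarith [one_sub_sq_div_two_le_cos (x := π / (n + 2))]
    _ = π ^ 4 / 4 / (n + 2) ^ 2 * I := by field_simp; norm_num
    _ ≤ 25 / (n + 2) ^ 2 * I := by
        have : π ^ 4 ≤ 3.15 ^ 4 := by gcongr; exact pi_lt_d2.le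
        gcongr
        linarith

theorem exists_squareKernel_integral_mul_sq_le (n : ℕ) :
    ∃ a : ℕ → ℝ, ∫ t in -π..π, squareKernel (n + 1) a t = 1 ∧
      ∫ t in -π..π, squareKernel (n + 1) a t * t ^ 2 ≤ 25 / (n + 2) ^ 2 := by
  set I := ∫ t in -π..π, fejerKorovkin n t
  have I_pos : 0 < I := integral_fejerKorovkin_pos n
  have normalised (t : ℝ) :
      squareKernel (n + 1) (fun l => √I⁻¹ * sin ((l + 1) * (π / (n + 2)))) t =
        I⁻¹ * fejerKorovkin n t := by
    rw [squareKernel_const_mul, sq_sqrt (inv_nonneg.2 I_pos.le), fejerKorovkin]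
  refine ⟨fun l => √I⁻¹ * sin ((l + 1) * (π / (n + 2))), ?_, ?_⟩
  · simp_rw [normalised]
    rw [intervalIntegral.integral_const_mul, inv_mul_cancel₀ I_pos.ne']
  · simp_rw [normalised, mul_assoc]
    rw [intervalIntegral.integral_const_mul, inv_mul_le_iff₀ I_pos, mul_comm I]
    exact integral_fejerKorovkin_mul_sq_le n

/-! ### Truncation and the Modica–Mortola trick -/

/-- The truncation of `s` to the interval `[-σ, σ]`. -/
noncomputable def clip (σ s : ℝ) : ℝ := max (-σ) (min σ s)

section clip

variable {σ : ℝ}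

theorem lipschitzWith_clip : LipschitzWith 1 (clip σ) :=
  (LipschitzWith.id.const_min σ).const_max (-σ)

theorem lipschitzWith_sub_abs_clip : LipschitzWith 1 fun s => σ - |clip σ s| := by
  simpa using (LipschitzWith.const σ).sub
    (lipschitzWith_one_norm.comp (lipschitzWith_clip (σ := σ)))

@[fun_prop]
theorem continuous_clip : Continuous (clip σ) := lipschitzWith_clip.continuous

theorem monotone_clip : Monotone (clip σ) := fun _ _ h => max_le_max_left _ (min_le_min_left _ h)

theorem abs_clip_le (hσ : 0 ≤ σ) (s : ℝ) : |clip σ s| ≤ σ :=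
  abs_le.2 ⟨le_max_left _ _, max_le (by linarith) (min_le_left _ _)⟩

theorem clip_of_abs_le {s : ℝ} (hs : |s| ≤ σ) : clip σ s = s := by
  rw [clip, min_eq_right (le_of_abs_le hs), max_eq_right (neg_le_of_abs_le hs)]

theorem le_clip_of_clip_lt {s : ℝ} (h : clip σ s < σ) : s ≤ clip σ s := by
  unfold clip at *; grind

theorem clip_le_of_neg_lt_clip {s : ℝ} (h : -σ < clip σ s) : clip σ s ≤ s := by
  unfold clip at *; grind

theorem sq_sub_le_integral_sub_abs {a b : ℝ} (ha : |a| ≤ σ) (hb : |b| ≤ σ) (hab : a < b) :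
    (b - a) ^ 2 ≤ 6 * ∫ s in a..b, (σ - |s|) := by
  have tent (s : ℝ) (hs : s ∈ Set.Icc a b) : (s - a) * (b - s) ≤ (b - a) * (σ - |s|) := by
    have := abs_le.1 ha
    have := abs_le.1 hb
    rcases abs_cases s with ⟨h, -⟩ | ⟨h, -⟩ <;> rw [h] <;> nlinarith [hs.1, hs.2]
  have parabola : ∫ s in a..b, (s - a) * (b - s) = (b - a) ^ 3 / 6 := by
    have expand (s : ℝ) : (s - a) * (b - s) = (a + b) * s - s ^ 2 - a * b := by ring
    simp_rw [expand]
    rw [intervalIntegral.integral_sub (Continuous.intervalIntegrable (by fun_prop) _ _)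
      (Continuous.intervalIntegrable (by fun_prop) _ _), intervalIntegral.integral_sub
      (Continuous.intervalIntegrable (by fun_prop) _ _)
      (Continuous.intervalIntegrable (by fun_prop) _ _)]
    rw [intervalIntegral.integral_const_mul, integral_id, integral_pow,
      intervalIntegral.integral_const, smul_eq_mul]
    ring
  have := intervalIntegral.integral_mono_on (μ := MeasureTheory.volume) hab.le
    (Continuous.intervalIntegrable (by fun_prop) _ _)
    (Continuous.intervalIntegrable (by fun_prop) _ _) tent
  rw [parabola, intervalIntegral.integral_const_mul] at this
  refine le_of_mul_le_mul_left ?_ (sub_pos.2 hab)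
  linarith

theorem sq_clip_sub_clip_le_integral (hσ : 0 ≤ σ) {v u : ℝ} (hvu : v ≤ u) :
    (clip σ u - clip σ v) ^ 2 ≤ 6 * ∫ s in v..u, (σ - |clip σ s|) := by
  have hnonneg (s : ℝ) : 0 ≤ σ - |clip σ s| := sub_nonneg.2 (abs_clip_le hσ s)
  rcases (monotone_clip hvu).eq_or_lt with heq | hlt
  · rw [heq, sub_self, zero_pow two_ne_zero]
    exact mul_nonneg (by norm_num) (intervalIntegral.integral_nonneg hvu fun s _ => hnonneg s)
  · have hv := abs_clip_le hσ v
    have hu := abs_clip_le hσ u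
    have hv' : v ≤ clip σ v := le_clip_of_clip_lt (hlt.trans_le (le_of_abs_le hu))
    have hu' : clip σ u ≤ u := clip_le_of_neg_lt_clip ((neg_le_of_abs_le hv).trans_lt hlt)
    have clip_eq (s : ℝ) (hs : s ∈ Set.uIcc (clip σ v) (clip σ u)) : σ - |s| = σ - |clip σ s| := by
      rw [Set.uIcc_of_le hlt.le] at hs
      rw [clip_of_abs_le (abs_le.2 ⟨(neg_le_of_abs_le hv).trans hs.1,
        hs.2.trans (le_of_abs_le hu)⟩)]
    calc (clip σ u - clip σ v) ^ 2 ≤ 6 * ∫ s in (clip σ v)..(clip σ u), (σ - |s|) :=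
          sq_sub_le_integral_sub_abs hv hu hlt
      _ = 6 * ∫ s in (clip σ v)..(clip σ u), (σ - |clip σ s|) := by
          rw [intervalIntegral.integral_congr clip_eq]
      _ ≤ 6 * ∫ s in v..u, (σ - |clip σ s|) := by
          gcongr
          exact intervalIntegral.integral_mono_interval hv' hlt.le hu' (.of_forall hnonneg)
            (Continuous.intervalIntegrable (by fun_prop) _ _)

/-- The Modica–Mortola trick: a transition of `clip σ ∘ f` between the wells `±σ` is paid for by
the potential `σ - |clip σ ∘ f|`. -/
theorem sq_clip_comp_sub_le (hσ : 0 ≤ σ) {f f' : ℝ → ℝ} (hf : ∀ θ, HasDerivAt f (f' θ) θ)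
    (hf' : Continuous f') {a b L : ℝ} (hab : a ≤ b) (hL : ∀ θ ∈ Set.Icc a b, |f' θ| ≤ L) :
    (clip σ (f b) - clip σ (f a)) ^ 2 ≤ 6 * L * ∫ θ in a..b, (σ - |clip σ (f θ)|) := by
  have hfc : Continuous f := continuous_iff_continuousAt.2 fun θ => (hf θ).continuousAt
  have hnonneg (s : ℝ) : 0 ≤ σ - |clip σ s| := sub_nonneg.2 (abs_clip_le hσ s)
  have potential : (clip σ (f b) - clip σ (f a)) ^ 2 ≤
      6 * |∫ s in (f a)..(f b), (σ - |clip σ s|)| := by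
    rcases le_total (f a) (f b) with h | h
    · exact (sq_clip_sub_clip_le_integral hσ h).trans (by gcongr; exact le_abs_self _)
    · rw [intervalIntegral.integral_symm, abs_neg, ← neg_sub, neg_sq]
      exact (sq_clip_sub_clip_le_integral hσ h).trans (by gcongr; exact le_abs_self _)
  have change_var : ∫ θ in a..b, (σ - |clip σ (f θ)|) * f' θ =
      ∫ s in (f a)..(f b), (σ - |clip σ s|) :=
    intervalIntegral.integral_comp_mul_deriv (g := fun s => σ - |clip σ s|)
      (fun θ _ => hf θ) hf'.continuousOn (by fun_prop)
  calc (clip σ (f b) - clip σ (f a)) ^ 2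
      ≤ 6 * |∫ θ in a..b, (σ - |clip σ (f θ)|) * f' θ| := change_var ▸ potential
    _ ≤ 6 * ∫ θ in a..b, |(σ - |clip σ (f θ)|) * f' θ| := by
        gcongr
        exact intervalIntegral.abs_integral_le_integral_abs hab
    _ ≤ 6 * ∫ θ in a..b, L * (σ - |clip σ (f θ)|) := by
        gcongr
        refine intervalIntegral.integral_mono_on hab
          (Continuous.intervalIntegrable (by fun_prop) _ _)
          (Continuous.intervalIntegrable (by fun_prop) _ _) fun θ hθ => ?_
        rw [abs_mul, abs_of_nonneg (hnonneg _), mul_comm]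
        exact mul_le_mul_of_nonneg_right (hL θ hθ) (hnonneg _)
    _ = 6 * L * ∫ θ in a..b, (σ - |clip σ (f θ)|) := by
        rw [intervalIntegral.integral_const_mul, mul_assoc]

theorem abs_clip_comp_sub_le (hσ : 0 ≤ σ) {f f' : ℝ → ℝ} (hf : ∀ θ, HasDerivAt f (f' θ) θ)
    (hf' : Continuous f') {a b L : ℝ} (hab : a ≤ b) (hL : ∀ θ ∈ Set.Icc a b, |f' θ| ≤ L)
    {c : ℝ} (hc : 0 < c) :
    |clip σ (f b) - clip σ (f a)| ≤ c * (∫ θ in a..b, (σ - |clip σ (f θ)|)) + 2 / c * L := by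
  set G := ∫ θ in a..b, (σ - |clip σ (f θ)|)
  have hG : 0 ≤ G := intervalIntegral.integral_nonneg hab fun θ _ =>
    sub_nonneg.2 (abs_clip_le hσ _)
  have hL₀ : 0 ≤ L := (abs_nonneg _).trans (hL a ⟨le_rfl, hab⟩)
  refine abs_le_of_sq_le_sq ?_ (by positivity)
  have am_gm : 8 * (L * G) ≤ (c * G + 2 / c * L) ^ 2 := by
    have : (c * G + 2 / c * L) ^ 2 - 8 * (L * G) = (c * G - 2 / c * L) ^ 2 := by field_simp; ring
    linarith [sq_nonneg (c * G - 2 / c * L)]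
  have := sq_clip_comp_sub_le hσ hf hf' hab hL
  nlinarith [mul_nonneg hL₀ hG]

end clip

theorem integral_integral_comp_add {g : ℝ → ℝ} (hg : Continuous g)
    (hper : Function.Periodic g (2 * π)) (h : ℝ) :
    ∫ θ in -π..π, ∫ u in 0..h, g (θ + u) = h * ∫ θ in -π..π, g θ := by
  rw [integral_interval_swap (by fun_prop : Continuous (Function.uncurry fun θ u => g (θ + u)))]
  simp only [integral_comp_add_of_periodic hper, intervalIntegral.integral_const, sub_zero,
    smul_eq_mul]

theorem abs_sin_le_abs_sin_add (θ : ℝ) {u h : ℝ} (hu : u ∈ Set.Icc 0 h) :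
    |sin θ| ≤ |sin (θ + u)| + h := by
  have lipschitz : |sin θ - sin (θ + u)| ≤ u := by
    have := abs_sin_sub_sin_le θ (θ + u)
    rwa [sub_add_cancel_left, abs_neg, abs_of_nonneg hu.1] at this
  linarith [abs_sub_abs_le_abs_sub (sin θ) (sin (θ + u)), hu.2]

section modulus

variable {n : ℕ} {f : ℝ → ℝ} {σ : ℝ}

theorem abs_clip_comp_add_sub_mul_abs_sin_le (hσ : 0 ≤ σ) (hf : f ∈ trigPoly n) {c h : ℝ}
    (hc : 0 < c) (hh : 0 ≤ h) (θ : ℝ) :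
    |clip σ (f (θ + h)) - clip σ (f θ)| * |sin θ| ≤
      c * (∫ u in 0..h, (σ - |clip σ (f (θ + u))|)) +
        2 / c * (|deriv f θ| * |sin θ| +
          ∫ u in 0..h, |deriv (deriv f) (θ + u)| * (|sin (θ + u)| + h)) := by
  have hf' := deriv_mem_trigPoly hf
  have hfc' := continuous_of_mem_trigPoly hf'
  have hfc'' := continuous_of_mem_trigPoly (deriv_mem_trigPoly hf')
  have hint (g : ℝ → ℝ) : ∫ t in θ..(θ + h), g t = ∫ u in 0..h, g (θ + u) := by
    rw [intervalIntegral.integral_comp_add_left, add_zero]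
  have slope (t : ℝ) (ht : t ∈ Set.Icc θ (θ + h)) :
      |deriv f t| ≤ |deriv f θ| + ∫ u in 0..h, |deriv (deriv f) (θ + u)| := by
    have := abs_sub_le_integral_abs_deriv (hasDerivAt_of_mem_trigPoly hf') hfc''
      (Set.left_mem_Icc.2 (by linarith)) ht
    rw [hint fun t => |deriv (deriv f) t|] at this
    linarith [abs_sub_abs_le_abs_sub (deriv f t) (deriv f θ)]
  have unweighted := abs_clip_comp_sub_le hσ (hasDerivAt_of_mem_trigPoly hf) hfc'
    (by linarith) slope hc
  rw [hint fun t => σ - |clip σ (f t)|] at unweighted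
  have potential_nonneg : 0 ≤ ∫ u in 0..h, (σ - |clip σ (f (θ + u))|) :=
    intervalIntegral.integral_nonneg hh fun u _ => sub_nonneg.2 (abs_clip_le hσ _)
  have move_weight : (∫ u in 0..h, |deriv (deriv f) (θ + u)|) * |sin θ| ≤
      ∫ u in 0..h, |deriv (deriv f) (θ + u)| * (|sin (θ + u)| + h) := by
    rw [← intervalIntegral.integral_mul_const]
    refine intervalIntegral.integral_mono_on hh (Continuous.intervalIntegrable (by fun_prop) _ _)
      (Continuous.intervalIntegrable (by fun_prop) _ _) fun u hu => ?_
    gcongr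
    exact abs_sin_le_abs_sin_add θ hu
  calc _ ≤ _ := mul_le_mul_of_nonneg_right unweighted (abs_nonneg (sin θ))
    _ = c * (∫ u in 0..h, (σ - |clip σ (f (θ + u))|)) * |sin θ| +
        2 / c * (|deriv f θ| * |sin θ| +
          (∫ u in 0..h, |deriv (deriv f) (θ + u)|) * |sin θ|) := by ring
    _ ≤ _ := by
      refine add_le_add (mul_le_of_le_one_right (by positivity) (abs_sin_le_one θ)) ?_
      gcongr

theorem integral_abs_clip_comp_add_sub_le (hσ : 0 ≤ σ) (hf : f ∈ trigPoly n) {c h : ℝ}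
    (hc : 0 < c) (hh : 0 ≤ h) :
    ∫ θ in -π..π, |clip σ (f (θ + h)) - clip σ (f θ)| * |sin θ| ≤
      c * h * (∫ θ in -π..π, (σ - |clip σ (f θ)|)) +
        2 / c * (sinNorm (deriv f) + h * sinNorm (deriv (deriv f)) +
          h ^ 2 * ∫ θ in -π..π, |deriv (deriv f) θ|) := by
  have hf' := deriv_mem_trigPoly hf
  have hf'' := deriv_mem_trigPoly hf'
  have hfc := continuous_of_mem_trigPoly hf
  have hfc' := continuous_of_mem_trigPoly hf'
  have hfc'' := continuous_of_mem_trigPoly hf''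
  have hint {g : ℝ → ℝ} (hg : Continuous g) :
      IntervalIntegrable g MeasureTheory.volume (-π) π := hg.intervalIntegrable _ _
  have abs_sin_periodic : Function.Periodic (fun θ => |sin θ|) (2 * π) := fun θ => by simp
  have average_potential := integral_integral_comp_add (g := fun θ => σ - |clip σ (f θ)|)
    (by fun_prop) ((periodic_of_mem_trigPoly hf).comp fun s => σ - |clip σ s|) h
  have average_curvature := integral_integral_comp_add
    (g := fun θ => |deriv (deriv f) θ| * (|sin θ| + h)) (by fun_prop)
    (((periodic_of_mem_trigPoly hf'').comp fun s => |s|).mul (abs_sin_periodic.comp (· + h))) h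
  have split_curvature : ∫ θ in -π..π, |deriv (deriv f) θ| * (|sin θ| + h) =
      sinNorm (deriv (deriv f)) + h * ∫ θ in -π..π, |deriv (deriv f) θ| := by
    simp_rw [mul_add]
    rw [intervalIntegral.integral_add (hint (by fun_prop)) (hint (by fun_prop)),
      intervalIntegral.integral_mul_const, sinNorm, mul_comm h]
  refine (intervalIntegral.integral_mono (by linarith [pi_pos]) (hint (by fun_prop))
    (hint (by fun_prop)) (abs_clip_comp_add_sub_mul_abs_sin_le hσ hf hc hh)).trans_eq ?_
  rw [intervalIntegral.integral_add (hint (by fun_prop)) (hint (by fun_prop)),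
    intervalIntegral.integral_const_mul, intervalIntegral.integral_const_mul,
    intervalIntegral.integral_add (hint (by fun_prop)) (hint (by fun_prop)),
    average_potential, average_curvature, split_curvature]
  simp only [sinNorm]
  ring

theorem integral_abs_clip_comp_add_sub_le_abs (hn : n ≠ 0) (hσ : 0 ≤ σ) (hf : f ∈ trigPoly n)
    (heven : ∀ θ, f (-θ) = f θ) {c : ℝ} (hc : 0 < c) (h : ℝ) :
    ∫ θ in -π..π, |clip σ (f (θ + h)) - clip σ (f θ)| * |sin θ| ≤
      c * |h| * (∫ θ in -π..π, (σ - |clip σ (f θ)|)) +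
        200 * n / c * sinNorm f * (1 + 100 * (n * |h|) + 200 * (n * |h|) ^ 2) := by
  wlog hh : 0 ≤ h generalizing h
  · have reflect := intervalIntegral.integral_comp_neg (a := -π) (b := π)
      fun θ => |clip σ (f (θ + h)) - clip σ (f θ)| * |sin θ|
    have heven_add (θ : ℝ) : f (-θ + h) = f (θ + -h) := by
      rw [← heven (θ + -h), neg_add, neg_neg]
    simp only [heven, heven_add, sin_neg, abs_neg, neg_neg] at reflect
    rw [← reflect, ← abs_neg h]
    exact this (-h) (by linarith)
  have hf' := deriv_mem_trigPoly hf
  have first := sinNorm_deriv_le hn hf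
  have second := sinNorm_deriv_le hn hf'
  have curvature := integral_abs_deriv_le_sinNorm hn hf'
  rw [abs_of_nonneg hh]
  refine (integral_abs_clip_comp_add_sub_le hσ hf hc hh).trans ?_
  rw [add_le_add_iff_left]
  calc _ ≤ 2 / c * (sinNorm (deriv f) + h * (100 * n * sinNorm (deriv f)) +
        h ^ 2 * (200 * n ^ 2 * sinNorm (deriv f))) := by gcongr
    _ = 2 / c * (1 + 100 * (n * h) + 200 * (n * h) ^ 2) * sinNorm (deriv f) := by ring
    _ ≤ 2 / c * (1 + 100 * (n * h) + 200 * (n * h) ^ 2) * (100 * n * sinNorm f) := by gcongr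
    _ = _ := by ring

end modulus

/-! ### Approximating truncated polynomials -/

theorem sinNorm_sub_convolution_le {K g : ℝ → ℝ} (hK : Continuous K) (hK₀ : ∀ h, 0 ≤ K h)
    (mass : ∫ h in -π..π, K h = 1) (hg : Continuous g) :
    sinNorm (fun θ => g θ - ∫ h in -π..π, K h * g (θ + h)) ≤
      ∫ h in -π..π, K h * ∫ θ in -π..π, |g (θ + h) - g θ| * |sin θ| := by
  have hπ : -π ≤ π := by linarith [pi_pos]
  have difference (θ : ℝ) : g θ - ∫ h in -π..π, K h * g (θ + h) =
      ∫ h in -π..π, K h * (g θ - g (θ + h)) := by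
    simp_rw [mul_sub]
    rw [intervalIntegral.integral_sub (Continuous.intervalIntegrable (by fun_prop) _ _)
      (Continuous.intervalIntegrable (by fun_prop) _ _), intervalIntegral.integral_mul_const,
      mass, one_mul]
  have pointwise (θ : ℝ) : |g θ - ∫ h in -π..π, K h * g (θ + h)| * |sin θ| ≤
      ∫ h in -π..π, K h * (|g (θ + h) - g θ| * |sin θ|) := by
    rw [difference]
    refine (mul_le_mul_of_nonneg_right (intervalIntegral.abs_integral_le_integral_abs hπ)
      (abs_nonneg _)).trans_eq ?_
    rw [← intervalIntegral.integral_mul_const]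
    simp only [abs_mul, abs_of_nonneg (hK₀ _), abs_sub_comm (g θ), mul_assoc]
  have average_cont : Continuous fun θ => ∫ h in -π..π, K h * (|g (θ + h) - g θ| * |sin θ|) :=
    intervalIntegral.continuous_parametric_intervalIntegral_of_continuous' (by fun_prop) _ _
  calc sinNorm (fun θ => g θ - ∫ h in -π..π, K h * g (θ + h))
      ≤ ∫ θ in -π..π, ∫ h in -π..π, K h * (|g (θ + h) - g θ| * |sin θ|) :=
        intervalIntegral.integral_mono hπ (Continuous.intervalIntegrable (by fun_prop) _ _)
          (average_cont.intervalIntegrable _ _) pointwise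
    _ = ∫ h in -π..π, ∫ θ in -π..π, K h * (|g (θ + h) - g θ| * |sin θ|) :=
        integral_interval_swap
          (F := fun θ h => K h * (|g (θ + h) - g θ| * |sin θ|)) (by fun_prop) _ _ _ _
    _ = ∫ h in -π..π, K h * ∫ θ in -π..π, |g (θ + h) - g θ| * |sin θ| := by
        simp only [intervalIntegral.integral_const_mul]

theorem exists_sinNorm_sub_eval_cos_le (n : ℕ) {g : ℝ → ℝ} (hg : Continuous g)
    (hper : Function.Periodic g (2 * π)) (heven : ∀ θ, g (-θ) = g θ) {A : ℝ} (hA : 0 ≤ A)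
    (hmodulus : ∀ h, ∫ θ in -π..π, |g (θ + h) - g θ| * |sin θ| ≤ A * (1 + (n * h) ^ 2)) :
    ∃ q : ℝ[X], q.natDegree ≤ n ∧ sinNorm (fun θ => g θ - q.eval (cos θ)) ≤ 26 * A := by
  obtain ⟨a, mass, moment⟩ := exists_squareKernel_integral_mul_sq_le n
  obtain ⟨q, hq, q_eq⟩ := exists_eval_cos_eq_convolution (n + 1) a hg hper heven
  refine ⟨q, hq, ?_⟩
  simp only [← q_eq]
  have kernel_nonneg (h : ℝ) := squareKernel_nonneg (n + 1) a h
  have kernel_cont := continuous_squareKernel (n + 1) a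
  generalize squareKernel (n + 1) a = K at *
  have average (h : ℝ) : K h * ∫ θ in -π..π, |g (θ + h) - g θ| * |sin θ| ≤
      A * (K h + n ^ 2 * (K h * h ^ 2)) :=
    (mul_le_mul_of_nonneg_left (hmodulus h) (kernel_nonneg h)).trans_eq (by ring)
  have second_moment : n ^ 2 * ∫ h in -π..π, K h * h ^ 2 ≤ 25 := by
    refine (mul_le_mul_of_nonneg_left moment (by positivity)).trans ?_
    rw [mul_div_assoc', div_le_iff₀ (by positivity)]
    nlinarith [n.cast_nonneg (α := ℝ)]
  calc _ ≤ ∫ h in -π..π, K h * ∫ θ in -π..π, |g (θ + h) - g θ| * |sin θ| :=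
        sinNorm_sub_convolution_le kernel_cont kernel_nonneg mass hg
    _ ≤ ∫ h in -π..π, A * (K h + n ^ 2 * (K h * h ^ 2)) :=
        intervalIntegral.integral_mono (by linarith [pi_pos])
          (Continuous.intervalIntegrable (by fun_prop) _ _)
          (Continuous.intervalIntegrable (by fun_prop) _ _) average
    _ = A * (1 + n ^ 2 * ∫ h in -π..π, K h * h ^ 2) := by
        rw [intervalIntegral.integral_const_mul, intervalIntegral.integral_add
          (Continuous.intervalIntegrable (by fun_prop) _ _)
          (Continuous.intervalIntegrable (by fun_prop) _ _), intervalIntegral.integral_const_mul,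
          mass]
    _ ≤ 26 * A := by nlinarith

theorem integral_sub_abs_clip_comp_cos_le {σ κ : ℝ} (hσ : 0 ≤ σ) {u : ℝ → ℝ} (hu : Continuous u)
    {δ : ℝ} (hδ : 0 < δ) (hδ₁ : δ ≤ 1)
    (hpotential : ∫ t in (-1)..1, (σ - |clip σ (u t)|) ≤ κ) :
    ∫ θ in -π..π, (σ - |clip σ (u (cos θ))|) ≤ 4 * δ * σ + 4 / δ * κ := by
  have abs_eq (s : ℝ) : |σ - (|clip σ s|)| = σ - |clip σ s| :=
    abs_of_nonneg (sub_nonneg.2 (abs_clip_le hσ s))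
  have := integral_abs_le_of_le (f := fun θ => σ - |clip σ (u (cos θ))|) (by fun_prop)
    (fun θ _ => (abs_eq _).trans_le (sub_le_self σ (abs_nonneg _))) hδ hδ₁
  simp only [sinNorm, abs_eq] at this
  rw [integral_comp_cos (u := fun t => σ - |clip σ (u t)|) (by fun_prop)] at this
  refine this.trans ?_
  rw [add_le_add_iff_left, ← mul_assoc, show 2 / δ * 2 = 4 / δ by ring]
  gcongr

/-- A polynomial of bounded `L¹` norm whose truncation at `±σ` is nearly a sign pattern has few
sign changes, so a polynomial of the same degree beats `0` in approximating that truncation. -/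
theorem exists_integral_abs_clip_sub_le {d : ℕ} (hd : d ≠ 0) {σ : ℝ} (hσ : 0 ≤ σ) {r : ℝ[X]}
    (hr : r.natDegree ≤ d) (hnorm : ∫ t in (-1)..1, |r.eval t| ≤ 5 * σ)
    (hpotential : ∫ t in (-1)..1, (σ - |clip σ (r.eval t)|) ≤ σ / 10 ^ 19) :
    ∃ q : ℝ[X], q.natDegree ≤ d ∧ ∫ t in (-1)..1, |clip σ (r.eval t) - q.eval t| ≤ σ := by
  have hf := eval_cos_mem_trigPoly hr
  have norm_le : sinNorm (fun θ => r.eval (cos θ)) ≤ 10 * σ := by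
    rw [sinNorm, integral_comp_cos (u := fun t => |r.eval t|) (by fun_prop)]
    linarith
  have potential_le := integral_sub_abs_clip_comp_cos_le hσ (u := fun t => r.eval t) (by fun_prop)
    (δ := 5 / 10 ^ 10) (by norm_num) (by norm_num) hpotential
  set G := ∫ θ in -π..π, (σ - |clip σ (r.eval (cos θ))|)
  have modulus (h : ℝ) : ∫ θ in -π..π, |clip σ (r.eval (cos (θ + h))) - clip σ (r.eval (cos θ))| *
      |sin θ| ≤ σ / 13 * (1 + (d * h) ^ 2) := by
    refine (integral_abs_clip_comp_add_sub_le_abs hd hσ hf (by simp)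
      (c := 2 * 10 ^ 7 * d) (by positivity) h).trans ?_
    have ratio : 200 * d / (2 * 10 ^ 7 * d) = (1 / 10 ^ 5 : ℝ) := by field_simp; norm_num
    rw [ratio, mul_assoc (2 * 10 ^ 7),
      show (d * h) ^ 2 = (d * |h|) ^ 2 by simp only [mul_pow, sq_abs]]
    have k_nonneg : 0 ≤ d * |h| := by positivity
    generalize d * |h| = k at *
    calc _ ≤ 2 * 10 ^ 7 * k * (28 / 10 ^ 10 * σ) +
          1 / 10 ^ 5 * (10 * σ) * (1 + 100 * k + 200 * k ^ 2) := by
          gcongr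
          linarith
      _ = σ * (1 / 10 ^ 4 + 66 / 10 ^ 3 * k + 2 / 10 ^ 2 * k ^ 2) := by ring
      _ ≤ σ * ((1 + k ^ 2) / 13) := by gcongr; nlinarith [sq_nonneg (k - 1)]
      _ = _ := by ring
  obtain ⟨q, hq, hle⟩ := exists_sinNorm_sub_eval_cos_le d
    (g := fun θ => clip σ (r.eval (cos θ))) (by fun_prop)
    ((periodic_of_mem_trigPoly hf).comp (clip σ)) (by simp) (by positivity) modulus
  refine ⟨q, hq, ?_⟩
  rw [sinNorm, integral_comp_cos (u := fun t => |clip σ (r.eval t) - q.eval t|)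
    (by fun_prop)] at hle
  linarith

/-! ### Quadrature on the Chebyshev partition -/

theorem sum_integral_Icc_one (m : ℕ) (a : ℝ → ℝ) {u : ℝ → ℝ} (hu : Continuous u) :
    ∑ j ∈ Finset.Icc 1 m, ∫ t in (a (j - 1))..(a j), u t = ∫ t in (a 0)..(a m), u t := by
  have telescope := intervalIntegral.sum_integral_adjacent_intervals (f := u) (n := m)
    (a := fun j : ℕ => a j) (μ := MeasureTheory.volume) fun k _ => hu.intervalIntegrable _ _
  rw [Nat.cast_zero] at telescope
  rw [← telescope, ← Finset.Ico_succ_right_eq_Icc, Finset.sum_Ico_eq_sum_range]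
  refine Finset.sum_congr (by simp) fun k _ => ?_
  push_cast
  rw [add_sub_cancel_left, add_comm]

section chebInterval

variable {m j : ℕ}

theorem chebAngle_le_chebAngle (m j : ℕ) : π * ((j : ℝ) - 1) / m ≤ π * j / m := by
  gcongr
  linarith

theorem chebAngle_nonneg (hj : j ∈ Finset.Icc 1 m) : 0 ≤ π * ((j : ℝ) - 1) / m := by
  have : (1 : ℝ) ≤ j := by exact_mod_cast (Finset.mem_Icc.1 hj).1
  have : 0 ≤ (j : ℝ) - 1 := by linarith
  positivity

theorem chebAngle_le_pi (hj : j ∈ Finset.Icc 1 m) : π * j / m ≤ π := by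
  have : (j : ℝ) ≤ m := by exact_mod_cast (Finset.mem_Icc.1 hj).2
  exact div_le_of_le_mul₀ m.cast_nonneg pi_pos.le (by gcongr)

theorem chebInterval_endpoint_le (hj : j ∈ Finset.Icc 1 m) :
    cos (π * j / m) ≤ cos (π * ((j : ℝ) - 1) / m) :=
  cos_le_cos_of_nonneg_of_le_pi (chebAngle_nonneg hj) (chebAngle_le_pi hj)
    (chebAngle_le_chebAngle m j)

theorem chebLen_nonneg (hj : j ∈ Finset.Icc 1 m) : 0 ≤ chebLen m j :=
  sub_nonneg.2 (chebInterval_endpoint_le hj)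

theorem volume_real_chebInterval (hj : j ∈ Finset.Icc 1 m) :
    MeasureTheory.volume.real (chebInterval m j) = chebLen m j :=
  volume_real_Icc_of_le (chebInterval_endpoint_le hj)

theorem chebInterval_subset_image_cos (m j : ℕ) :
    chebInterval m j ⊆ cos '' Set.Icc (π * ((j : ℝ) - 1) / m) (π * j / m) :=
  intermediate_value_Icc' (chebAngle_le_chebAngle m j) continuous_cos.continuousOn

theorem chebLen_le {θ : ℝ}
    (hθ : θ ∈ Set.Icc (π * ((j : ℝ) - 1) / m) (π * j / m)) :
    chebLen m j ≤ π / m * (|sin θ| + π / m) := by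
  set A := π * ((j : ℝ) - 1) / m
  set B := π * j / m
  have width : π / m = B - A := by ring
  have hAB : A ≤ B := chebAngle_le_chebAngle m j
  have sin_near : |sin ((A + B) / 2)| ≤ |sin θ| + (B - A) := by
    have lipschitz := abs_sin_sub_sin_le ((A + B) / 2) θ
    have close : |(A + B) / 2 - θ| ≤ B - A := abs_le.2 ⟨by linarith [hθ.2], by linarith [hθ.1]⟩
    linarith [abs_sub_abs_le_abs_sub (sin ((A + B) / 2)) (sin θ)]
  have sin_half : |sin ((B - A) / 2)| ≤ (B - A) / 2 :=
    abs_sin_le_abs.trans_eq (abs_of_nonneg (by linarith))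
  have cos_sub : cos A - cos B = 2 * sin ((A + B) / 2) * sin ((B - A) / 2) := by
    rw [cos_sub_cos, ← neg_sub B A, neg_div, sin_neg]
    ring
  calc cos A - cos B ≤ |cos A - cos B| := le_abs_self _
    _ = 2 * |sin ((A + B) / 2)| * |sin ((B - A) / 2)| := by rw [cos_sub, abs_mul, abs_mul, abs_two]
    _ ≤ 2 * (|sin θ| + (B - A)) * ((B - A) / 2) := by gcongr
    _ = π / m * (|sin θ| + π / m) := by rw [width]; ring

theorem sum_setIntegral_chebInterval (hm : m ≠ 0) {u : ℝ → ℝ} (hu : Continuous u) :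
    ∑ j ∈ Finset.Icc 1 m, ∫ t in chebInterval m j, u t = ∫ t in (-1)..1, u t := by
  have sum_reversed := sum_integral_Icc_one m (fun s => cos (π * s / m)) hu
  simp only [mul_zero, zero_div, cos_zero, mul_div_cancel_right₀ π (Nat.cast_ne_zero.2 hm),
    cos_pi] at sum_reversed
  rw [intervalIntegral.integral_symm, ← sum_reversed, ← Finset.sum_neg_distrib]
  refine Finset.sum_congr rfl fun j hj => ?_
  rw [← intervalIntegral.integral_symm, chebInterval, MeasureTheory.integral_Icc_eq_integral_Ioc,
    intervalIntegral.integral_of_le (chebInterval_endpoint_le hj)]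

end chebInterval

/-- The oscillation of `u` over the size-`m` Chebyshev partition, averaged with the weights
`|I_j|`: the error made by sampling `u` once in every interval. -/
noncomputable def chebOsc (m : ℕ) (u : ℝ → ℝ) : ℝ :=
  ∑ j ∈ Finset.Icc 1 m, chebLen m j * Metric.diam (u '' chebInterval m j)

section chebOsc

variable {m j : ℕ} {u v : ℝ → ℝ}

theorem abs_sub_le_diam_image (hu : Continuous u) {s t : ℝ} (hs : s ∈ chebInterval m j)
    (ht : t ∈ chebInterval m j) : |u s - u t| ≤ Metric.diam (u '' chebInterval m j) :=
  Metric.dist_le_diam_of_mem (isCompact_Icc.image hu).isBounded (Set.mem_image_of_mem u hs)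
    (Set.mem_image_of_mem u ht)

theorem chebOsc_nonneg (m : ℕ) (u : ℝ → ℝ) : 0 ≤ chebOsc m u :=
  Finset.sum_nonneg fun _ hj => mul_nonneg (chebLen_nonneg hj) Metric.diam_nonneg

theorem chebOsc_comp_le {φ : ℝ → ℝ} (hφ : LipschitzWith 1 φ) (hu : Continuous u) :
    chebOsc m (fun t => φ (u t)) ≤ chebOsc m u := by
  refine Finset.sum_le_sum fun j hj => mul_le_mul_of_nonneg_left ?_ (chebLen_nonneg hj)
  have bounded : Bornology.IsBounded (u '' chebInterval m j) := (isCompact_Icc.image hu).isBounded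
  rw [← Function.comp_def, Set.image_comp]
  simpa only [NNReal.coe_one, one_mul] using hφ.diam_image_le _ bounded

theorem chebOsc_sub_le (hu : Continuous u) (hv : Continuous v) :
    chebOsc m (fun t => u t - v t) ≤ chebOsc m u + chebOsc m v := by
  rw [chebOsc, chebOsc, chebOsc, ← Finset.sum_add_distrib]
  refine Finset.sum_le_sum fun j hj => ?_
  rw [← mul_add]
  refine mul_le_mul_of_nonneg_left ?_ (chebLen_nonneg hj)
  refine Metric.diam_le_of_forall_dist_le (add_nonneg Metric.diam_nonneg Metric.diam_nonneg) ?_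
  rintro _ ⟨s, hs, rfl⟩ _ ⟨t, ht, rfl⟩
  rw [dist_eq, sub_sub_sub_comm]
  exact (abs_sub _ _).trans
    (add_le_add (abs_sub_le_diam_image hu hs ht) (abs_sub_le_diam_image hv hs ht))

theorem abs_chebLen_mul_sub_setIntegral_le (hj : j ∈ Finset.Icc 1 m) (hu : Continuous u) {s : ℝ}
    (hs : s ∈ chebInterval m j) :
    |chebLen m j * u s - ∫ t in chebInterval m j, u t| ≤
      chebLen m j * Metric.diam (u '' chebInterval m j) := by
  have hint {g : ℝ → ℝ} (hg : Continuous g) : MeasureTheory.IntegrableOn g (chebInterval m j) :=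
    hg.continuousOn.integrableOn_compact isCompact_Icc
  have as_integral : chebLen m j * u s - ∫ t in chebInterval m j, u t =
      ∫ t in chebInterval m j, (u s - u t) := by
    rw [MeasureTheory.integral_sub (hint continuous_const) (hint hu),
      MeasureTheory.setIntegral_const, volume_real_chebInterval hj, smul_eq_mul]
  rw [as_integral, mul_comm, ← volume_real_chebInterval hj]
  exact MeasureTheory.norm_setIntegral_le_of_norm_le_const (f := fun t => u s - u t)
    isCompact_Icc.measure_lt_top fun t ht => abs_sub_le_diam_image hu hs ht

theorem diam_eval_image_chebInterval_le (r : ℝ[X]) (m j : ℕ) :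
    Metric.diam ((fun t => r.eval t) '' chebInterval m j) ≤
      ∫ θ in (π * ((j : ℝ) - 1) / m)..(π * j / m), |deriv (fun θ => r.eval (cos θ)) θ| := by
  have hf := eval_cos_mem_trigPoly (le_refl r.natDegree)
  refine Metric.diam_le_of_forall_dist_le (intervalIntegral.integral_nonneg
    (chebAngle_le_chebAngle m j) fun _ _ => abs_nonneg _) ?_
  rintro _ ⟨s, hs, rfl⟩ _ ⟨t, ht, rfl⟩
  obtain ⟨θ, hθ, rfl⟩ := chebInterval_subset_image_cos m j hs
  obtain ⟨φ, hφ, rfl⟩ := chebInterval_subset_image_cos m j ht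
  exact abs_sub_le_integral_abs_deriv (hasDerivAt_of_mem_trigPoly hf)
    (continuous_of_mem_trigPoly (deriv_mem_trigPoly hf)) hφ hθ

theorem chebOsc_eval_le_integral (hm : m ≠ 0) (r : ℝ[X]) :
    chebOsc m (fun t => r.eval t) ≤
      ∫ θ in 0..π, π / m * (|sin θ| + π / m) * |deriv (fun θ => r.eval (cos θ)) θ| := by
  have hcont := continuous_of_mem_trigPoly
    (deriv_mem_trigPoly (eval_cos_mem_trigPoly (le_refl r.natDegree)))
  have sum_arcs := sum_integral_Icc_one m (fun s => π * s / m)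
    (u := fun θ => π / m * (|sin θ| + π / m) * |deriv (fun θ => r.eval (cos θ)) θ|) (by fun_prop)
  simp only [mul_zero, zero_div, mul_div_cancel_right₀ π (Nat.cast_ne_zero.2 hm)] at sum_arcs
  rw [← sum_arcs]
  refine Finset.sum_le_sum fun j hj => ?_
  refine (mul_le_mul_of_nonneg_left (diam_eval_image_chebInterval_le r m j)
    (chebLen_nonneg hj)).trans ?_
  rw [← intervalIntegral.integral_const_mul]
  refine intervalIntegral.integral_mono_on (chebAngle_le_chebAngle m j)
    (Continuous.intervalIntegrable (by fun_prop) _ _)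
    (Continuous.intervalIntegrable (by fun_prop) _ _) fun θ hθ => ?_
  gcongr
  exact chebLen_le hθ

theorem chebOsc_eval_le {d : ℕ} (hd : d ≠ 0) {r : ℝ[X]} (hr : r.natDegree ≤ d) (hdm : d ≤ m) :
    chebOsc m (fun t => r.eval t) ≤ 5000 * (d / m) * ∫ t in (-1)..1, |r.eval t| := by
  have hf := eval_cos_mem_trigPoly hr
  set f : ℝ → ℝ := fun θ => r.eval (cos θ)
  have hcont := continuous_of_mem_trigPoly (deriv_mem_trigPoly hf)
  have m_pos : (0 : ℝ) < m := by exact_mod_cast (Nat.pos_of_ne_zero hd).trans_le hdm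
  have norm_eq : sinNorm f = 2 * ∫ t in (-1)..1, |r.eval t| :=
    integral_comp_cos (u := fun t => |r.eval t|) (by fun_prop)
  have extend : ∫ θ in 0..π, π / m * (|sin θ| + π / m) * |deriv f θ| ≤
      ∫ θ in -π..π, π / m * (|sin θ| + π / m) * |deriv f θ| :=
    intervalIntegral.integral_mono_interval (by linarith [pi_pos]) pi_pos.le le_rfl
      (.of_forall fun θ => by simp only [Pi.zero_apply]; positivity)
      (Continuous.intervalIntegrable (by fun_prop) _ _)
  have split : ∫ θ in -π..π, π / m * (|sin θ| + π / m) * |deriv f θ| =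
      π / m * sinNorm (deriv f) + (π / m) ^ 2 * ∫ θ in -π..π, |deriv f θ| := by
    rw [sinNorm, ← intervalIntegral.integral_const_mul, ← intervalIntegral.integral_const_mul,
      ← intervalIntegral.integral_add (Continuous.intervalIntegrable (by fun_prop) _ _)
        (Continuous.intervalIntegrable (by fun_prop) _ _)]
    congr with θ
    ring
  have norm_nonneg := sinNorm_nonneg f
  calc chebOsc m (fun t => r.eval t)
      ≤ π / m * sinNorm (deriv f) + (π / m) ^ 2 * ∫ θ in -π..π, |deriv f θ| :=
        (chebOsc_eval_le_integral (by exact_mod_cast m_pos.ne') r).trans (extend.trans_eq split)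
    _ ≤ π / m * (100 * d * sinNorm f) + (π / m) ^ 2 * (200 * d ^ 2 * sinNorm f) := by
        gcongr
        · exact sinNorm_deriv_le hd hf
        · exact integral_abs_deriv_le_sinNorm hd hf
    _ = (100 * π + 200 * π ^ 2 * (d / m)) * (d / m) * sinNorm f := by field_simp
    _ ≤ (100 * 3.15 + 200 * 3.15 ^ 2 * 1) * (d / m) * sinNorm f := by
        gcongr
        · exact pi_lt_d2.le
        · exact pi_lt_d2.le
        · exact div_le_one_of_le₀ (by exact_mod_cast hdm) m_pos.le
    _ ≤ 2500 * (d / m) * sinNorm f := by gcongr; norm_num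
    _ = 5000 * (d / m) * ∫ t in (-1)..1, |r.eval t| := by rw [norm_eq]; ring

end chebOsc

/-- The quadrature rule of the regression objective: the average of `f` over the samples in each
interval `I_j`, summed with the weights `|I_j|`. -/
noncomputable def sampleMean {n : ℕ} (m : ℕ) (x : Fin n → ℝ) : (Fin n → ℝ) →ₗ[ℝ] ℝ :=
  ∑ j ∈ Finset.Icc 1 m,
    (chebLen m j / (sampleSet m j x).card) • ∑ i ∈ sampleSet m j x, LinearMap.proj i

section sampleMean

variable {n m j : ℕ} {x : Fin n → ℝ}

theorem sampleMean_apply (m : ℕ) (x f : Fin n → ℝ) :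
    sampleMean m x f = ∑ j ∈ Finset.Icc 1 m,
      chebLen m j * ((∑ i ∈ sampleSet m j x, f i) / (sampleSet m j x).card) := by
  simp only [sampleMean, LinearMap.coe_sum, Finset.sum_apply, LinearMap.smul_apply,
    LinearMap.coe_proj, Function.eval, smul_eq_mul, div_mul_eq_mul_div, mul_div_assoc]

theorem l1Obj_eq_sampleMean (m : ℕ) (x y : Fin n → ℝ) (q : ℝ[X]) :
    l1Obj m x y q = sampleMean m x fun i => |y i - q.eval (x i)| :=
  (sampleMean_apply m x _).symm

theorem monotone_sampleMean (m : ℕ) (x : Fin n → ℝ) : Monotone (sampleMean m x) := by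
  intro f g hfg
  rw [sampleMean_apply, sampleMean_apply]
  refine Finset.sum_le_sum fun j hj => mul_le_mul_of_nonneg_left ?_ (chebLen_nonneg hj)
  gcongr
  exact hfg _

theorem mem_chebInterval_of_mem_sampleSet {i : Fin n} (hi : i ∈ sampleSet m j x) :
    x i ∈ chebInterval m j := by
  classical exact (Finset.mem_filter.1 hi).2

theorem abs_sampleMean_sub_integral_le (hm : m ≠ 0)
    (hne : ∀ j ∈ Finset.Icc 1 m, (sampleSet m j x).Nonempty) {u : ℝ → ℝ} (hu : Continuous u) :
    |sampleMean m x (fun i => u (x i)) - ∫ t in (-1)..1, u t| ≤ chebOsc m u := by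
  rw [← sum_setIntegral_chebInterval hm hu, sampleMean_apply, ← Finset.sum_sub_distrib]
  refine (Finset.abs_sum_le_sum_abs _ _).trans (Finset.sum_le_sum fun j hj => ?_)
  have card_pos : (0 : ℝ) < (sampleSet m j x).card := by exact_mod_cast (hne j hj).card_pos
  have as_mean : chebLen m j * ((∑ i ∈ sampleSet m j x, u (x i)) / (sampleSet m j x).card) -
      ∫ t in chebInterval m j, u t =
      (∑ i ∈ sampleSet m j x, (chebLen m j * u (x i) - ∫ t in chebInterval m j, u t)) /
        (sampleSet m j x).card := by
    rw [Finset.sum_sub_distrib, ← Finset.mul_sum, Finset.sum_const, nsmul_eq_mul]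
    field_simp
  rw [as_mean, abs_div, abs_of_pos card_pos, div_le_iff₀ card_pos, mul_comm _ (Nat.cast _),
    ← nsmul_eq_mul, ← Finset.sum_const]
  exact (Finset.abs_sum_le_sum_abs _ _).trans (Finset.sum_le_sum fun i hi =>
    abs_chebLen_mul_sub_setIntegral_le hj hu (mem_chebInterval_of_mem_sampleSet hi))

theorem sampleMean_le_integral_add (hm : m ≠ 0)
    (hne : ∀ j ∈ Finset.Icc 1 m, (sampleSet m j x).Nonempty) {u : ℝ → ℝ} (hu : Continuous u) :
    sampleMean m x (fun i => u (x i)) ≤ (∫ t in (-1)..1, u t) + chebOsc m u := by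
  linarith [le_of_abs_le (abs_sampleMean_sub_integral_le hm hne hu)]

theorem integral_le_sampleMean_add (hm : m ≠ 0)
    (hne : ∀ j ∈ Finset.Icc 1 m, (sampleSet m j x).Nonempty) {u : ℝ → ℝ} (hu : Continuous u) :
    ∫ t in (-1)..1, u t ≤ sampleMean m x (fun i => u (x i)) + chebOsc m u := by
  linarith [neg_le_of_abs_le (abs_sampleMean_sub_integral_le hm hne hu)]

theorem sampleMean_const (hm : m ≠ 0) (hne : ∀ j ∈ Finset.Icc 1 m, (sampleSet m j x).Nonempty)
    (c : ℝ) : sampleMean m x (fun _ => c) = 2 * c := by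
  have osc_zero : chebOsc m (fun _ => c) = 0 :=
    Finset.sum_eq_zero fun j _ => by
      rw [Metric.diam_subsingleton (Set.subsingleton_singleton.anti
        (Set.image_subset_iff.2 fun _ _ => Set.mem_singleton c)), mul_zero]
  have := abs_sampleMean_sub_integral_le hm hne (continuous_const (y := c))
  rw [osc_zero, abs_nonpos_iff, sub_eq_zero, intervalIntegral.integral_const, smul_eq_mul] at this
  rw [this]
  norm_num

end sampleMean

section AlphaGood

variable {n m : ℕ} {x y : Fin n → ℝ} {p : ℝ[X]} {σ α : ℝ}

theorem alpha_pos_of_alphaGood (hm : m ≠ 0) (hgood : AlphaGood m x y p σ α) : 0 < α := by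
  have h := (hgood 1 (by simp; lia)).2
  exact pos_of_mul_pos_left ((Nat.cast_nonneg _).trans_lt h) (Nat.cast_nonneg _)

theorem sampleMean_outlier_le (hm : m ≠ 0) (hgood : AlphaGood m x y p σ α) {u : ℝ → ℝ}
    (hu : Continuous u) (hu₀ : ∀ t, 0 ≤ u t) :
    sampleMean m x (fun i => if σ < |y i - p.eval (x i)| then u (x i) else 0) ≤
      α * ((∫ t in (-1)..1, u t) + chebOsc m u) := by
  have hα := (alpha_pos_of_alphaGood hm hgood).le
  rw [← sum_setIntegral_chebInterval hm hu, chebOsc, ← Finset.sum_add_distrib, Finset.mul_sum,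
    sampleMean_apply]
  refine Finset.sum_le_sum fun j hj => ?_
  obtain ⟨hne, few⟩ := hgood j hj
  obtain ⟨k, hk, hmax⟩ := Finset.exists_max_image (sampleSet m j x) (fun i => u (x i)) hne
  have card_pos : (0 : ℝ) < (sampleSet m j x).card := by exact_mod_cast hne.card_pos
  have mean_le : (∑ i ∈ sampleSet m j x, if σ < |y i - p.eval (x i)| then u (x i) else 0) /
      (sampleSet m j x).card ≤ α * u (x k) := by
    rw [div_le_iff₀ card_pos, ← Finset.sum_filter]
    calc _ ≤ ((sampleSet m j x).filter fun i => σ < |y i - p.eval (x i)|).card • u (x k) :=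
          Finset.sum_le_card_nsmul _ _ _ fun i hi => hmax i (Finset.mem_of_mem_filter i hi)
      _ ≤ α * (sampleSet m j x).card * u (x k) := by
          rw [nsmul_eq_mul]
          convert mul_le_mul_of_nonneg_right few.le (hu₀ (x k))
      _ = α * u (x k) * (sampleSet m j x).card := by ring
  have osc := le_of_abs_le (abs_chebLen_mul_sub_setIntegral_le hj hu
    (mem_chebInterval_of_mem_sampleSet hk))
  calc _ ≤ chebLen m j * (α * u (x k)) := mul_le_mul_of_nonneg_left mean_le (chebLen_nonneg hj)
    _ = α * (chebLen m j * u (x k)) := by ring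
    _ ≤ _ := by gcongr; linarith

end AlphaGood

/-! ### Regression with bounded noise -/

theorem abs_sub_clip_le {σ e : ℝ} (he : |e| ≤ σ) (s : ℝ) :
    |e - clip σ s| ≤ σ + |e - s| - |s| := by
  unfold clip
  grind

section boundedNoise

variable {n m d : ℕ} {x e : Fin n → ℝ} {σ η : ℝ} {r q : ℝ[X]}

theorem sampleMean_abs_sub_clip_le (hm : m ≠ 0)
    (hne : ∀ j ∈ Finset.Icc 1 m, (sampleSet m j x).Nonempty) (he : ∀ i, |e i| ≤ σ) (r : ℝ[X]) :
    sampleMean m x (fun i => |e i - clip σ (r.eval (x i))|) + ∫ t in (-1)..1, |r.eval t| ≤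
      2 * σ + sampleMean m x (fun i => |e i - r.eval (x i)|) + chebOsc m (fun t => r.eval t) := by
  have mean := monotone_sampleMean m x
    (a := (fun i => |e i - clip σ (r.eval (x i))|) + fun i => |r.eval (x i)|)
    (b := (fun _ => σ) + fun i => |e i - r.eval (x i)|)
    fun i => by
      simp only [Pi.add_apply]
      linarith [abs_sub_clip_le (he i) (r.eval (x i))]
  rw [map_add, map_add, sampleMean_const hm hne] at mean
  have quadrature := integral_le_sampleMean_add hm hne (u := fun t => |r.eval t|) (by fun_prop)
  have osc : chebOsc m (fun t => |r.eval t|) ≤ chebOsc m (fun t => r.eval t) :=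
    chebOsc_comp_le lipschitzWith_one_norm (by fun_prop)
  linarith

theorem integral_sub_abs_clip_le (hm : m ≠ 0)
    (hne : ∀ j ∈ Finset.Icc 1 m, (sampleSet m j x).Nonempty) (he : ∀ i, |e i| ≤ σ)
    (hopt : sampleMean m x (fun i => |e i - r.eval (x i)|) ≤ sampleMean m x (fun i => |e i|) + η)
    (hnorm : 4 * σ ≤ ∫ t in (-1)..1, |r.eval t|) :
    ∫ t in (-1)..1, (σ - |clip σ (r.eval t)|) ≤ 2 * η + 3 * chebOsc m (fun t => r.eval t) := by
  have fit := sampleMean_abs_sub_clip_le hm hne he r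
  have fit_nonneg : 0 ≤ sampleMean m x fun i => |e i - clip σ (r.eval (x i))| := by
    simpa only [map_zero] using monotone_sampleMean m x (a := 0) fun _ => abs_nonneg _
  have noise_le : sampleMean m x (fun i => |e i|) ≤ 2 * σ := by
    simpa only [sampleMean_const hm hne] using monotone_sampleMean m x (b := fun _ => σ) he
  have mean := monotone_sampleMean m x
    (a := (fun i => σ - |clip σ (r.eval (x i))|) + fun i => |e i|)
    (b := (fun _ => σ) + fun i => |e i - clip σ (r.eval (x i))|)
    fun i => by
      simp only [Pi.add_apply]
      linarith [abs_sub_abs_le_abs_sub (e i) (clip σ (r.eval (x i)))]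
  rw [map_add, map_add, sampleMean_const hm hne] at mean
  have quadrature := integral_le_sampleMean_add hm hne
    (u := fun t => σ - |clip σ (r.eval t)|) (by fun_prop)
  have osc : chebOsc m (fun t => σ - |clip σ (r.eval t)|) ≤ chebOsc m (fun t => r.eval t) :=
    chebOsc_comp_le lipschitzWith_sub_abs_clip (by fun_prop)
  linarith

theorem integral_abs_sub_two_mul_le (hm : m ≠ 0)
    (hne : ∀ j ∈ Finset.Icc 1 m, (sampleSet m j x).Nonempty) (he : ∀ i, |e i| ≤ σ)
    (hopt : sampleMean m x (fun i => |e i - r.eval (x i)|) ≤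
      sampleMean m x (fun i => |e i - q.eval (x i)|) + η) :
    (∫ t in (-1)..1, |r.eval t|) - 2 * σ ≤ (∫ t in (-1)..1, |clip σ (r.eval t) - q.eval t|) +
      2 * chebOsc m (fun t => r.eval t) + chebOsc m (fun t => q.eval t) + η := by
  have fit := sampleMean_abs_sub_clip_le hm hne he r
  have mean := monotone_sampleMean m x (a := fun i => |e i - q.eval (x i)|)
    (b := (fun i => |e i - clip σ (r.eval (x i))|) +
      fun i => |clip σ (r.eval (x i)) - q.eval (x i)|)
    fun i => abs_sub_le _ _ _
  rw [map_add] at mean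
  have quadrature := sampleMean_le_integral_add hm hne
    (u := fun t => |clip σ (r.eval t) - q.eval t|) (by fun_prop)
  have osc : chebOsc m (fun t => |clip σ (r.eval t) - q.eval t|) ≤
      chebOsc m (fun t => r.eval t) + chebOsc m (fun t => q.eval t) :=
    calc _ ≤ chebOsc m (fun t => clip σ (r.eval t) - q.eval t) :=
          chebOsc_comp_le lipschitzWith_one_norm (by fun_prop)
      _ ≤ chebOsc m (fun t => clip σ (r.eval t)) + chebOsc m (fun t => q.eval t) :=
          chebOsc_sub_le (by fun_prop) (by fun_prop)
      _ ≤ _ := add_le_add_left (chebOsc_comp_le lipschitzWith_clip (by fun_prop)) _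
  linarith

theorem integral_abs_le_four_mul (hm : m ≠ 0) (hd : d ≠ 0)
    (hne : ∀ j ∈ Finset.Icc 1 m, (sampleSet m j x).Nonempty) (he : ∀ i, |e i| ≤ σ)
    (hosc : ∀ q : ℝ[X], q.natDegree ≤ d →
      chebOsc m (fun t => q.eval t) ≤ 1 / 10 ^ 22 * ∫ t in (-1)..1, |q.eval t|)
    (hr : r.natDegree ≤ d) (hnorm : ∫ t in (-1)..1, |r.eval t| ≤ 5 * σ)
    (hopt : ∀ q : ℝ[X], q.natDegree ≤ d → sampleMean m x (fun i => |e i - r.eval (x i)|) ≤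
      sampleMean m x (fun i => |e i - q.eval (x i)|) + σ / 10 ^ 20) :
    ∫ t in (-1)..1, |r.eval t| ≤ 4 * σ := by
  by_contra! hlarge
  have hσ : 0 ≤ σ := by linarith
  have osc_r := hosc r hr
  have potential := integral_sub_abs_clip_le hm hne he (r := r) (η := σ / 10 ^ 20)
    (by simpa using hopt 0 (by simp)) hlarge.le
  obtain ⟨q, hq, close⟩ := exists_integral_abs_clip_sub_le hd hσ hr hnorm (by linarith)
  have gain := integral_abs_sub_two_mul_le hm hne he (hopt q hq)
  have osc_q := hosc q hq
  have q_norm : ∫ t in (-1)..1, |q.eval t| ≤ 3 * σ := by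
    have pointwise := intervalIntegral.integral_mono (μ := MeasureTheory.volume)
      (a := -1) (b := 1) (f := fun t => |q.eval t|)
      (g := fun t => |clip σ (r.eval t) - q.eval t| + σ) (by norm_num)
      (Continuous.intervalIntegrable (by fun_prop) _ _)
      (Continuous.intervalIntegrable (by fun_prop) _ _) fun t => by
        have := abs_sub_abs_le_abs_sub (q.eval t) (clip σ (r.eval t))
        rw [abs_sub_comm] at this
        linarith [abs_clip_le hσ (r.eval t)]
    rw [intervalIntegral.integral_add (Continuous.intervalIntegrable (by fun_prop) _ _)
      (Continuous.intervalIntegrable (by fun_prop) _ _), intervalIntegral.integral_const,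
      smul_eq_mul] at pointwise
    linarith
  linarith

end boundedNoise

/-- The amount by which `|s|` exceeds `σ`. -/
noncomputable def excess (σ s : ℝ) : ℝ := max (|s| - σ) 0

theorem excess_nonneg (σ s : ℝ) : 0 ≤ excess σ s := le_max_right _ _

theorem lipschitzWith_excess {σ : ℝ} : LipschitzWith 1 (excess σ) := by
  have h : LipschitzWith 1 fun s : ℝ => max (|s| - σ) 0 := by
    simpa using ((lipschitzWith_one_norm (E := ℝ)).sub (LipschitzWith.const σ)).max_const 0
  exact h

@[fun_prop]
theorem continuous_excess {σ : ℝ} : Continuous (excess σ) := lipschitzWith_excess.continuous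

theorem two_mul_excess_add_abs_le (σ e s : ℝ) :
    2 * excess σ s + |e| ≤ |e - s| + |s| + 2 * if σ < |e| then excess σ s else 0 := by
  unfold excess
  split_ifs <;> grind

theorem integral_abs_sub_le_integral_excess (σ : ℝ) {u : ℝ → ℝ} (hu : Continuous u) :
    (∫ t in (-1)..1, |u t|) - 2 * σ ≤ ∫ t in (-1)..1, excess σ (u t) := by
  have split : ∫ t in (-1)..1, (|u t| - σ) = (∫ t in (-1)..1, |u t|) - 2 * σ := by
    rw [intervalIntegral.integral_sub (Continuous.intervalIntegrable (by fun_prop) _ _)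
      (Continuous.intervalIntegrable (by fun_prop) _ _), intervalIntegral.integral_const,
      smul_eq_mul]
    norm_num
  rw [← split]
  exact intervalIntegral.integral_mono (by norm_num)
    (Continuous.intervalIntegrable (by fun_prop) _ _)
    (Continuous.intervalIntegrable (by fun_prop) _ _) fun t => le_max_left _ _

section outliers

variable {n m d : ℕ} {x y : Fin n → ℝ} {p r : ℝ[X]} {σ α : ℝ}

theorem one_sub_two_mul_integral_abs_le (hm : m ≠ 0) (hα : α ≤ 1 / 2)
    (hgood : AlphaGood m x y p σ α)
    (hopt : sampleMean m x (fun i => |y i - p.eval (x i) - r.eval (x i)|) ≤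
      sampleMean m x fun i => |y i - p.eval (x i)|) :
    (1 - 2 * α) * ∫ t in (-1)..1, |r.eval t| ≤
      4 * σ * (1 - α) + 4 * chebOsc m (fun t => r.eval t) := by
  have hne := fun j hj => (hgood j hj).1
  have mean := monotone_sampleMean m x
    (a := (2 : ℝ) • (fun i => excess σ (r.eval (x i))) + fun i => |y i - p.eval (x i)|)
    (b := (fun i => |y i - p.eval (x i) - r.eval (x i)|) + (fun i => |r.eval (x i)|) +
      (2 : ℝ) • fun i => if σ < |y i - p.eval (x i)| then excess σ (r.eval (x i)) else 0)
    fun i => two_mul_excess_add_abs_le _ _ _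
  simp only [map_add, map_smul, smul_eq_mul] at mean
  have excess_osc : chebOsc m (fun t => excess σ (r.eval t)) ≤ chebOsc m (fun t => r.eval t) :=
    chebOsc_comp_le lipschitzWith_excess (by fun_prop)
  have abs_osc : chebOsc m (fun t => |r.eval t|) ≤ chebOsc m (fun t => r.eval t) :=
    chebOsc_comp_le lipschitzWith_one_norm (by fun_prop)
  have excess_mean := integral_le_sampleMean_add hm hne (u := fun t => excess σ (r.eval t))
    (by fun_prop)
  have abs_mean := sampleMean_le_integral_add hm hne (u := fun t => |r.eval t|) (by fun_prop)
  have outliers := sampleMean_outlier_le hm hgood (u := fun t => excess σ (r.eval t))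
    (by fun_prop) fun t => excess_nonneg _ _
  have outlier_osc : α * chebOsc m (fun t => excess σ (r.eval t)) ≤
      1 / 2 * chebOsc m (fun t => r.eval t) :=
    mul_le_mul hα excess_osc (chebOsc_nonneg m _) (by norm_num)
  have inlier_gain := mul_le_mul_of_nonneg_left
    (integral_abs_sub_le_integral_excess σ r.continuous) (by linarith : 0 ≤ 1 - α)
  linarith

theorem exists_bounded_noise (hm : m ≠ 0) (hσ : 0 ≤ σ) (hgood : AlphaGood m x y p σ α)
    (r : ℝ[X]) :
    ∃ e : Fin n → ℝ, (∀ i, |e i| ≤ σ) ∧ ∀ q : ℝ[X],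
      sampleMean m x (fun i => |e i - r.eval (x i)|) +
          sampleMean m x (fun i => |y i - p.eval (x i) - q.eval (x i)|) ≤
        sampleMean m x (fun i => |e i - q.eval (x i)|) +
          sampleMean m x (fun i => |y i - p.eval (x i) - r.eval (x i)|) +
          2 * α * ((∫ t in (-1)..1, |r.eval t|) + chebOsc m (fun t => r.eval t)) := by
  refine ⟨fun i => if σ < |y i - p.eval (x i)| then 0 else y i - p.eval (x i), fun i => ?_,
    fun q => ?_⟩
  · beta_reduce; split_ifs with h
    · rwa [abs_zero]
    · exact not_lt.1 h
  have mean := monotone_sampleMean m x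
    (a := (fun i => |(if σ < |y i - p.eval (x i)| then 0 else y i - p.eval (x i)) -
      r.eval (x i)|) + fun i => |y i - p.eval (x i) - q.eval (x i)|)
    (b := (fun i => |(if σ < |y i - p.eval (x i)| then 0 else y i - p.eval (x i)) -
      q.eval (x i)|) + (fun i => |y i - p.eval (x i) - r.eval (x i)|) +
      (2 : ℝ) • fun i => if σ < |y i - p.eval (x i)| then |r.eval (x i)| else 0)
    fun i => by
      simp only [Pi.add_apply, Pi.smul_apply, smul_eq_mul]
      split_ifs <;> grind
  simp only [map_add, map_smul, smul_eq_mul] at mean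
  have abs_osc : chebOsc m (fun t => |r.eval t|) ≤ chebOsc m (fun t => r.eval t) :=
    chebOsc_comp_le lipschitzWith_one_norm (by fun_prop)
  have outliers := sampleMean_outlier_le hm hgood (u := fun t => |r.eval t|) (by fun_prop)
    fun t => abs_nonneg _
  have outlier_osc := mul_le_mul_of_nonneg_left abs_osc (alpha_pos_of_alphaGood hm hgood).le
  linarith

end outliers

theorem chebOsc_eval_le_of_mesh {d m : ℕ} {α : ℝ} (hd : d ≠ 0) (hα₀ : 0 ≤ α) (hα : α < 1 / 2)
    (hm : 5 * 10 ^ 25 * d / (1 - 2 * α) ≤ m) {q : ℝ[X]} (hq : q.natDegree ≤ d) :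
    chebOsc m (fun t => q.eval t) ≤
      1 / 10 ^ 22 * (1 - 2 * α) * ∫ t in (-1)..1, |q.eval t| := by
  have margin_pos : 0 < 1 - 2 * α := by linarith
  have d_pos : (0 : ℝ) < d := by positivity
  rw [div_le_iff₀ margin_pos] at hm
  have m_margin : (m : ℝ) * (1 - 2 * α) ≤ m :=
    mul_le_of_le_one_right (Nat.cast_nonneg _) (by linarith)
  have d_le_m : d ≤ m := by exact_mod_cast (by linarith : (d : ℝ) ≤ m)
  have m_pos : (0 : ℝ) < m := by linarith
  refine (chebOsc_eval_le hd hq d_le_m).trans (mul_le_mul_of_nonneg_right ?_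
    (intervalIntegral.integral_nonneg (by norm_num) fun _ _ => abs_nonneg _))
  rw [← mul_div_assoc, div_le_iff₀ m_pos]
  linarith

section optimality

variable {n m d : ℕ} {x y : Fin n → ℝ} {p r : ℝ[X]} {σ α : ℝ}

theorem integral_abs_le_four_mul_of_few_outliers (hd : d ≠ 0) (hm : m ≠ 0) (hσ : 0 ≤ σ)
    (hgood : AlphaGood m x y p σ α) (hα : α ≤ 4 / 10 ^ 22)
    (hosc : ∀ q : ℝ[X], q.natDegree ≤ d →
      chebOsc m (fun t => q.eval t) ≤ 1 / 10 ^ 22 * ∫ t in (-1)..1, |q.eval t|)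
    (hr : r.natDegree ≤ d) (hnorm : ∫ t in (-1)..1, |r.eval t| ≤ 5 * σ)
    (hopt : ∀ q : ℝ[X], q.natDegree ≤ d →
      sampleMean m x (fun i => |y i - p.eval (x i) - r.eval (x i)|) ≤
        sampleMean m x fun i => |y i - p.eval (x i) - q.eval (x i)|) :
    ∫ t in (-1)..1, |r.eval t| ≤ 4 * σ := by
  obtain ⟨e, he, compare⟩ := exists_bounded_noise hm hσ hgood r
  refine integral_abs_le_four_mul hm hd (fun j hj => (hgood j hj).1) he hosc hr hnorm
    fun q hq => ?_
  have total : (∫ t in (-1)..1, |r.eval t|) + chebOsc m (fun t => r.eval t) ≤ 6 * σ := by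
    linarith [hosc r hr]
  have perturbation : 2 * α * ((∫ t in (-1)..1, |r.eval t|) + chebOsc m (fun t => r.eval t)) ≤
      2 * (4 / 10 ^ 22) * (6 * σ) :=
    mul_le_mul (by linarith) total
      (add_nonneg (intervalIntegral.integral_nonneg (by norm_num) fun _ _ => abs_nonneg _)
        (chebOsc_nonneg m _)) (by norm_num)
  linarith [compare q, hopt q hq]

theorem one_sub_two_mul_integral_abs_le_four_mul (hd : d ≠ 0) (hα : α < 1 / 2) (hσ : 0 ≤ σ)
    (hm : 5 * 10 ^ 25 * d / (1 - 2 * α) ≤ m) (hgood : AlphaGood m x y p σ α)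
    (hr : r.natDegree ≤ d)
    (hopt : ∀ q : ℝ[X], q.natDegree ≤ d →
      sampleMean m x (fun i => |y i - p.eval (x i) - r.eval (x i)|) ≤
        sampleMean m x fun i => |y i - p.eval (x i) - q.eval (x i)|) :
    (1 - 2 * α) * ∫ t in (-1)..1, |r.eval t| ≤ 4 * σ := by
  have margin_pos : 0 < 1 - 2 * α := by linarith
  have m_ne_zero : m ≠ 0 := by
    have : 0 < 5 * 10 ^ 25 * d / (1 - 2 * α) := by positivity
    exact_mod_cast (this.trans_le hm).ne'
  have hα₀ := alpha_pos_of_alphaGood m_ne_zero hgood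
  have norm_nonneg (q : ℝ[X]) : 0 ≤ ∫ t in (-1)..1, |q.eval t| :=
    intervalIntegral.integral_nonneg (by norm_num) fun _ _ => abs_nonneg _
  have base := one_sub_two_mul_integral_abs_le m_ne_zero hα.le hgood
    (r := r) (by simpa using hopt 0 (by simp))
  have osc := chebOsc_eval_le_of_mesh hd hα₀.le hα hm hr
  rcases le_total (4 / 10 ^ 22) α with many | few
  · have := mul_le_mul_of_nonneg_left many hσ
    linarith
  · have osc_le (q : ℝ[X]) (hq : q.natDegree ≤ d) :
        chebOsc m (fun t => q.eval t) ≤ 1 / 10 ^ 22 * ∫ t in (-1)..1, |q.eval t| := by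
      refine (chebOsc_eval_le_of_mesh hd hα₀.le hα hm hq).trans
        (mul_le_mul_of_nonneg_right ?_ (norm_nonneg q))
      linarith
    have few_norm := mul_le_mul_of_nonneg_right few (norm_nonneg r)
    have noise_nonneg := mul_nonneg hσ hα₀.le
    have norm_le := integral_abs_le_four_mul_of_few_outliers hd m_ne_zero hσ hgood few osc_le hr
      (by linarith) hopt
    linarith [mul_nonneg hα₀.le (norm_nonneg r)]

end optimality

end L1Regression

theorem l1_regression_good_samples_general {α σ : ℝ} {d m n : ℕ} {x y : Fin n → ℝ}
    {p phat : ℝ[X]} (hα : α < 1 / 2) (hd : 0 < d) (hσ : 0 ≤ σ) (hp : p.natDegree ≤ d)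
    (hm : 5 * 10 ^ 25 * d / (1 - 2 * α) ≤ m) (hgood : AlphaGood m x y p σ α)
    (hphat : phat.natDegree ≤ d)
    (hopt : ∀ q : ℝ[X], q.natDegree ≤ d → l1Obj m x y phat ≤ l1Obj m x y q) :
    ∫ t in (-1)..1, |phat.eval t - p.eval t| ≤ 4 * σ / (1 - 2 * α) := by
  rw [le_div_iff₀' (by linarith)]
  simpa only [eval_sub] using
    L1Regression.one_sub_two_mul_integral_abs_le_four_mul (r := phat - p) hd.ne' hα hσ hm
      hgood ((natDegree_sub_le_of_le hphat hp).trans_eq (max_self d)) fun q hq => by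
        simpa only [L1Regression.l1Obj_eq_sampleMean, eval_add, eval_sub, sub_sub, add_sub_cancel]
          using hopt (p + q) (natDegree_add_le_of_degree_le hp hq)

theorem l1_regression_good_samples :
    ∃ C : ℝ, 0 < C ∧
      ∀ (α : ℝ), α < 1 / 2 → ∀ (d : ℕ), 0 < d → ∀ (σ : ℝ), 0 ≤ σ →
      ∀ (p : Polynomial ℝ), p.natDegree ≤ d →
      ∀ (m : ℕ), 0 < m → C * d / (1 - 2 * α) ≤ (m : ℝ) →
      ∀ (n : ℕ) (x y : Fin n → ℝ), (∀ i, x i ∈ Set.Icc (-1 : ℝ) 1) →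
      AlphaGood m x y p σ α →
      ∀ phat : Polynomial ℝ, phat.natDegree ≤ d →
      (∀ q : Polynomial ℝ, q.natDegree ≤ d → l1Obj m x y phat ≤ l1Obj m x y q) →
      (∫ t in (-1 : ℝ)..1, |phat.eval t - p.eval t|) ≤ 4 * σ / (1 - 2 * α) :=
  ⟨5 * 10 ^ 25, by norm_num, fun _ hα _ hd _ hσ _ hp _ _ hm _ _ _ _ hgood _ hphat hopt =>
    l1_regression_good_samples_general hα hd hσ hp hm hgood hphat hopt⟩
end

section
/- There is a universal constant C such that the following holds. Let ε < 1/2 and α < 1/2 be positive, let d be a positive integer, σ ≥ 0, let p be a polynomial of degree at most d, and let m ≥ C·d/ε be a positive integer. Suppose the samples (x_1,y_1),…,(x_n,y_n) are α-good for the size-m Chebyshev partition with respect to p and σ. For each j ∈ {1,…,m} let x̃_j ∈ I_j be arbitrary and let ỹ_j be a median of the multiset {y_i : x_i ∈ I_j}. Then any polynomial p̂ of degree at most d minimizing max_{j∈[m]} |q(x̃_j) − ỹ_j| over degree-d polynomials q satisfies ‖p̂ − p‖_∞ ≤ (2+ε)σ + ε·‖p‖_∞. -/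
/-!
View a polynomial `p` of degree at most `d` as the entire function `w ↦ p (cos w)`. Substituting
`z = exp (i w)` and clearing the pole at `0` gives the polynomial `z ^ d * p ((z + z⁻¹) / 2)`, which
is bounded by `‖p‖` on the unit circle, hence on the disc by the maximum principle; that is,
`|p (cos w)| ≤ exp (d * |Im w|) * ‖p‖`. Cauchy's estimate on discs of radius `1 / d` then bounds the
derivative on the real line by `e * d * ‖p‖`. The intervals of the Chebyshev partition have length
`π / m` in the variable `θ = arccos t`, so `p` oscillates by at most `δ * ‖p‖` on each of them,
where `δ = e * d * π / m`.

In each interval more than half of the samples are inliers, so the median value lies between two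
inlier values and differs from `p` by at most `σ + δ * ‖p‖` at every point of the interval. The fit
`phat` is at least as close to the medians as `p` is, so `|phat - p| ≤ 2 * (σ + δ * ‖p‖)` at the
chosen points. Every point of `[-1, 1]` shares an interval with a chosen point, which gives
`‖phat - p‖ ≤ 2 * (σ + δ * ‖p‖) + δ * ‖phat - p‖`.
-/

open Polynomial

open Classical in
/-- `t` is a median of the multiset `{v i : i ∈ s}`. -/
def IsMedian {n : ℕ} (s : Finset (Fin n)) (v : Fin n → ℝ) (t : ℝ) : Prop :=
  s.card ≤ 2 * (s.filter (fun i => v i ≤ t)).card ∧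
  s.card ≤ 2 * (s.filter (fun i => t ≤ v i)).card

/-- The sup-norm of `f` over `[-1, 1]`. -/
noncomputable def supNorm (f : ℝ → ℝ) : ℝ := ⨆ x : Set.Icc (-1 : ℝ) 1, |f x|

section SupNorm

variable {f : ℝ → ℝ}

lemma supNorm_nonneg (f : ℝ → ℝ) : 0 ≤ supNorm f :=
  Real.iSup_nonneg fun _ => abs_nonneg _

lemma abs_le_supNorm (hf : ContinuousOn f (Set.Icc (-1) 1)) {t : ℝ}
    (ht : t ∈ Set.Icc (-1 : ℝ) 1) : |f t| ≤ supNorm f := by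
  have hcont : Continuous fun x : Set.Icc (-1 : ℝ) 1 => |f x| := hf.domRestrict.abs
  exact le_ciSup (isCompact_range hcont).bddAbove ⟨t, ht⟩

lemma supNorm_le {B : ℝ} (hB : ∀ t ∈ Set.Icc (-1 : ℝ) 1, |f t| ≤ B) : supNorm f ≤ B := by
  have : Nonempty (Set.Icc (-1 : ℝ) 1) := Set.nonempty_Icc_subtype (by norm_num)
  exact ciSup_le fun t => hB t t.2

end SupNorm

/-- The polynomial `z ^ d * p ((z + z⁻¹) / 2)`, for `p` of degree at most `d`. It pulls `p` back
along the Joukowski map `z ↦ (z + z⁻¹) / 2`, with the pole at `0` cleared. -/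
noncomputable def joukowskiLift (p : ℂ[X]) (d : ℕ) : ℂ[X] :=
  ∑ k ∈ Finset.range (d + 1), C (p.coeff k) * X ^ (d - k) * (C (1 / 2) * (X ^ 2 + 1)) ^ k

section Bernstein

variable {p : ℂ[X]} {d : ℕ} {M : ℝ}

lemma eval_joukowskiLift_exp (hp : p.natDegree ≤ d) (w : ℂ) :
    (joukowskiLift p d).eval (Complex.exp (w * Complex.I)) =
      Complex.exp (w * Complex.I) ^ d * p.eval (Complex.cos w) := by
  set z := Complex.exp (w * Complex.I) with hz
  have hcos : 1 / 2 * (z ^ 2 + 1) = z * Complex.cos w := by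
    have hz0 : z ≠ 0 := Complex.exp_ne_zero _
    rw [Complex.cos, neg_mul, Complex.exp_neg, ← hz]
    field
  rw [joukowskiLift, eval_finsetSum, eval_eq_sum_range' (Nat.lt_succ_of_le hp), Finset.mul_sum]
  refine Finset.sum_congr rfl fun k hk => ?_
  have hkd : k ≤ d := Nat.lt_succ_iff.mp (Finset.mem_range.mp hk)
  simp only [eval_mul, eval_C, eval_pow, eval_X, eval_add, eval_one, hcos]
  rw [mul_pow, ← pow_sub_mul_pow z hkd]
  ring

lemma norm_eval_joukowskiLift_le (hp : p.natDegree ≤ d)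
    (hM : ∀ t ∈ Set.Icc (-1 : ℝ) 1, ‖p.eval (t : ℂ)‖ ≤ M) {z : ℂ} (hz : ‖z‖ ≤ 1) :
    ‖(joukowskiLift p d).eval z‖ ≤ M := by
  refine Complex.norm_le_of_forall_mem_frontier_norm_le (U := Metric.ball (0 : ℂ) 1)
    Metric.isBounded_ball (joukowskiLift p d).differentiable.diffContOnCl (fun u hu => ?_) ?_
  · have hu_norm : ‖u‖ = 1 := by simpa [frontier_ball] using hu
    have hu_exp : u = Complex.exp (u.arg * Complex.I) := by
      simpa [hu_norm] using (Complex.norm_mul_exp_arg_mul_I u).symm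
    rw [hu_exp, eval_joukowskiLift_exp hp, norm_mul, norm_pow, Complex.norm_exp_ofReal_mul_I,
      one_pow, one_mul, ← Complex.ofReal_cos]
    exact hM _ (Real.cos_mem_Icc _)
  · simpa [closure_ball] using hz

lemma norm_eval_cos_le_of_im_nonneg (hp : p.natDegree ≤ d)
    (hM : ∀ t ∈ Set.Icc (-1 : ℝ) 1, ‖p.eval (t : ℂ)‖ ≤ M) {w : ℂ} (hw : 0 ≤ w.im) :
    ‖p.eval (Complex.cos w)‖ ≤ Real.exp (d * w.im) * M := by
  have hnorm : ‖Complex.exp (w * Complex.I)‖ = Real.exp (-w.im) := by simp [Complex.norm_exp]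
  have hlift := norm_eval_joukowskiLift_le hp hM (z := Complex.exp (w * Complex.I))
    (by simpa [hnorm] using hw)
  rw [eval_joukowskiLift_exp hp, norm_mul, norm_pow, hnorm, ← Real.exp_nat_mul, mul_neg,
    Real.exp_neg] at hlift
  rwa [← inv_mul_le_iff₀ (Real.exp_pos _)]

lemma norm_eval_cos_le (hp : p.natDegree ≤ d)
    (hM : ∀ t ∈ Set.Icc (-1 : ℝ) 1, ‖p.eval (t : ℂ)‖ ≤ M) (w : ℂ) :
    ‖p.eval (Complex.cos w)‖ ≤ Real.exp (d * |w.im|) * M := by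
  rcases le_total 0 w.im with hw | hw
  · simpa [abs_of_nonneg hw] using norm_eval_cos_le_of_im_nonneg hp hM hw
  · simpa [abs_of_nonpos hw] using
      norm_eval_cos_le_of_im_nonneg hp hM (w := -w) (by simpa using hw)

lemma differentiable_eval_cos (p : ℂ[X]) : Differentiable ℂ fun w => p.eval (Complex.cos w) :=
  p.differentiable.comp Complex.differentiable_cos

lemma norm_deriv_eval_cos_le (hp : p.natDegree ≤ d)
    (hM : ∀ t ∈ Set.Icc (-1 : ℝ) 1, ‖p.eval (t : ℂ)‖ ≤ M) (θ : ℝ) :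
    ‖deriv (fun w => p.eval (Complex.cos w)) (θ : ℂ)‖ ≤ Real.exp 1 * d * M := by
  obtain rfl | hd := d.eq_zero_or_pos
  · rw [eq_C_of_natDegree_le_zero hp]
    simp
  have hM0 : 0 ≤ M := (norm_nonneg _).trans (hM 0 (by norm_num))
  have hd' : (0 : ℝ) < d := Nat.cast_pos.mpr hd
  have hsphere : ∀ z ∈ Metric.sphere (θ : ℂ) (1 / d),
      ‖p.eval (Complex.cos z)‖ ≤ Real.exp 1 * M := fun z hz => by
    have him : |z.im| ≤ 1 / d := by
      simpa [← mem_sphere_iff_norm.mp hz] using Complex.abs_im_le_norm (z - θ)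
    have hdim : d * |z.im| ≤ 1 := by rwa [le_div_iff₀' hd'] at him
    exact (norm_eval_cos_le hp hM z).trans (by gcongr)
  calc _ ≤ Real.exp 1 * M / (1 / d) := Complex.norm_deriv_le_of_forall_mem_sphere_norm_le
        (by positivity) (differentiable_eval_cos p).diffContOnCl hsphere
    _ = Real.exp 1 * d * M := by field

lemma norm_eval_cos_sub_eval_cos_le (hp : p.natDegree ≤ d)
    (hM : ∀ t ∈ Set.Icc (-1 : ℝ) 1, ‖p.eval (t : ℂ)‖ ≤ M) (a b : ℝ) :
    ‖p.eval (Real.cos a : ℂ) - p.eval (Real.cos b : ℂ)‖ ≤ Real.exp 1 * d * M * |a - b| := by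
  simpa using Convex.norm_image_sub_le_of_norm_hasDerivWithin_le (𝕜 := ℝ) (s := Set.univ)
    (f := fun θ : ℝ => p.eval (Complex.cos θ))
    (fun θ _ => (differentiable_eval_cos p θ).hasDerivAt.comp_ofReal.hasDerivWithinAt)
    (fun θ _ => norm_deriv_eval_cos_le hp hM θ) convex_univ (Set.mem_univ b) (Set.mem_univ a)

end Bernstein

lemma abs_eval_cos_sub_eval_cos_le {p : ℝ[X]} {d : ℕ} (hp : p.natDegree ≤ d) (a b : ℝ) :
    |p.eval (Real.cos a) - p.eval (Real.cos b)| ≤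
      Real.exp 1 * d * supNorm (fun t => p.eval t) * |a - b| := by
  have heval (t : ℝ) : (p.map (algebraMap ℝ ℂ)).eval (t : ℂ) = ((p.eval t : ℝ) : ℂ) :=
    eval_map_apply (algebraMap ℝ ℂ) t
  have hM : ∀ t ∈ Set.Icc (-1 : ℝ) 1,
      ‖(p.map (algebraMap ℝ ℂ)).eval (t : ℂ)‖ ≤ supNorm fun t => p.eval t := fun t ht => by
    rw [heval, Complex.norm_real]
    exact abs_le_supNorm p.continuousOn ht
  simpa only [heval, ← Complex.ofReal_sub, Complex.norm_real, Real.norm_eq_abs] using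
    norm_eval_cos_sub_eval_cos_le (natDegree_map_le.trans hp) hM a b

section ChebyshevPartition

variable {d m : ℕ}

lemma chebInterval_subset_image_cos (m j : ℕ) :
    chebInterval m j ⊆
      Real.cos '' Set.Icc (Real.pi * ((j : ℝ) - 1) / m) (Real.pi * j / m) :=
  intermediate_value_Icc' (by gcongr; linarith) Real.continuous_cos.continuousOn

lemma exists_lt_mem_Icc_succ {α : Type*} [LinearOrder α] {f : ℕ → α} {t : α} (hm : 0 < m)
    (ht : t ∈ Set.Icc (f m) (f 0)) : ∃ k < m, t ∈ Set.Icc (f (k + 1)) (f k) := by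
  induction m, hm using Nat.le_induction with
  | base => exact ⟨0, one_pos, ht⟩
  | succ m _ ih =>
    rcases le_total t (f m) with htm | htm
    · exact ⟨m, m.lt_succ_self, ht.1, htm⟩
    · obtain ⟨k, hk, htk⟩ := ih ⟨htm, ht.2⟩
      exact ⟨k, hk.trans m.lt_succ_self, htk⟩

lemma exists_mem_chebInterval (hm : 0 < m) {t : ℝ} (ht : t ∈ Set.Icc (-1 : ℝ) 1) :
    ∃ j ∈ Finset.Icc 1 m, t ∈ chebInterval m j := by
  have hm' : (m : ℝ) ≠ 0 := Nat.cast_ne_zero.mpr hm.ne'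
  obtain ⟨k, hk, htk⟩ := exists_lt_mem_Icc_succ (f := fun j : ℕ => Real.cos (Real.pi * j / m)) hm
    (t := t) (by simpa [hm'] using ht)
  exact ⟨k + 1, Finset.mem_Icc.mpr ⟨k.succ_pos, hk⟩, by simpa [chebInterval] using htk⟩

/-- A bound, relative to the sup-norm, for the oscillation of a polynomial of degree at most `d` on
an interval of the size-`m` Chebyshev partition. The factor `exp 1` is that of
`abs_eval_cos_sub_eval_cos_le`. -/
noncomputable def chebOscillation (d m : ℕ) : ℝ := Real.exp 1 * d * (Real.pi / m)

lemma chebOscillation_le {ε : ℝ} (hε : 0 < ε) (hm : 0 < m)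
    (hC : 4 * Real.exp 1 * Real.pi * d / ε ≤ m) : chebOscillation d m ≤ ε / 4 := by
  rw [div_le_iff₀ hε] at hC
  rw [chebOscillation, ← mul_div_assoc, div_le_iff₀ (Nat.cast_pos.mpr hm)]
  linarith

lemma abs_eval_sub_eval_le_of_mem_chebInterval {p : ℝ[X]} (hp : p.natDegree ≤ d) {j : ℕ}
    {s t : ℝ} (hs : s ∈ chebInterval m j) (ht : t ∈ chebInterval m j) :
    |p.eval s - p.eval t| ≤ chebOscillation d m * supNorm (fun t => p.eval t) := by
  obtain ⟨a, ha, rfl⟩ := chebInterval_subset_image_cos m j hs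
  obtain ⟨b, hb, rfl⟩ := chebInterval_subset_image_cos m j ht
  have hab : |a - b| ≤ Real.pi / m := (Real.dist_le_of_mem_Icc ha hb).trans_eq (by ring)
  have := supNorm_nonneg fun t => p.eval t
  calc |p.eval (Real.cos a) - p.eval (Real.cos b)|
      ≤ Real.exp 1 * d * supNorm (fun t => p.eval t) * |a - b| :=
        abs_eval_cos_sub_eval_cos_le hp a b
    _ ≤ Real.exp 1 * d * supNorm (fun t => p.eval t) * (Real.pi / m) := by gcongr
    _ = chebOscillation d m * supNorm (fun t => p.eval t) := by rw [chebOscillation]; ring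

lemma supNorm_eval_le_of_forall_abs_eval_le {q : ℝ[X]} (hq : q.natDegree ≤ d) (hm : 0 < m)
    {xt : ℕ → ℝ} (hxt : ∀ j ∈ Finset.Icc 1 m, xt j ∈ chebInterval m j) {η : ℝ}
    (hη : ∀ j ∈ Finset.Icc 1 m, |q.eval (xt j)| ≤ η) :
    supNorm (fun t => q.eval t) ≤ η + chebOscillation d m * supNorm (fun t => q.eval t) := by
  refine supNorm_le fun t ht => ?_
  obtain ⟨j, hj, htj⟩ := exists_mem_chebInterval hm ht
  calc |q.eval t| ≤ |q.eval (xt j)| + |q.eval t - q.eval (xt j)| :=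
        sub_le_iff_le_add'.mp (abs_sub_abs_le_abs_sub _ _)
    _ ≤ _ := add_le_add (hη j hj) (abs_eval_sub_eval_le_of_mem_chebInterval hq htj (hxt j hj))

end ChebyshevPartition

section Median

lemma exists_mem_and_not_of_two_mul_card_lt {ι : Type*} {s : Finset ι} {P Q : ι → Prop}
    [DecidablePred P] [DecidablePred Q] (hQ : 2 * (s.filter Q).card < s.card)
    (hP : s.card ≤ 2 * (s.filter P).card) : ∃ i ∈ s, P i ∧ ¬ Q i := by
  obtain ⟨i, hiP, hiQ⟩ := Finset.exists_mem_notMem_of_card_lt_card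
    (show (s.filter Q).card < (s.filter P).card by omega)
  grind

variable {n m j : ℕ} {x y : Fin n → ℝ} {p : ℝ[X]} {σ α : ℝ}

open Classical in
lemma AlphaGood.two_mul_card_outliers_lt (hgood : AlphaGood m x y p σ α) (hα : α ≤ 1 / 2)
    (hj : j ∈ Finset.Icc 1 m) :
    2 * ((sampleSet m j x).filter fun i => σ < |y i - p.eval (x i)|).card <
      (sampleSet m j x).card := by
  have hlt := (hgood j hj).2
  have hhalf : α * ((sampleSet m j x).card : ℝ) ≤ 1 / 2 * (sampleSet m j x).card := by gcongr
  rw [← Nat.cast_lt (α := ℝ), Nat.cast_mul, Nat.cast_ofNat]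
  linarith

lemma AlphaGood.abs_sub_median_le (hgood : AlphaGood m x y p σ α) (hα : α ≤ 1 / 2)
    (hj : j ∈ Finset.Icc 1 m) {v w η : ℝ} (hv : IsMedian (sampleSet m j x) y v)
    (hη : ∀ s ∈ chebInterval m j, |w - p.eval s| ≤ η) : |w - v| ≤ σ + η := by
  have hcard := hgood.two_mul_card_outliers_lt hα hj
  obtain ⟨i, hi, hyi, hi_inlier⟩ := exists_mem_and_not_of_two_mul_card_lt hcard hv.1
  obtain ⟨k, hk, hyk, hk_inlier⟩ := exists_mem_and_not_of_two_mul_card_lt hcard hv.2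
  have hηi := abs_le.mp (hη (x i) (by simpa [sampleSet] using hi))
  have hηk := abs_le.mp (hη (x k) (by simpa [sampleSet] using hk))
  have hσi := abs_le.mp (not_lt.mp hi_inlier)
  have hσk := abs_le.mp (not_lt.mp hk_inlier)
  exact abs_le.mpr ⟨by linarith, by linarith⟩

end Median

section Recovery

variable {n d m : ℕ} {x y : Fin n → ℝ} {p phat : ℝ[X]} {σ α : ℝ} {xt yt : ℕ → ℝ}

lemma supNorm_sub_le_add_chebOscillation_mul (hα : α ≤ 1 / 2) (hp : p.natDegree ≤ d) (hm : 0 < m)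
    (hgood : AlphaGood m x y p σ α) (hxt : ∀ j ∈ Finset.Icc 1 m, xt j ∈ chebInterval m j)
    (hyt : ∀ j ∈ Finset.Icc 1 m, IsMedian (sampleSet m j x) y (yt j))
    (hphat : phat.natDegree ≤ d)
    (hle : (Finset.Icc 1 m).sup' (Finset.nonempty_Icc.mpr hm)
        (fun j => |phat.eval (xt j) - yt j|) ≤
      (Finset.Icc 1 m).sup' (Finset.nonempty_Icc.mpr hm) (fun j => |p.eval (xt j) - yt j|)) :
    supNorm (fun t => phat.eval t - p.eval t) ≤
      2 * (σ + chebOscillation d m * supNorm (fun t => p.eval t)) +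
        chebOscillation d m * supNorm (fun t => phat.eval t - p.eval t) := by
  set η := σ + chebOscillation d m * supNorm (fun t => p.eval t)
  have hp_near : ∀ j ∈ Finset.Icc 1 m, |p.eval (xt j) - yt j| ≤ η := fun j hj =>
    hgood.abs_sub_median_le hα hj (hyt j hj) fun _ hs =>
      abs_eval_sub_eval_le_of_mem_chebInterval hp (hxt j hj) hs
  have hphat_near : ∀ j ∈ Finset.Icc 1 m, |phat.eval (xt j) - yt j| ≤ η :=
    (Finset.sup'_le_iff _ _).mp (hle.trans (Finset.sup'_le _ _ hp_near))
  have hnodes : ∀ j ∈ Finset.Icc 1 m, |(phat - p).eval (xt j)| ≤ 2 * η := fun j hj => by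
    rw [eval_sub, ← sub_sub_sub_cancel_right _ _ (yt j), two_mul]
    exact (abs_sub _ _).trans (add_le_add (hphat_near j hj) (hp_near j hj))
  simpa only [eval_sub] using supNorm_eval_le_of_forall_abs_eval_le
    ((natDegree_sub_le _ _).trans (max_le hphat hp)) hm hxt hnodes

theorem median_recovery_general {ε : ℝ} (hε : 0 < ε) (hε2 : ε ≤ 2) (hα : α ≤ 1 / 2) (hσ : 0 ≤ σ)
    (hp : p.natDegree ≤ d) (hm : 0 < m) (hC : 4 * Real.exp 1 * Real.pi * d / ε ≤ m)
    (hgood : AlphaGood m x y p σ α) (hxt : ∀ j ∈ Finset.Icc 1 m, xt j ∈ chebInterval m j)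
    (hyt : ∀ j ∈ Finset.Icc 1 m, IsMedian (sampleSet m j x) y (yt j))
    (hphat : phat.natDegree ≤ d)
    (hle : (Finset.Icc 1 m).sup' (Finset.nonempty_Icc.mpr hm)
        (fun j => |phat.eval (xt j) - yt j|) ≤
      (Finset.Icc 1 m).sup' (Finset.nonempty_Icc.mpr hm) (fun j => |p.eval (xt j) - yt j|)) :
    supNorm (fun t => phat.eval t - p.eval t) ≤
      (2 + ε) * σ + ε * supNorm (fun t => p.eval t) := by
  have hE0 := supNorm_nonneg fun t => phat.eval t - p.eval t
  have hM0 := supNorm_nonneg fun t => p.eval t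
  have hE := supNorm_sub_le_add_chebOscillation_mul hα hp hm hgood hxt hyt hphat hle
  set E := supNorm fun t => phat.eval t - p.eval t
  set M := supNorm fun t => p.eval t
  have hδ := chebOscillation_le hε hm hC
  have hε4 : 0 < 1 - ε / 4 := by linarith
  refine le_of_mul_le_mul_left ?_ hε4
  have hslack : 0 ≤ ε / 4 * (2 - ε) * (σ + M) :=
    mul_nonneg (mul_nonneg (by positivity) (sub_nonneg.mpr hε2)) (add_nonneg hσ hM0)
  calc (1 - ε / 4) * E ≤ 2 * (σ + ε / 4 * M) := by
        have hδM := mul_le_mul_of_nonneg_right hδ hM0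
        have hδE := mul_le_mul_of_nonneg_right hδ hE0
        linarith
    _ ≤ (1 - ε / 4) * ((2 + ε) * σ + ε * M) := by linarith

end Recovery

theorem median_recovery :
    ∃ C : ℝ, 0 < C ∧
      ∀ (ε α : ℝ), 0 < ε → ε < 1 / 2 → 0 < α → α < 1 / 2 →
      ∀ (d : ℕ), 0 < d → ∀ (σ : ℝ), 0 ≤ σ →
      ∀ (p : Polynomial ℝ), p.natDegree ≤ d →
      ∀ (m : ℕ) (hm : 0 < m), C * d / ε ≤ (m : ℝ) →
      ∀ (n : ℕ) (x y : Fin n → ℝ), (∀ i, x i ∈ Set.Icc (-1 : ℝ) 1) →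
      AlphaGood m x y p σ α →
      ∀ (xt yt : ℕ → ℝ),
      (∀ j ∈ Finset.Icc 1 m, xt j ∈ chebInterval m j) →
      (∀ j ∈ Finset.Icc 1 m, IsMedian (sampleSet m j x) y (yt j)) →
      ∀ phat : Polynomial ℝ, phat.natDegree ≤ d →
      (∀ q : Polynomial ℝ, q.natDegree ≤ d →
        (Finset.Icc 1 m).sup' (Finset.nonempty_Icc.mpr hm)
            (fun j => |phat.eval (xt j) - yt j|) ≤
          (Finset.Icc 1 m).sup' (Finset.nonempty_Icc.mpr hm)
            (fun j => |q.eval (xt j) - yt j|)) →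
      supNorm (fun t => phat.eval t - p.eval t) ≤
        (2 + ε) * σ + ε * supNorm (fun t => p.eval t) :=
  ⟨4 * Real.exp 1 * Real.pi, by positivity,
    fun _ _ hε hε2 _ hα _ _ _ hσ p hp _ hm hC _ _ _ _ hgood _ _ hxt hyt _ hphat hmin =>
      median_recovery_general hε (by linarith) hα.le hσ hp hm hC hgood hxt hyt hphat (hmin p hp)⟩
end

section
/- For every polynomial e of degree at most d, one has max_{x∈[-1,1]} |e(x)| ≤ (d+1)² · ∫_{-1}^1 |e(x)| dx. -/
open Polynomial

/-!
Among the polynomials of degree at most `n` bounded by `1` on `[-1, 1]`, the Chebyshev polynomial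
`T n` has the largest derivative at the endpoint `1`, namely `n ^ 2`. A primitive of `e` whose
values at `a` and `b` are opposite is bounded on `[a, b]` by half the integral of `|e|`, so after
rescaling `(b - a) * |e b|` and `(b - a) * |e a|` are at most `(d + 1) ^ 2` times that integral. A
point `x` of `[a, b]` is an endpoint of both `[a, x]` and `[x, b]`: adding the two endpoint bounds
gives `(b - a) * |e x| ≤ (d + 1) ^ 2 * ∫ |e|`, which on `[-1, 1]` is better than needed by a
factor of two.
-/

open Set

lemma exists_derivative_eq_and_natDegree_le {K : Type*} [DivisionRing K] [CharZero K] (p : K[X]) :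
    ∃ F : K[X], derivative F = p ∧ F.natDegree ≤ p.natDegree + 1 := by
  refine ⟨∑ k ∈ p.support, monomial (k + 1) (p.coeff k / (k + 1)), ?_, ?_⟩
  · rw [derivative_sum]
    conv_rhs => rw [p.as_sum_support]
    refine Finset.sum_congr rfl fun k _ => ?_
    have hk : (k : K) + 1 ≠ 0 := k.cast_add_one_ne_zero
    rw [derivative_monomial, Nat.cast_add_one, div_mul_cancel₀ _ hk, Nat.add_sub_cancel]
  · refine natDegree_sum_le_of_forall_le _ _ fun k hk => (natDegree_monomial_le _).trans ?_
    exact Nat.add_le_add_right (le_natDegree_of_mem_supp k hk) 1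

lemma norm_sub_midpoint_le_half_abs_integral_norm {E : Type*} [NormedAddCommGroup E]
    [NormedSpace ℝ E] [CompleteSpace E] {f f' : ℝ → E} {a b x : ℝ}
    (hderiv : ∀ t ∈ uIcc a b, HasDerivAt f (f' t) t)
    (hint : IntervalIntegrable f' MeasureTheory.volume a b) (hx : x ∈ uIcc a b) :
    ‖f x - midpoint ℝ (f a) (f b)‖ ≤ |∫ t in a..b, ‖f' t‖| / 2 := by
  wlog hab : a ≤ b generalizing a b
  · rw [midpoint_comm, intervalIntegral.integral_symm, abs_neg]
    exact this (uIcc_comm a b ▸ hderiv) hint.symm (uIcc_comm a b ▸ hx) (le_of_not_ge hab)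
  have norm_increment_le {u v : ℝ} (huv : u ≤ v) (hsub : uIcc u v ⊆ uIcc a b) :
      ‖f v - f u‖ ≤ ∫ t in u..v, ‖f' t‖ := by
    rw [← intervalIntegral.integral_eq_sub_of_hasDerivAt (fun t ht => hderiv t (hsub ht))
      (hint.mono_set hsub)]
    exact intervalIntegral.norm_integral_le_integral_norm huv
  have hax_sub : uIcc a x ⊆ uIcc a b := uIcc_subset_uIcc_left hx
  have hxb_sub : uIcc x b ⊆ uIcc a b := uIcc_subset_uIcc_right hx
  obtain ⟨hax_le, hxb_le⟩ := uIcc_of_le hab ▸ hx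
  have hsplit : f x - midpoint ℝ (f a) (f b) = (2⁻¹ : ℝ) • ((f x - f a) - (f b - f x)) := by
    rw [midpoint_eq_smul_add, invOf_eq_inv]
    module
  calc ‖f x - midpoint ℝ (f a) (f b)‖
      = ‖(f x - f a) - (f b - f x)‖ / 2 := by
        rw [hsplit, norm_smul, Real.norm_of_nonneg (by norm_num), inv_mul_eq_div]
    _ ≤ ((∫ t in a..x, ‖f' t‖) + ∫ t in x..b, ‖f' t‖) / 2 := by
        gcongr
        exact norm_sub_le_of_le (norm_increment_le hax_le hax_sub)
          (norm_increment_le hxb_le hxb_sub)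
    _ = (∫ t in a..b, ‖f' t‖) / 2 := by
        rw [intervalIntegral.integral_add_adjacent_intervals
          (hint.mono_set hax_sub).norm (hint.mono_set hxb_sub).norm]
    _ ≤ |∫ t in a..b, ‖f' t‖| / 2 := by
        gcongr
        exact le_abs_self _

section Markov

variable {n : ℕ} {P : ℝ[X]} {M : ℝ}

lemma abs_eval_iterate_derivative_le_mul_chebyshev (hP : P.natDegree ≤ n)
    (hM : ∀ t ∈ Icc (-1 : ℝ) 1, |P.eval t| ≤ M) (k : ℕ) {x : ℝ} (hx : 1 ≤ x) :
    |(derivative^[k] P).eval x| ≤ M * (derivative^[k] (Chebyshev.T ℝ n)).eval x := by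
  have hM_nonneg : 0 ≤ M := (abs_nonneg _).trans (hM 0 (by norm_num))
  obtain rfl | hM_pos := hM_nonneg.eq_or_lt
  · have hzero : P = 0 := P.eq_zero_of_infinite_isRoot <|
      (Icc_infinite (by norm_num : (-1 : ℝ) < 1)).mono fun t ht => abs_nonpos_iff.mp (hM t ht)
    simp [hzero]
  have eval_le {c : ℝ} (hc : |c| = M⁻¹) :
      c * (derivative^[k] P).eval x ≤ (derivative^[k] (Chebyshev.T ℝ n)).eval x := by
    have hbound : ∀ t ∈ Icc (-1 : ℝ) 1, |(C c * P).eval t| ≤ 1 := fun t ht => by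
      rw [eval_C_mul, abs_mul, hc, inv_mul_le_one₀ hM_pos]
      exact hM t ht
    simpa only [iterate_derivative_C_mul, eval_C_mul] using
      Chebyshev.eval_iterate_derivative_le_of_forall_abs_le_one (k := k) hx
        (natDegree_le_iff_degree_le.mp ((natDegree_C_mul_le c P).trans hP)) hbound
  have hinv : |M⁻¹| = M⁻¹ := abs_of_pos (inv_pos.mpr hM_pos)
  rw [← inv_mul_le_iff₀ hM_pos, ← hinv, ← abs_mul]
  refine abs_le'.mpr ⟨eval_le hinv, ?_⟩
  rw [← neg_mul]
  exact eval_le ((abs_neg _).trans hinv)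

lemma abs_eval_derivative_one_le (hP : P.natDegree ≤ n)
    (hM : ∀ t ∈ Icc (-1 : ℝ) 1, |P.eval t| ≤ M) :
    |(derivative P).eval 1| ≤ M * n ^ 2 := by
  simpa only [Function.iterate_one, Chebyshev.derivative_T_eval_one, Int.cast_natCast] using
    abs_eval_iterate_derivative_le_mul_chebyshev hP hM 1 le_rfl

lemma abs_sub_mul_abs_eval_derivative_le {a b : ℝ} (hP : P.natDegree ≤ n)
    (hM : ∀ x ∈ uIcc a b, |P.eval x| ≤ M) :
    |b - a| * |(derivative P).eval b| ≤ 2 * M * n ^ 2 := by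
  set L : ℝ[X] := C ((b - a) / 2) * X + C ((a + b) / 2) with hL
  have eval_L (t : ℝ) : L.eval t = (b - a) / 2 * t + (a + b) / 2 := by simp [hL]
  have hdeg : (P.comp L).natDegree ≤ n := calc
    (P.comp L).natDegree ≤ P.natDegree * L.natDegree := natDegree_comp_le
    _ ≤ n * 1 := Nat.mul_le_mul hP natDegree_linear_le
    _ = n := mul_one n
  have hbound : ∀ t ∈ Icc (-1 : ℝ) 1, |(P.comp L).eval t| ≤ M := by
    intro t ht
    rw [eval_comp]
    refine hM _ (segment_eq_uIcc a b ▸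
      ⟨(1 - t) / 2, (1 + t) / 2, by linarith [ht.2], by linarith [ht.1], by ring, ?_⟩)
    rw [eval_L, smul_eq_mul, smul_eq_mul]
    ring
  have hderiv : (derivative (P.comp L)).eval 1 = (b - a) / 2 * (derivative P).eval b := by
    have hL_one : L.eval 1 = b := by rw [eval_L]; ring
    rw [derivative_comp, eval_mul, eval_comp, hL_one]
    simp [hL]
  have hmarkov := abs_eval_derivative_one_le hdeg hbound
  rw [hderiv, abs_mul, abs_div, abs_two] at hmarkov
  linarith

end Markov

section Nikolskii

variable {d : ℕ} {e : ℝ[X]}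

lemma abs_sub_mul_abs_eval_le_sq_mul_abs_integral_abs (he : e.natDegree ≤ d) (a b : ℝ) :
    |b - a| * |e.eval b| ≤ ((d : ℝ) + 1) ^ 2 * |∫ t in a..b, (|e.eval t|)| := by
  obtain ⟨F, rfl, hF⟩ := exists_derivative_eq_and_natDegree_le e
  set m : ℝ := midpoint ℝ (F.eval a) (F.eval b)
  have hdeg : (F - C m).natDegree ≤ d + 1 := by
    rw [natDegree_sub_C]
    exact hF.trans (Nat.add_le_add_right he 1)
  have hbound : ∀ x ∈ uIcc a b,
      |(F - C m).eval x| ≤ |∫ t in a..b, (|(derivative F).eval t|)| / 2 := fun x hx => by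
    rw [eval_sub, eval_C]
    exact norm_sub_midpoint_le_half_abs_integral_norm (fun t _ => F.hasDerivAt t)
      ((derivative F).continuous.intervalIntegrable a b) hx
  have hmarkov := abs_sub_mul_abs_eval_derivative_le hdeg hbound
  rw [derivative_sub, derivative_C, sub_zero, Nat.cast_add_one] at hmarkov
  linarith

lemma sub_mul_abs_eval_le_sq_mul_integral_abs (he : e.natDegree ≤ d) {a b x : ℝ}
    (hx : x ∈ Icc a b) :
    (b - a) * |e.eval x| ≤ ((d : ℝ) + 1) ^ 2 * ∫ t in a..b, |e.eval t| := by
  have hint (u v : ℝ) : IntervalIntegrable (fun t => |e.eval t|) MeasureTheory.volume u v :=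
    e.continuous.abs.intervalIntegrable u v
  have hnonneg {u v : ℝ} (huv : u ≤ v) : 0 ≤ ∫ t in u..v, |e.eval t| :=
    intervalIntegral.integral_nonneg huv fun _ _ => abs_nonneg _
  have hleft : (x - a) * |e.eval x| ≤ ((d : ℝ) + 1) ^ 2 * ∫ t in a..x, |e.eval t| := by
    simpa only [abs_of_nonneg (sub_nonneg.mpr hx.1), abs_of_nonneg (hnonneg hx.1)] using
      abs_sub_mul_abs_eval_le_sq_mul_abs_integral_abs he a x
  have hright : (b - x) * |e.eval x| ≤ ((d : ℝ) + 1) ^ 2 * ∫ t in x..b, |e.eval t| := by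
    simpa only [abs_sub_comm x b, intervalIntegral.integral_symm x b, abs_neg,
      abs_of_nonneg (sub_nonneg.mpr hx.2), abs_of_nonneg (hnonneg hx.2)] using
      abs_sub_mul_abs_eval_le_sq_mul_abs_integral_abs he b x
  rw [← intervalIntegral.integral_add_adjacent_intervals (hint a x) (hint x b)]
  linarith

end Nikolskii

theorem sup_le_sq_deg_mul_l1_general {d : ℕ} {e : ℝ[X]} (he : e.natDegree ≤ d) {a b : ℝ}
    (hab : a < b) :
    (⨆ x : Icc a b, |e.eval (x : ℝ)|) ≤
      ((d : ℝ) + 1) ^ 2 / (b - a) * ∫ x in a..b, |e.eval x| := by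
  have : Nonempty (Icc a b) := (nonempty_Icc.mpr hab.le).to_subtype
  refine ciSup_le fun x => ?_
  rw [div_mul_eq_mul_div, le_div_iff₀' (sub_pos.mpr hab)]
  exact sub_mul_abs_eval_le_sq_mul_integral_abs he x.2

/-- Markov-brothers' style bound: for a polynomial `e` of degree at most `d`,
`max_{x ∈ [-1,1]} |e(x)| ≤ (d+1)² ∫_{-1}^1 |e(x)| dx`. -/
theorem sup_le_sq_deg_mul_l1 (d : ℕ) (e : Polynomial ℝ) (he : e.natDegree ≤ d) :
    (⨆ x : Set.Icc (-1 : ℝ) 1, |e.eval (x : ℝ)|) ≤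
      ((d : ℝ) + 1) ^ 2 * ∫ x in (-1 : ℝ)..1, |e.eval x| := by
  refine (sup_le_sq_deg_mul_l1_general he (by norm_num)).trans
    (mul_le_mul_of_nonneg_right (div_le_self (by positivity) (by norm_num)) ?_)
  exact intervalIntegral.integral_nonneg (by norm_num) fun _ _ => abs_nonneg _
end

section
/- For every polynomial p of degree at most d (with d ≥ 1) and every q > 0, one has ∫_{-1}^1 |p(x)|^q dx ≥ (max_{x∈[-1,1]} |p(x)|)^q / (2^{q+1}·d²). -/
open Polynomial

/-!
Let `M` be the maximum of `|p|`. Expanding `p` in the Lagrange basis at the extremal points of the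
Chebyshev polynomial `T_d` shows that, between the two rightmost of these points, `p` falls below
`p 1` by at most `M (1 - T_d y)`: all the coefficients of `p 1 - p y` have the signs for which `T_d`
is extremal. Since `T_d' ≤ d²` on `[-1, 1]`, this gives `|p 1 - p y| ≤ M d² (1 - y)`, an endpoint
form of Markov's inequality, which holds trivially further to the left, where the right-hand side is
at least `2 M`. Rescaling the two segments from a maximum point to the ends of the interval yields
`M / 2 ≤ |p|` on an interval whose length is `1 / (4 d²)` times that of the whole interval.
-/

open Set AffineMap

lemma chebyshevNode_le_node_one {n j : ℕ} (hj : j ≠ 0) (hjn : j ≤ n) :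
    Chebyshev.node n j ≤ Chebyshev.node n 1 :=
  (Chebyshev.strictAntiOn_node n).antitoneOn
    (Finset.mem_coe.mpr (Finset.mem_range_succ_iff.mpr (by lia)))
    (Finset.mem_coe.mpr (Finset.mem_range_succ_iff.mpr hjn)) (Nat.one_le_iff_ne_zero.mpr hj)

/-- The `i`-th Lagrange basis polynomial for the `n + 1` extremal points
`Chebyshev.node n 0 > ⋯ > Chebyshev.node n n` of the Chebyshev polynomial `Tₙ`. -/
noncomputable def chebyshevNodeBasis (n i : ℕ) : ℝ[X] :=
  Lagrange.basis (Finset.range (n + 1)) (Chebyshev.node n) i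

namespace chebyshevNodeBasis

lemma eval_eq_prod_div (n i : ℕ) (y : ℝ) :
    (chebyshevNodeBasis n i).eval y =
      (∏ j ∈ (Finset.range (n + 1)).erase i, (y - Chebyshev.node n j)) /
        ∏ j ∈ (Finset.range (n + 1)).erase i, (Chebyshev.node n i - Chebyshev.node n j) := by
  simp only [chebyshevNodeBasis, Lagrange.basis, Lagrange.basisDivisor, eval_prod, eval_mul,
    eval_C, eval_sub, eval_X, Finset.prod_mul_distrib, Finset.prod_inv_distrib]
  rw [mul_comm, div_eq_mul_inv]

lemma eval_one_eq_ite (n i : ℕ) : (chebyshevNodeBasis n i).eval 1 = if i = 0 then 1 else 0 := by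
  have h0 : 0 ∈ Finset.range (n + 1) := by simp
  nth_rw 1 [chebyshevNodeBasis, ← Chebyshev.node_eq_one (n := n)]
  split_ifs with hi
  · rw [hi]
    exact Lagrange.eval_basis_self (Chebyshev.strictAntiOn_node n).injOn h0
  · exact Lagrange.eval_basis_of_ne hi h0

lemma eval_sub_eval_eq_sumNodes {n : ℕ} {P : ℝ[X]} (hP : P.degree ≤ n) (x y : ℝ) :
    P.eval x - P.eval y = Chebyshev.sumNodes n
      (fun i ↦ (chebyshevNodeBasis n i).eval x - (chebyshevNodeBasis n i).eval y) P := by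
  have hcard : P.degree < (Finset.range (n + 1)).card := by
    rw [Finset.card_range]
    exact hP.trans_lt (by exact_mod_cast n.lt_succ_self)
  have hinterp (z : ℝ) : P.eval z = ∑ i ∈ Finset.range (n + 1),
      P.eval (Chebyshev.node n i) * (chebyshevNodeBasis n i).eval z := by
    conv_lhs => rw [Lagrange.eq_interpolate (Chebyshev.strictAntiOn_node n).injOn hcard]
    simp only [Lagrange.interpolate_apply, eval_finsetSum, eval_mul, eval_C, chebyshevNodeBasis]
  simp only [hinterp x, hinterp y, ← Finset.sum_sub_distrib, Chebyshev.sumNodes,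
    Nat.range_succ_eq_Iic, mul_sub]

variable {n i : ℕ} {y : ℝ}

lemma eval_zero_le_one (hy : y ∈ Icc (Chebyshev.node n 1) 1) :
    (chebyshevNodeBasis n 0).eval y ≤ 1 := by
  rw [eval_eq_prod_div, ← Finset.prod_div_distrib, Chebyshev.node_eq_one]
  have hle {j : ℕ} (hj : j ∈ (Finset.range (n + 1)).erase 0) : Chebyshev.node n j ≤ y :=
    (chebyshevNode_le_node_one (Finset.ne_of_mem_erase hj)
      (Finset.mem_range_succ_iff.mp (Finset.mem_of_mem_erase hj))).trans hy.1
  refine Finset.prod_le_one (fun j hj ↦ ?_) fun j hj ↦ ?_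
  · exact div_nonneg (by linarith [hle hj]) (by linarith [hle hj, hy.2])
  · exact div_le_one_of_le₀ (by linarith [hy.2]) (by linarith [hle hj, hy.2])

lemma neg_one_pow_mul_eval_nonpos (hi : i ≤ n) (hi0 : i ≠ 0)
    (hy : y ∈ Icc (Chebyshev.node n 1) 1) :
    (-1) ^ i * (chebyshevNodeBasis n i).eval y ≤ 0 := by
  have hnum : ∏ j ∈ (Finset.range (n + 1)).erase i, (y - Chebyshev.node n j) ≤ 0 := by
    have h0 : 0 ∈ (Finset.range (n + 1)).erase i := by simp [hi0.symm]
    rw [← Finset.mul_prod_erase _ _ h0, Chebyshev.node_eq_one]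
    refine mul_nonpos_of_nonpos_of_nonneg (by linarith [hy.2]) (Finset.prod_nonneg fun j hj ↦ ?_)
    simp only [Finset.mem_erase, Finset.mem_range_succ_iff] at hj
    linarith [chebyshevNode_le_node_one hj.1 hj.2.2, hy.1]
  have hden := Chebyshev.zero_lt_prod_node_sub_node hi
  rw [eval_eq_prod_div]
  rcases neg_one_pow_eq_or ℝ i with h | h <;> rw [h] at hden ⊢
  · rw [one_mul] at hden ⊢
    exact div_nonpos_of_nonpos_of_nonneg hnum hden.le
  · rw [neg_one_mul] at hden ⊢
    exact neg_nonpos.mpr (div_nonneg_of_nonpos hnum (by linarith))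

lemma neg_one_pow_mul_eval_one_sub_eval_nonneg (hi : i ≤ n)
    (hy : y ∈ Icc (Chebyshev.node n 1) 1) :
    0 ≤ (-1) ^ i * ((chebyshevNodeBasis n i).eval 1 - (chebyshevNodeBasis n i).eval y) := by
  rw [eval_one_eq_ite]
  split_ifs with hi0
  · simpa [hi0] using eval_zero_le_one hy
  · simpa using neg_one_pow_mul_eval_nonpos hi hi0 hy

end chebyshevNodeBasis

theorem eval_one_sub_eval_le_one_sub_eval_T {n : ℕ} {P : ℝ[X]} (hP : P.degree ≤ n)
    (hbound : ∀ x ∈ Icc (-1) 1, |P.eval x| ≤ 1) {y : ℝ} (hy : y ∈ Icc (Chebyshev.node n 1) 1) :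
    P.eval 1 - P.eval y ≤ 1 - (Chebyshev.T ℝ n).eval y := by
  have h := Chebyshev.sumNodes_le_sumNodes_T
    (fun i hi ↦ chebyshevNodeBasis.neg_one_pow_mul_eval_one_sub_eval_nonneg hi hy) hbound
  rwa [← chebyshevNodeBasis.eval_sub_eval_eq_sumNodes hP,
    ← chebyshevNodeBasis.eval_sub_eval_eq_sumNodes (by simp), Chebyshev.T_eval_one] at h

lemma one_sub_eval_T_le_sq_mul (n : ℤ) {y : ℝ} (hy : y ∈ Icc (-1) 1) :
    1 - (Chebyshev.T ℝ n).eval y ≤ n ^ 2 * (1 - y) := by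
  have hderiv (x : ℝ) (hx : x ∈ Icc (-1) 1) : ‖deriv (Chebyshev.T ℝ n).eval x‖ ≤ (n : ℝ) ^ 2 := by
    rw [Polynomial.deriv, ← Chebyshev.derivative_T_eval_one]
    exact Chebyshev.abs_iterate_derivative_T_real_le n 1 (abs_le.mpr hx)
  have h := (convex_Icc (-1 : ℝ) 1).norm_image_sub_le_of_norm_deriv_le
    (fun x _ ↦ (Chebyshev.T ℝ n).differentiableAt) hderiv hy (right_mem_Icc.mpr (by norm_num))
  rw [Chebyshev.T_eval_one, Real.norm_of_nonneg (sub_nonneg.mpr hy.2)] at h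
  exact (le_abs_self _).trans h

lemma two_le_sq_mul_one_sub_node_one {n : ℕ} (hn : n ≠ 0) :
    2 ≤ n ^ 2 * (1 - Chebyshev.node n 1) := by
  have h := one_sub_eval_T_le_sq_mul n (Chebyshev.node_mem_Icc (n := n) (i := 1))
  rw [Chebyshev.eval_T_real_node (Finset.mem_Iic.mpr (Nat.one_le_iff_ne_zero.mpr hn))] at h
  norm_num at h ⊢
  exact h

lemma eval_one_sub_eval_le_sq_mul {n : ℕ} {P : ℝ[X]} (hP : P.degree ≤ n)
    (hbound : ∀ x ∈ Icc (-1) 1, |P.eval x| ≤ 1) {y : ℝ} (hy : y ∈ Icc (-1) 1) :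
    P.eval 1 - P.eval y ≤ n ^ 2 * (1 - y) := by
  rcases eq_or_ne n 0 with rfl | hn
  · rw [eq_C_of_degree_le_zero hP]
    simp
  rcases le_total (Chebyshev.node n 1) y with hnode | hnode
  · exact (eval_one_sub_eval_le_one_sub_eval_T hP hbound ⟨hnode, hy.2⟩).trans
      (by exact_mod_cast one_sub_eval_T_le_sq_mul n hy)
  · have h1 := hbound 1 (right_mem_Icc.mpr (by norm_num))
    calc P.eval 1 - P.eval y ≤ 2 := by linarith [abs_le.mp h1, abs_le.mp (hbound y hy)]
      _ ≤ n ^ 2 * (1 - Chebyshev.node n 1) := two_le_sq_mul_one_sub_node_one hn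
      _ ≤ n ^ 2 * (1 - y) := by gcongr

theorem abs_eval_one_sub_eval_le {n : ℕ} {P : ℝ[X]} (hP : P.degree ≤ n) {M : ℝ}
    (hbound : ∀ x ∈ Icc (-1) 1, |P.eval x| ≤ M) {y : ℝ} (hy : y ∈ Icc (-1) 1) :
    |P.eval 1 - P.eval y| ≤ M * n ^ 2 * (1 - y) := by
  have hscaled {c : ℝ} (hc : |c| * M ≤ 1) : c * (P.eval 1 - P.eval y) ≤ n ^ 2 * (1 - y) := by
    have h := eval_one_sub_eval_le_sq_mul (P := c • P)
      ((degree_smul_le c P).trans hP) (fun x hx ↦ ?_) hy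
    · simpa only [eval_smul, smul_eq_mul, mul_sub] using h
    · rw [eval_smul, smul_eq_mul, abs_mul]
      exact (mul_le_mul_of_nonneg_left (hbound x hx) (abs_nonneg c)).trans hc
  have h1 := hbound 1 (right_mem_Icc.mpr (by norm_num))
  rcases ((abs_nonneg _).trans h1).eq_or_lt with rfl | hM
  · simp [abs_nonpos_iff.mp h1, abs_nonpos_iff.mp (hbound y hy)]
  have hpos := hscaled (c := M⁻¹) (by rw [abs_of_pos (inv_pos.mpr hM), inv_mul_cancel₀ hM.ne'])
  have hneg := hscaled (c := -M⁻¹)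
    (by rw [abs_neg, abs_of_pos (inv_pos.mpr hM), inv_mul_cancel₀ hM.ne'])
  rw [inv_mul_le_iff₀ hM, ← mul_assoc] at hpos
  rw [neg_mul, ← mul_neg, inv_mul_le_iff₀ hM, ← mul_assoc] at hneg
  exact abs_le'.mpr ⟨hpos, hneg⟩

theorem abs_eval_sub_eval_lineMap_le {n : ℕ} {P : ℝ[X]} (hP : P.natDegree ≤ n) {M a b : ℝ}
    (hbound : ∀ x ∈ segment ℝ a b, |P.eval x| ≤ M) {t : ℝ} (ht : t ∈ Icc 0 1) :
    |P.eval a - P.eval (lineMap a b t)| ≤ 2 * M * n ^ 2 * t := by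
  set Q := P.comp (C ((a - b) / 2) * X + C ((a + b) / 2)) with hQ
  have hQeval (x : ℝ) : Q.eval x = P.eval (lineMap a b ((1 - x) / 2)) := by
    simp only [hQ, eval_comp, eval_add, eval_mul, eval_C, eval_X, lineMap_apply_ring']
    ring_nf
  have hQdeg : Q.degree ≤ n := natDegree_le_iff_degree_le.mp <|
    calc Q.natDegree ≤ P.natDegree * (C ((a - b) / 2) * X + C ((a + b) / 2)).natDegree :=
          natDegree_comp_le
      _ ≤ n * 1 := Nat.mul_le_mul hP natDegree_linear_le
      _ = n := mul_one n
  have hQbound (x : ℝ) (hx : x ∈ Icc (-1) 1) : |Q.eval x| ≤ M := by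
    rw [hQeval]
    exact hbound _ (lineMap_mem_segment ℝ a b ⟨by linarith [hx.2], by linarith [hx.1]⟩)
  have h := abs_eval_one_sub_eval_le hQdeg hQbound (y := 1 - 2 * t)
    ⟨by linarith [ht.2], by linarith [ht.1]⟩
  have ht2 : (1 - (1 - 2 * t)) / 2 = t := by ring
  rw [hQeval, hQeval, ht2, sub_self, zero_div, lineMap_apply_zero] at h
  linarith

lemma abs_eval_sub_eval_le_of_mem_segment {n : ℕ} {P : ℝ[X]} (hP : P.natDegree ≤ n) {M a b : ℝ}
    (hbound : ∀ x ∈ segment ℝ a b, |P.eval x| ≤ M) {t : ℝ} (ht : t ∈ Icc 0 1) {x : ℝ}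
    (hx : x ∈ segment ℝ a (lineMap a b t)) : |P.eval a - P.eval x| ≤ 2 * M * n ^ 2 * t := by
  have hM : 0 ≤ M := (abs_nonneg _).trans (hbound a (left_mem_segment ℝ a b))
  rw [segment_eq_image_lineMap] at hx
  obtain ⟨s, hs, rfl⟩ := hx
  have hst : s * t ≤ t := mul_le_of_le_one_left ht.1 hs.2
  rw [lineMap_lineMap_right]
  calc |P.eval a - P.eval (lineMap a b (s * t))| ≤ 2 * M * n ^ 2 * (s * t) :=
        abs_eval_sub_eval_lineMap_le hP hbound ⟨mul_nonneg hs.1 ht.1, hst.trans ht.2⟩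
    _ ≤ 2 * M * n ^ 2 * t := by gcongr

theorem abs_eval_sub_eval_le_of_mem_Icc_lineMap {n : ℕ} {P : ℝ[X]} (hP : P.natDegree ≤ n)
    {M a b c : ℝ} (hc : c ∈ Icc a b) (hbound : ∀ x ∈ Icc a b, |P.eval x| ≤ M) {t : ℝ}
    (ht : t ∈ Icc 0 1) {x : ℝ} (hx : x ∈ Icc (lineMap c a t) (lineMap c b t)) :
    |P.eval c - P.eval x| ≤ 2 * M * n ^ 2 * t := by
  have hsegment {e : ℝ} (he : e ∈ Icc a b) : ∀ y ∈ segment ℝ c e, |P.eval y| ≤ M :=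
    fun y hy ↦ hbound y ((convex_Icc a b).segment_subset hc he hy)
  have hab : a ≤ b := hc.1.trans hc.2
  rcases le_total c x with hcx | hxc
  · exact abs_eval_sub_eval_le_of_mem_segment hP (hsegment (right_mem_Icc.mpr hab)) ht
      (Icc_subset_segment ⟨hcx, hx.2⟩)
  · refine abs_eval_sub_eval_le_of_mem_segment hP (hsegment (left_mem_Icc.mpr hab)) ht ?_
    rw [segment_symm]
    exact Icc_subset_segment ⟨hx.1, hxc⟩

theorem exists_Icc_forall_half_le_abs_eval {n : ℕ} (hn : 1 ≤ n) {P : ℝ[X]}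
    (hP : P.natDegree ≤ n) {a b c : ℝ} (hc : c ∈ Icc a b)
    (hmax : ∀ x ∈ Icc a b, |P.eval x| ≤ |P.eval c|) :
    ∃ u v, a ≤ u ∧ u ≤ v ∧ v ≤ b ∧ v - u = (b - a) / (4 * n ^ 2) ∧
      ∀ x ∈ Icc u v, |P.eval c| / 2 ≤ |P.eval x| := by
  obtain ⟨hac, hcb⟩ := hc
  set t : ℝ := 1 / (4 * n ^ 2) with ht_def
  have hn' : (1 : ℝ) ≤ n := by exact_mod_cast hn
  have ht0 : 0 ≤ t := by positivity
  have ht1 : t ≤ 1 := div_le_one_of_le₀ (by nlinarith) (by positivity)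
  refine ⟨lineMap c a t, lineMap c b t, ?_, lineMap_mono_right (hac.trans hcb) ht0, ?_, ?_,
    fun x hx ↦ ?_⟩
  · exact ((convex_Icc a c).lineMap_mem (right_mem_Icc.mpr hac) (left_mem_Icc.mpr hac)
      ⟨ht0, ht1⟩).1
  · exact ((convex_Icc c b).lineMap_mem (left_mem_Icc.mpr hcb) (right_mem_Icc.mpr hcb)
      ⟨ht0, ht1⟩).2
  · simp only [lineMap_apply_ring', ht_def]
    ring
  · have hdrop := abs_eval_sub_eval_le_of_mem_Icc_lineMap hP ⟨hac, hcb⟩ hmax ⟨ht0, ht1⟩ hx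
    have hconst : 2 * |P.eval c| * n ^ 2 * t = |P.eval c| / 2 := by
      rw [ht_def]
      field
    linarith [abs_sub_abs_le_abs_sub (P.eval c) (P.eval x)]

theorem mul_rpow_le_integral_abs_eval_rpow {n : ℕ} (hn : 1 ≤ n) {P : ℝ[X]} (hP : P.natDegree ≤ n)
    {a b c : ℝ} (hc : c ∈ Icc a b) (hmax : ∀ x ∈ Icc a b, |P.eval x| ≤ |P.eval c|) {q : ℝ}
    (hq : 0 ≤ q) :
    (b - a) / (4 * n ^ 2) * (|P.eval c| / 2) ^ q ≤ ∫ x in a..b, |P.eval x| ^ q := by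
  obtain ⟨u, v, hau, huv, hvb, hlength, hhalf⟩ := exists_Icc_forall_half_le_abs_eval hn hP hc hmax
  have hint (l r : ℝ) : IntervalIntegrable (fun x ↦ |P.eval x| ^ q) MeasureTheory.volume l r :=
    (P.continuous.abs.rpow_const fun _ ↦ Or.inr hq).intervalIntegrable l r
  calc (b - a) / (4 * n ^ 2) * (|P.eval c| / 2) ^ q = ∫ _ in u..v, (|P.eval c| / 2) ^ q := by
        rw [intervalIntegral.integral_const, hlength, smul_eq_mul]
    _ ≤ ∫ x in u..v, |P.eval x| ^ q :=
        intervalIntegral.integral_mono_on huv (by simp) (hint u v) fun x hx ↦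
          Real.rpow_le_rpow (by positivity) (hhalf x hx) hq
    _ ≤ ∫ x in a..b, |P.eval x| ^ q :=
        intervalIntegral.integral_mono_interval hau huv hvb
          (.of_forall fun x ↦ by positivity) (hint a b)

theorem lq_lower_bound_general {d : ℕ} (hd : 1 ≤ d) {p : ℝ[X]} (hp : p.natDegree ≤ d) {a b : ℝ}
    (hab : a ≤ b) {q : ℝ} (hq : 0 ≤ q) :
    (b - a) / 2 * (⨆ x : Icc a b, |p.eval (x : ℝ)|) ^ q / (2 ^ (q + 1) * d ^ 2) ≤
      ∫ x in a..b, |p.eval x| ^ q := by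
  obtain ⟨c, hc, hsup, hmax⟩ := isCompact_Icc.exists_sSup_image_eq_and_ge (nonempty_Icc.mpr hab)
    p.continuous.abs.continuousOn
  rw [sSup_image'] at hsup
  calc (b - a) / 2 * (⨆ x : Icc a b, |p.eval (x : ℝ)|) ^ q / (2 ^ (q + 1) * d ^ 2)
      = (b - a) / (4 * d ^ 2) * (|p.eval c| / 2) ^ q := by
        rw [hsup, Real.div_rpow (abs_nonneg _) zero_le_two, Real.rpow_add_one two_ne_zero]
        field
    _ ≤ ∫ x in a..b, |p.eval x| ^ q := mul_rpow_le_integral_abs_eval_rpow hd hp hc hmax hq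

/-- For a polynomial `p` of degree at most `d` (`d ≥ 1`) and `q > 0`,
`∫_{-1}^1 |p(x)|^q dx ≥ (max_{x ∈ [-1,1]} |p(x)|)^q / (2^{q+1} d²)`. -/
theorem lq_lower_bound (d : ℕ) (hd : 1 ≤ d) (p : Polynomial ℝ) (hp : p.natDegree ≤ d)
    (q : ℝ) (hq : 0 < q) :
    (⨆ x : Set.Icc (-1 : ℝ) 1, |p.eval (x : ℝ)|) ^ q / ((2 : ℝ) ^ (q + 1) * (d : ℝ) ^ 2) ≤
      ∫ x in (-1 : ℝ)..1, |p.eval x| ^ q := by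
  simpa [one_add_one_eq_two] using
    lq_lower_bound_general hd hp (a := -1) (b := 1) (by norm_num) hq.le
end

section
/- Let d ≥ 1 be an integer. For every point b ∈ [-1,1] there exists a polynomial p_b of degree at most d such that p_b(b) = 1, sup_{x∈[-1,1]} |p_b(x)| = 1, and |p_b(x)| ≤ 2/(d·|x − b|) for every x ∈ [-1,1] with x ≠ b. -/
open Polynomial

/-!
Let `W_m = U_m + U_{m-1}`, so that `W_m (cos θ) = sin ((m + 1/2) θ) / sin (θ / 2)` is the Dirichlet
kernel. It has size `2m + 1` at `1`, is bounded by `2m + 1` on `[-1, 1]`, and decays away from `1`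
because `(1 - X) W_m ^ 2 = 1 - T_{2m+1}` is at most `2` on `[-1, 1]`. The substitution
`1 - (x - b)² / 2`, which maps `|x - b| ≤ 2` to `[-1, 1]`, moves the peak to `b` and turns the decay
`|1 - y| ^ (-1/2)` into `|x - b|⁻¹`, at the cost of doubling the degree.
-/

section Chebyshev

/-- The Chebyshev polynomial of the fourth kind `W_n`, expressed through those of the second kind.
Like `Chebyshev.U`, it is indexed by all integers. -/
noncomputable def chebyshevW (R : Type*) [CommRing R] (n : ℤ) : R[X] :=
  Chebyshev.U R n + Chebyshev.U R (n - 1)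

variable (R : Type*) [CommRing R]

theorem chebyshevU_sq_add_chebyshevU_sq (n : ℤ) :
    Chebyshev.U R n ^ 2 + Chebyshev.U R (n + 1) ^ 2
      - 2 * X * Chebyshev.U R n * Chebyshev.U R (n + 1) = 1 := by
  have h := congrArg (comp · (2 * X)) (Chebyshev.S_sq_add_S_sq R n)
  simp only [sub_comp, add_comp, pow_comp, mul_comp, X_comp, one_comp,
    Chebyshev.S_comp_two_mul_X] at h
  exact h

theorem one_sub_X_mul_chebyshevW_sq (n : ℤ) :
    (1 - X) * chebyshevW R n ^ 2 = 1 - Chebyshev.T R (2 * n + 1) := by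
  have pell := chebyshevU_sq_add_chebyshevU_sq R (n - 1)
  have product := Chebyshev.T_mul_T R (n + 1) n
  have hT := Chebyshev.T_eq_U_sub_X_mul_U R n
  have hT_succ := Chebyshev.T_eq_X_mul_U_sub_U R (n - 1)
  rw [show n - 1 + 2 = n + 1 by ring, sub_add_cancel] at hT_succ
  rw [show n + 1 + n = 2 * n + 1 by ring, add_sub_cancel_left, Chebyshev.T_one, hT, hT_succ]
    at product
  rw [sub_add_cancel] at pell
  rw [chebyshevW]
  linear_combination (1 + X) * pell - product

theorem chebyshevW_eval_one (n : ℤ) : (chebyshevW R n).eval 1 = 2 * n + 1 := by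
  simp only [chebyshevW, eval_add, Chebyshev.U_eval_one]
  push_cast
  ring

theorem natDegree_chebyshevW_le [IsDomain R] [NeZero (2 : R)] (n : ℤ) :
    (chebyshevW R n).natDegree ≤ n.natAbs := by
  refine natDegree_add_le_of_degree_le ?_ ?_ <;> rw [Chebyshev.natDegree_U] <;> omega

end Chebyshev

section RealBounds

variable (n : ℤ) {x : ℝ}

theorem abs_eval_chebyshevU_le (hx : |x| ≤ 1) : |(Chebyshev.U ℝ n).eval x| ≤ |(n : ℝ) + 1| := by
  obtain rfl | hn := eq_or_ne n (-1)
  · simp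
  have hpos : 0 < |(n : ℝ) + 1| := abs_pos.2 (by exact_mod_cast fun h => hn (by omega))
  -- `(n + 1) U_n` is the derivative of `T_{n+1}`, which is largest at `1`.
  have derivative_le := Chebyshev.abs_iterate_derivative_T_real_le (n + 1) 1 hx
  simp only [Function.iterate_one, Chebyshev.T_derivative_eq_U, add_sub_cancel_right, eval_mul,
    eval_intCast, Chebyshev.U_eval_one, abs_mul] at derivative_le
  push_cast at derivative_le
  rw [← abs_mul_self, abs_mul] at derivative_le
  exact le_of_mul_le_mul_left derivative_le hpos

theorem abs_eval_chebyshevW_le (hx : |x| ≤ 1) : |(chebyshevW ℝ n).eval x| ≤ |2 * (n : ℝ) + 1| := by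
  have hU := abs_eval_chebyshevU_le n hx
  have hU_pred := abs_eval_chebyshevU_le (n - 1) hx
  push_cast at hU_pred
  rw [sub_add_cancel] at hU_pred
  have hsum : |(n : ℝ) + 1| + |(n : ℝ)| = |2 * (n : ℝ) + 1| := by
    exact_mod_cast (by grind : |n + 1| + |n| = |2 * n + 1|)
  rw [chebyshevW, eval_add, ← hsum]
  exact (abs_add_le _ _).trans (add_le_add hU hU_pred)

theorem one_sub_mul_eval_chebyshevW_sq_le (hx : |x| ≤ 1) :
    (1 - x) * (chebyshevW ℝ n).eval x ^ 2 ≤ 2 := by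
  have hT := neg_le_of_abs_le (Chebyshev.abs_eval_T_real_le_one (2 * n + 1) hx)
  have identity := congrArg (eval x) (one_sub_X_mul_chebyshevW_sq ℝ n)
  simp only [eval_mul, eval_sub, eval_one, eval_X, eval_pow] at identity
  linarith

end RealBounds

theorem abs_one_sub_sq_div_two_le_one {t : ℝ} (ht : |t| ≤ 2) : |1 - t ^ 2 / 2| ≤ 1 := by
  have hsq : t ^ 2 ≤ 2 ^ 2 := sq_le_sq' (neg_le_of_abs_le ht) (le_of_abs_le ht)
  rw [abs_le]
  constructor <;> linarith [sq_nonneg t]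

/-- The polynomial of degree at most `2 m` peaking at `b`: the normalized Dirichlet kernel
`W_m / (2 m + 1)` composed with `1 - (x - b)² / 2`. -/
noncomputable def peakPolynomial (m : ℕ) (b : ℝ) : ℝ[X] :=
  C (2 * m + 1 : ℝ)⁻¹ * (chebyshevW ℝ m).comp (1 - C 2⁻¹ * (X - C b) ^ 2)

section PeakPolynomial

variable (m : ℕ) (b : ℝ)

theorem natDegree_peakPolynomial_le : (peakPolynomial m b).natDegree ≤ 2 * m := by
  have hW : (chebyshevW ℝ m).natDegree ≤ m := by simpa using natDegree_chebyshevW_le ℝ m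
  have hinner : (1 - C 2⁻¹ * (X - C b) ^ 2 : ℝ[X]).natDegree ≤ 2 := by compute_degree
  calc (peakPolynomial m b).natDegree
      ≤ (chebyshevW ℝ m).natDegree * (1 - C 2⁻¹ * (X - C b) ^ 2 : ℝ[X]).natDegree :=
        (natDegree_C_mul_le _ _).trans natDegree_comp_le
    _ ≤ m * 2 := Nat.mul_le_mul hW hinner
    _ = 2 * m := mul_comm _ _

theorem eval_peakPolynomial (x : ℝ) :
    (peakPolynomial m b).eval x =
      (chebyshevW ℝ m).eval (1 - (x - b) ^ 2 / 2) / (2 * m + 1) := by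
  simp [peakPolynomial, div_eq_inv_mul]

theorem eval_peakPolynomial_self : (peakPolynomial m b).eval b = 1 := by
  have hm : (2 * m + 1 : ℝ) ≠ 0 := by positivity
  simp [eval_peakPolynomial, chebyshevW_eval_one, hm]

variable {b} {x : ℝ}

theorem abs_eval_peakPolynomial_le_one (hx : |x - b| ≤ 2) :
    |(peakPolynomial m b).eval x| ≤ 1 := by
  have hm : (0 : ℝ) < 2 * m + 1 := by positivity
  have hW := abs_eval_chebyshevW_le m (abs_one_sub_sq_div_two_le_one hx)
  rw [Int.cast_natCast, abs_of_pos hm] at hW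
  rwa [eval_peakPolynomial, abs_div, abs_of_pos hm, div_le_one hm]

theorem abs_eval_peakPolynomial_mul_abs_sub_le (hx : |x - b| ≤ 2) :
    |(peakPolynomial m b).eval x| * |x - b| ≤ 2 / (2 * m + 1) := by
  have hm : (0 : ℝ) < 2 * m + 1 := by positivity
  set w := (chebyshevW ℝ m).eval (1 - (x - b) ^ 2 / 2)
  have hdecay : (w * (x - b)) ^ 2 ≤ 2 ^ 2 := by
    linarith [one_sub_mul_eval_chebyshevW_sq_le m (abs_one_sub_sq_div_two_le_one hx)]
  calc |(peakPolynomial m b).eval x| * |x - b|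
      = |w * (x - b)| / (2 * m + 1) := by
        rw [eval_peakPolynomial, abs_div, abs_of_pos hm, abs_mul, div_mul_eq_mul_div]
    _ ≤ 2 / (2 * m + 1) := by
        gcongr
        exact abs_le_of_sq_le_sq hdecay zero_le_two

end PeakPolynomial

/-- For every `b ∈ [-1,1]` there is a degree-`d` polynomial `p_b` with `p_b(b) = 1`,
`‖p_b‖_∞ = 1` on `[-1,1]`, and `|p_b(x)| ≤ 2/(d |x−b|)` for all `x ∈ [-1,1]`. -/
theorem exists_indicator_polynomial (d : ℕ) (hd : 1 ≤ d) (b : ℝ)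
    (hb : b ∈ Set.Icc (-1 : ℝ) 1) :
    ∃ p : Polynomial ℝ, p.natDegree ≤ d ∧ p.eval b = 1 ∧
      (⨆ x : Set.Icc (-1 : ℝ) 1, |p.eval (x : ℝ)|) = 1 ∧
      ∀ x ∈ Set.Icc (-1 : ℝ) 1, x ≠ b → |p.eval x| ≤ 2 / ((d : ℝ) * |x - b|) := by
  have hdist : ∀ x ∈ Set.Icc (-1 : ℝ) 1, |x - b| ≤ 2 := fun x hx =>
    abs_le.2 ⟨by linarith [hx.1, hb.2], by linarith [hx.2, hb.1]⟩
  have hpeak := eval_peakPolynomial_self (d / 2) b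
  refine ⟨peakPolynomial (d / 2) b, (natDegree_peakPolynomial_le _ b).trans (by omega), hpeak,
    IsGreatest.csSup_eq ⟨⟨⟨b, hb⟩, by simp [hpeak]⟩, ?_⟩, fun x hx hxb => ?_⟩
  · rintro _ ⟨x, rfl⟩
    exact abs_eval_peakPolynomial_le_one _ (hdist x x.2)
  · have : (0 : ℝ) < d := by exact_mod_cast hd
    have hd_le : (d : ℝ) ≤ 2 * (d / 2 : ℕ) + 1 := by exact_mod_cast (by omega : d ≤ 2 * (d / 2) + 1)
    rw [← div_div, le_div_iff₀ (abs_sub_pos.2 hxb)]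
    calc |(peakPolynomial (d / 2) b).eval x| * |x - b|
        ≤ 2 / (2 * (d / 2 : ℕ) + 1) := abs_eval_peakPolynomial_mul_abs_sub_le _ (hdist x hx)
      _ ≤ 2 / d := by gcongr
end

section
/- Let d be an even positive integer and define p(x) = (−1)^{d/2} · T_{d+1}(x)/((d+1)·x), which is a polynomial of degree d since T_{d+1} is an odd polynomial divisible by x. Then p(0) = 1, sup_{x∈[-1,1]} |p(x)| = 1, and |p(x)| ≤ 1/((d+1)·|x|) for every x ∈ [-1,1] with x ≠ 0. -/
open Polynomial

/-!
Since `T_n` vanishes at `0` for odd `n`, the quotient `D_n = T_n / X` is a polynomial, and the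
recurrence `T_{n+2} = 2 X T_{n+1} - T_n` descends to `D_{n+2} = 2 T_{n+1} - D_n`. As `|T_{n+1}| ≤ 1`
on `[-1, 1]`, each such step raises the bound for `|D_n|` by at most `2`, so `|D_n| ≤ n` there for
odd `n > 0`. The value `D_n(0) = T_n'(0) = n U_{n-1}(0) = ± n` shows that this is attained at `0`.
-/

section Semiring

variable {R : Type*} [Semiring R]

theorem divX_mul_X_eq_self (p : R[X]) : divX (p * X) = p := by
  ext k
  rw [coeff_divX, coeff_mul_X]

theorem eval_zero_divX (p : R[X]) : (divX p).eval 0 = (derivative p).eval 0 := by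
  simp [← coeff_zero_eq_eval_zero, coeff_derivative]

end Semiring

section CommRing

variable (R : Type*) [CommRing R]

theorem X_mul_divX_T_of_odd {n : ℤ} (hn : Odd n) :
    X * divX (Chebyshev.T R n) = Chebyshev.T R n := by
  simpa [coeff_zero_eq_eval_zero, Chebyshev.T_eval_zero_of_odd R hn] using
    X_mul_divX_add (Chebyshev.T R n)

theorem divX_T_add_two (n : ℤ) :
    divX (Chebyshev.T R (n + 2)) = 2 * Chebyshev.T R (n + 1) - divX (Chebyshev.T R n) := by
  rw [eq_sub_iff_add_eq, ← divX_add, Chebyshev.T_add_two, sub_add_cancel, mul_right_comm,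
    divX_mul_X_eq_self]

theorem natDegree_divX_T [IsDomain R] [NeZero (2 : R)] (n : ℤ) :
    (divX (Chebyshev.T R n)).natDegree = n.natAbs - 1 := by
  rw [natDegree_divX_eq_natDegree_tsub_one, Chebyshev.natDegree_T]

theorem eval_zero_divX_T_of_odd {n : ℤ} (hn : Odd n) :
    (divX (Chebyshev.T R n)).eval 0 = n * ((n - 1) / 2).negOnePow := by
  rw [eval_zero_divX, Chebyshev.T_derivative_eq_U, eval_mul, eval_intCast,
    Chebyshev.U_eval_zero_of_even R (hn.sub_odd odd_one)]

end CommRing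

theorem abs_eval_divX_T_two_mul_add_one_le (m : ℕ) {x : ℝ} (hx : |x| ≤ 1) :
    |(divX (Chebyshev.T ℝ (2 * m + 1))).eval x| ≤ 2 * m + 1 := by
  induction m with
  | zero =>
    have divX_X : divX (X : ℝ[X]) = 1 := by simpa using divX_mul_X_eq_self (1 : ℝ[X])
    simp [divX_X]
  | succ m ih =>
    set D := divX (Chebyshev.T ℝ (2 * m + 1))
    set T := Chebyshev.T ℝ (2 * m + 1 + 1)
    have hrec : divX (Chebyshev.T ℝ (2 * (m + 1 : ℕ) + 1)) = 2 * T - D := by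
      rw [← divX_T_add_two, show 2 * ((m + 1 : ℕ) : ℤ) + 1 = 2 * m + 1 + 2 by lia]
    calc
      _ = |2 * T.eval x - D.eval x| := by rw [hrec, eval_sub, eval_mul, eval_ofNat]
      _ ≤ 2 * |T.eval x| + |D.eval x| := by
        simpa only [abs_mul, abs_two] using abs_sub (2 * T.eval x) (D.eval x)
      _ ≤ 2 * 1 + (2 * m + 1) := by
        gcongr
        exact Chebyshev.abs_eval_T_real_le_one _ hx
      _ = 2 * (m + 1 : ℕ) + 1 := by push_cast; ring

theorem abs_eval_divX_T_le_of_odd {n : ℤ} (hn : Odd n) {x : ℝ} (hx : |x| ≤ 1) :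
    |(divX (Chebyshev.T ℝ n)).eval x| ≤ |(n : ℝ)| := by
  obtain ⟨m, hm⟩ := Int.natAbs_odd.2 hn
  rw [← Chebyshev.T_natAbs, ← Int.cast_abs, Int.abs_eq_natAbs, hm]
  exact_mod_cast abs_eval_divX_T_two_mul_add_one_le m hx

theorem abs_mul_abs_eval_divX_T_le_one_of_odd {n : ℤ} (hn : Odd n) {x : ℝ} (hx : |x| ≤ 1) :
    |x| * |(divX (Chebyshev.T ℝ n)).eval x| ≤ 1 := by
  calc
    |x| * |(divX (Chebyshev.T ℝ n)).eval x| = |(X * divX (Chebyshev.T ℝ n)).eval x| := by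
      rw [eval_mul, eval_X, abs_mul]
    _ = |(Chebyshev.T ℝ n).eval x| := by rw [X_mul_divX_T_of_odd ℝ hn]
    _ ≤ 1 := Chebyshev.abs_eval_T_real_le_one n hx

/-- For even `d > 0`, the polynomial `p(x) = (−1)^{d/2} T_{d+1}(x) / ((d+1) x)`
(a genuine polynomial of degree `d`, since the Chebyshev polynomial `T_{d+1}` is odd and
hence divisible by `X`) satisfies `p(0) = 1`, `‖p‖_∞ = 1` on `[-1,1]`, and
`|p(x)| ≤ 1/((d+1)|x|)` for `x ∈ [-1,1]`, `x ≠ 0`. -/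
theorem chebyshev_indicator_polynomial (d : ℕ) (hd : 0 < d) (hdeven : Even d)
    (p : Polynomial ℝ)
    (hp : C ((d : ℝ) + 1) * X * p =
      C ((-1 : ℝ) ^ (d / 2)) * Polynomial.Chebyshev.T ℝ ((d : ℤ) + 1)) :
    p.natDegree = d ∧ p.eval 0 = 1 ∧
      (⨆ x : Set.Icc (-1 : ℝ) 1, |p.eval (x : ℝ)|) = 1 ∧
      ∀ x ∈ Set.Icc (-1 : ℝ) 1, x ≠ 0 → |p.eval x| ≤ 1 / (((d : ℝ) + 1) * |x|) := by
  have hpos : (0 : ℝ) < d + 1 := by positivity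
  have hodd : Odd ((d : ℤ) + 1) := by exact_mod_cast hdeven.add_one
  set D := divX (Chebyshev.T ℝ (d + 1)) with hD
  have hpD : C ((d : ℝ) + 1) * p = C ((-1) ^ (d / 2)) * D := by
    rw [hD, ← divX_C_mul, ← hp, mul_right_comm, divX_mul_X_eq_self]
  have heval (x : ℝ) : (d + 1) * p.eval x = (-1) ^ (d / 2) * D.eval x := by
    simpa using congrArg (eval x) hpD
  have habs (x : ℝ) : (d + 1) * |p.eval x| = |D.eval x| := by
    simpa [abs_mul, abs_of_pos hpos] using congrArg abs (heval x)
  have hp_zero : p.eval 0 = 1 := by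
    have hD_zero : D.eval 0 = (d + 1) * (-1) ^ (d / 2) := by
      simpa [← Int.cast_negOnePow_natCast ℝ (d / 2), -Int.coe_negOnePow] using
        eval_zero_divX_T_of_odd ℝ hodd
    exact mul_left_cancel₀ hpos.ne' (by rw [heval, hD_zero, mul_left_comm, ← mul_pow]; simp)
  have hp_le (x : Set.Icc (-1 : ℝ) 1) : |p.eval (x : ℝ)| ≤ 1 := by
    refine le_of_mul_le_mul_left ?_ hpos
    simpa [habs, abs_of_pos hpos] using abs_eval_divX_T_le_of_odd hodd (abs_le.2 x.2)
  refine ⟨?_, hp_zero, ?_, fun x hx hx0 ↦ ?_⟩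
  · rw [← natDegree_C_mul hpos.ne', hpD, natDegree_C_mul (by simp), natDegree_divX_T]
    omega
  · exact IsGreatest.csSup_eq ⟨⟨⟨0, by simp⟩, by simp [hp_zero]⟩, Set.forall_mem_range.2 hp_le⟩
  · rw [le_div_iff₀' (by positivity), mul_right_comm, habs, mul_comm]
    exact abs_mul_abs_eval_divX_T_le_one_of_odd hodd (abs_le.2 hx)
end

section
/- Let d ≥ 1 be an integer, 0 < α < 1, and let m be a positive integer with m ≤ d·√α/2. Define b_j = −1 + 2j/m for j ∈ [m] = {1,…,m}, let p_{b_j} be a polynomial of degree at most d with p_{b_j}(b_j) = 1, sup_{[-1,1]}|p_{b_j}| = 1, and |p_{b_j}(x)| ≤ 2/(d·|x − b_j|) for x ≠ b_j, and for S ⊆ [m] define f_S(x) = Σ_{j∈S} p_{b_j}(x)². Then for every pair of distinct subsets S, S' ⊆ [m], one has sup_{x∈[-1,1]} |f_S(x) − f_{S'}(x)| ≥ 1 − α. In particular, no single polynomial can lie within ℓ∞ distance (1−α)/2 of both f_S and f_{S'}. -/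
open Polynomial

/-!
Distinct `S` and `S'` differ at some index `k`, lying in `S` but not in `S'`, say. At the node `b k`
the sum over `S` is at least `1`. By the decay of the `p j`, the term of index `j` in the sum over
`S'` is at most `(m / d) ^ 2 / (k - j) ^ 2 ≤ (α / 4) / (k - j) ^ 2`. The sum of `1 / n ^ 2` over the
nonzero integers is `2 * ζ(2) = π ^ 2 / 3 < 4`, so the sum over `S'` is less than `α` at `b k`.
-/

/-- Boundedness on `[-1, 1]`, that is, finiteness of the sup-norm: for a function `f` without this
property the supremum defining `supNorm f` takes the junk value `0`. -/
def HasFiniteSupNorm (f : ℝ → ℝ) : Prop :=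
  ∃ C, ∀ x ∈ Set.Icc (-1 : ℝ) 1, |f x| ≤ C

namespace HasFiniteSupNorm

variable {f g : ℝ → ℝ}

lemma of_continuousOn (hf : ContinuousOn f (Set.Icc (-1) 1)) : HasFiniteSupNorm f :=
  isCompact_Icc.exists_bound_of_continuousOn hf

lemma sub (hf : HasFiniteSupNorm f) (hg : HasFiniteSupNorm g) :
    HasFiniteSupNorm fun x => f x - g x := by
  obtain ⟨C, hC⟩ := hf
  obtain ⟨D, hD⟩ := hg
  exact ⟨C + D, fun x hx => (abs_sub _ _).trans (add_le_add (hC x hx) (hD x hx))⟩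

lemma pow (hf : HasFiniteSupNorm f) (n : ℕ) : HasFiniteSupNorm fun x => f x ^ n := by
  obtain ⟨C, hC⟩ := hf
  refine ⟨C ^ n, fun x hx => ?_⟩
  rw [abs_pow]
  exact pow_le_pow_left₀ (abs_nonneg _) (hC x hx) n

lemma sum {ι : Type*} {S : Finset ι} {F : ι → ℝ → ℝ} (hF : ∀ j ∈ S, HasFiniteSupNorm (F j)) :
    HasFiniteSupNorm fun x => ∑ j ∈ S, F j x := by
  choose! C hC using hF
  exact ⟨∑ j ∈ S, C j, fun x hx =>
    (Finset.abs_sum_le_sum_abs _ _).trans (Finset.sum_le_sum fun j hj => hC j hj x hx)⟩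

lemma abs_le_supNorm (hf : HasFiniteSupNorm f) {x : ℝ} (hx : x ∈ Set.Icc (-1 : ℝ) 1) :
    |f x| ≤ supNorm f := by
  obtain ⟨C, hC⟩ := hf
  have hbdd : BddAbove (Set.range fun y : Set.Icc (-1 : ℝ) 1 => |f y|) :=
    ⟨C, Set.forall_mem_range.mpr fun y => hC y y.2⟩
  exact le_ciSup hbdd ⟨x, hx⟩

lemma supNorm_sub_le {q : ℝ → ℝ} (hf : HasFiniteSupNorm f) (hg : HasFiniteSupNorm g)
    (hq : HasFiniteSupNorm q) :
    supNorm (fun x => f x - g x) ≤ supNorm (fun x => q x - f x) + supNorm fun x => q x - g x := by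
  have : Nonempty (Set.Icc (-1 : ℝ) 1) := ⟨⟨0, by norm_num⟩⟩
  refine ciSup_le fun x => ?_
  calc |f x - g x| ≤ |f x - q x| + |q x - g x| := abs_sub_le _ _ _
    _ = |q x - f x| + |q x - g x| := by rw [abs_sub_comm]
    _ ≤ _ := add_le_add ((hq.sub hf).abs_le_supNorm x.2) ((hq.sub hg).abs_le_supNorm x.2)

end HasFiniteSupNorm

lemma hasSum_int_one_div_sq : HasSum (fun n : ℤ => 1 / (n : ℝ) ^ 2) (Real.pi ^ 2 / 3) := by
  have hneg : HasSum (fun n : ℕ => 1 / ((-n : ℤ) : ℝ) ^ 2) (Real.pi ^ 2 / 6) := by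
    simpa using hasSum_zeta_two
  have htwice : Real.pi ^ 2 / 6 + Real.pi ^ 2 / 6 - 1 / ((0 : ℤ) : ℝ) ^ 2 = Real.pi ^ 2 / 3 := by
    norm_num
    ring
  exact htwice ▸ HasSum.of_nat_of_neg (f := fun n : ℤ => 1 / (n : ℝ) ^ 2) hasSum_zeta_two hneg

-- For `j = k` the summand is `1 / 0 = 0`.
lemma sum_one_div_sub_sq_le (T : Finset ℕ) (k : ℕ) :
    ∑ j ∈ T, 1 / ((k : ℝ) - j) ^ 2 ≤ Real.pi ^ 2 / 3 := by
  have hinj : Function.Injective fun j : ℕ => (k : ℤ) - j :=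
    sub_right_injective.comp Nat.cast_injective
  calc ∑ j ∈ T, 1 / ((k : ℝ) - j) ^ 2
      = ∑ n ∈ T.map ⟨_, hinj⟩, 1 / (n : ℝ) ^ 2 := by simp
    _ ≤ Real.pi ^ 2 / 3 :=
      sum_le_hasSum _ (fun n _ => by positivity) hasSum_int_one_div_sq

lemma sum_sq_le_of_abs_le_div {T : Finset ℕ} {k : ℕ} {a : ℕ → ℝ} {c : ℝ}
    (ha : ∀ j ∈ T, |a j| ≤ c / |(k : ℝ) - j|) :
    ∑ j ∈ T, a j ^ 2 ≤ c ^ 2 * (Real.pi ^ 2 / 3) :=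
  calc ∑ j ∈ T, a j ^ 2
      ≤ ∑ j ∈ T, c ^ 2 * (1 / ((k : ℝ) - j) ^ 2) := Finset.sum_le_sum fun j hj => by
        have hsq := pow_le_pow_left₀ (abs_nonneg _) (ha j hj) 2
        rwa [sq_abs, div_pow, sq_abs, div_eq_mul_one_div] at hsq
    _ = c ^ 2 * ∑ j ∈ T, 1 / ((k : ℝ) - j) ^ 2 := (Finset.mul_sum ..).symm
    _ ≤ c ^ 2 * (Real.pi ^ 2 / 3) :=
      mul_le_mul_of_nonneg_left (sum_one_div_sub_sq_le T k) (sq_nonneg c)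

lemma sum_sq_lt_of_abs_le_sqrt_div {T : Finset ℕ} {k : ℕ} {a : ℕ → ℝ} {α : ℝ} (hα : 0 < α)
    (ha : ∀ j ∈ T, |a j| ≤ √α / 2 / |(k : ℝ) - j|) : ∑ j ∈ T, a j ^ 2 < α := by
  have hpi : Real.pi ^ 2 < 12 := by nlinarith [Real.pi_pos, Real.pi_lt_d2]
  calc ∑ j ∈ T, a j ^ 2 ≤ (√α / 2) ^ 2 * (Real.pi ^ 2 / 3) := sum_sq_le_of_abs_le_div ha
    _ = α * (Real.pi ^ 2 / 12) := by rw [div_pow, Real.sq_sqrt hα.le]; ring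
    _ < α := mul_lt_of_lt_one_right hα (by linarith)

lemma exists_lt_abs_sum_sub_sum {ι G : Type*} [AddCommGroup G] [LinearOrder G]
    [IsOrderedAddMonoid G] {I S S' : Finset ι} {a : ι → ι → G} {c α : G}
    (hnonneg : ∀ j ∈ I, ∀ k ∈ I, 0 ≤ a j k) (hdiag : ∀ k ∈ I, c ≤ a k k)
    (hoff : ∀ k ∈ I, ∀ T ⊆ I, k ∉ T → ∑ j ∈ T, a j k < α)
    (hS : S ⊆ I) (hS' : S' ⊆ I) (hne : S ≠ S') :
    ∃ k ∈ I, c - α < |∑ j ∈ S, a j k - ∑ j ∈ S', a j k| := by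
  wlog hsub : ¬S ⊆ S' generalizing S S'
  · have hsub' : ¬S' ⊆ S := fun h => hne ((not_not.mp hsub).antisymm h)
    simpa only [abs_sub_comm] using this hS' hS hne.symm hsub'
  obtain ⟨k, hkS, hkS'⟩ := Finset.not_subset.mp hsub
  have hge : c ≤ ∑ j ∈ S, a j k := (hdiag k (hS hkS)).trans <|
    Finset.single_le_sum (f := (a · k)) (fun j hj => hnonneg j (hS hj) k (hS hkS)) hkS
  have hlt : ∑ j ∈ S', a j k < α := hoff k (hS hkS) S' hS' hkS'
  refine ⟨k, hS hkS, ?_⟩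
  calc c - α < c - ∑ j ∈ S', a j k := sub_lt_sub_left hlt c
    _ ≤ ∑ j ∈ S, a j k - ∑ j ∈ S', a j k := sub_le_sub_right hge _
    _ ≤ |∑ j ∈ S, a j k - ∑ j ∈ S', a j k| := le_abs_self _

lemma two_div_mul_le_div_of_two_mul_div_le {K : Type*} [Field K] [LinearOrder K]
    [IsStrictOrderedRing K] {d m c r s : K} (hd : 0 < d) (hm : 0 < m) (hr : 0 < r)
    (hmd : m ≤ d * c) (hs : 2 * r / m ≤ s) :
    2 / (d * s) ≤ c / r :=
  calc 2 / (d * s) ≤ 2 / (d * (2 * r / m)) := by gcongr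
    _ = m / d / r := by field_simp
    _ ≤ c / r := by
      gcongr
      exact (div_le_iff₀' hd).mpr hmd

section SeparatedNodes

variable {d α : ℝ} {m : ℕ} {b : ℕ → ℝ} {f : ℕ → ℝ → ℝ}

lemma abs_apply_node_le (hmd : (m : ℝ) ≤ d * √α / 2)
    (hmem : ∀ j ∈ Finset.Icc 1 m, b j ∈ Set.Icc (-1 : ℝ) 1)
    (hsep : ∀ j ∈ Finset.Icc 1 m, ∀ k ∈ Finset.Icc 1 m, 2 * |(k : ℝ) - j| / m ≤ |b k - b j|)
    (hbound : ∀ j ∈ Finset.Icc 1 m, ∀ x ∈ Set.Icc (-1 : ℝ) 1, x ≠ b j →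
      |f j x| ≤ 2 / (d * |x - b j|))
    {j k : ℕ} (hj : j ∈ Finset.Icc 1 m) (hk : k ∈ Finset.Icc 1 m) (hjk : j ≠ k) :
    |f j (b k)| ≤ √α / 2 / |(k : ℝ) - j| := by
  have hm : (0 : ℝ) < m := Nat.cast_pos.mpr (Finset.nonempty_Icc.mp ⟨j, hj⟩)
  have hd : 0 < d := pos_of_mul_pos_left (by linarith : 0 < d * √α) (Real.sqrt_nonneg α)
  have hdist : 0 < |(k : ℝ) - j| := abs_pos.mpr (sub_ne_zero.mpr (by exact_mod_cast hjk.symm))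
  have hne : b k ≠ b j := sub_ne_zero.mp <| abs_pos.mp <|
    (show 0 < 2 * |(k : ℝ) - j| / m by positivity).trans_le (hsep j hj k hk)
  exact (hbound j hj (b k) (hmem k hk) hne).trans <|
    two_div_mul_le_div_of_two_mul_div_le hd hm hdist (by linarith) (hsep j hj k hk)

lemma exists_node_lt_abs_sum_sq_sub_sum_sq (hmd : (m : ℝ) ≤ d * √α / 2)
    (hmem : ∀ j ∈ Finset.Icc 1 m, b j ∈ Set.Icc (-1 : ℝ) 1)
    (hsep : ∀ j ∈ Finset.Icc 1 m, ∀ k ∈ Finset.Icc 1 m, 2 * |(k : ℝ) - j| / m ≤ |b k - b j|)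
    (hval : ∀ j ∈ Finset.Icc 1 m, f j (b j) = 1)
    (hbound : ∀ j ∈ Finset.Icc 1 m, ∀ x ∈ Set.Icc (-1 : ℝ) 1, x ≠ b j →
      |f j x| ≤ 2 / (d * |x - b j|))
    {S S' : Finset ℕ} (hS : S ⊆ Finset.Icc 1 m) (hS' : S' ⊆ Finset.Icc 1 m) (hne : S ≠ S') :
    ∃ k ∈ Finset.Icc 1 m, 1 - α < |∑ j ∈ S, f j (b k) ^ 2 - ∑ j ∈ S', f j (b k) ^ 2| := by
  refine exists_lt_abs_sum_sub_sum (a := fun j k => f j (b k) ^ 2) (fun j _ k _ => sq_nonneg _)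
    (fun k hk => by simp [hval k hk]) (fun k hk T hT hkT => ?_) hS hS' hne
  have hα : 0 < α := by
    have hm : (0 : ℝ) < m := Nat.cast_pos.mpr (Finset.nonempty_Icc.mp ⟨k, hk⟩)
    refine Real.sqrt_pos.mp ((Real.sqrt_nonneg α).lt_of_ne' fun h => ?_)
    simp only [h, mul_zero, zero_div] at hmd
    exact hmd.not_gt hm
  exact sum_sq_lt_of_abs_le_sqrt_div hα fun j hj =>
    abs_apply_node_le hmd hmem hsep hbound (hT hj) hk (ne_of_mem_of_not_mem hj hkT)

theorem indicator_sums_far_apart_general (hmd : (m : ℝ) ≤ d * √α / 2)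
    (hmem : ∀ j ∈ Finset.Icc 1 m, b j ∈ Set.Icc (-1 : ℝ) 1)
    (hsep : ∀ j ∈ Finset.Icc 1 m, ∀ k ∈ Finset.Icc 1 m, 2 * |(k : ℝ) - j| / m ≤ |b k - b j|)
    (hfin : ∀ j ∈ Finset.Icc 1 m, HasFiniteSupNorm (f j))
    (hval : ∀ j ∈ Finset.Icc 1 m, f j (b j) = 1)
    (hbound : ∀ j ∈ Finset.Icc 1 m, ∀ x ∈ Set.Icc (-1 : ℝ) 1, x ≠ b j →
      |f j x| ≤ 2 / (d * |x - b j|))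
    {S S' : Finset ℕ} (hS : S ⊆ Finset.Icc 1 m) (hS' : S' ⊆ Finset.Icc 1 m) (hne : S ≠ S') :
    1 - α < supNorm (fun x => ∑ j ∈ S, f j x ^ 2 - ∑ j ∈ S', f j x ^ 2) ∧
      ∀ q : ℝ → ℝ, HasFiniteSupNorm q →
        ¬(supNorm (fun x => q x - ∑ j ∈ S, f j x ^ 2) ≤ (1 - α) / 2 ∧
          supNorm (fun x => q x - ∑ j ∈ S', f j x ^ 2) ≤ (1 - α) / 2) := by
  have hsum : ∀ T ⊆ Finset.Icc 1 m, HasFiniteSupNorm fun x => ∑ j ∈ T, f j x ^ 2 :=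
    fun T hT => .sum fun j hj => (hfin j (hT hj)).pow 2
  have hfar : 1 - α < supNorm fun x => ∑ j ∈ S, f j x ^ 2 - ∑ j ∈ S', f j x ^ 2 := by
    obtain ⟨k, hk, hlt⟩ :=
      exists_node_lt_abs_sum_sq_sub_sum_sq hmd hmem hsep hval hbound hS hS' hne
    exact hlt.trans_le (((hsum S hS).sub (hsum S' hS')).abs_le_supNorm (hmem k hk))
  refine ⟨hfar, fun q hq ⟨hqS, hqS'⟩ => ?_⟩
  have htriangle := (hsum S hS).supNorm_sub_le (hsum S' hS') hq
  exact (htriangle.trans (add_le_add hqS hqS')).not_gt (by rwa [add_halves])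

end SeparatedNodes

lemma equispaced_mem_Icc {j m : ℕ} (hjm : j ≤ m) :
    -1 + 2 * (j : ℝ) / m ∈ Set.Icc (-1 : ℝ) 1 := by
  have hle : (j : ℝ) / m ≤ 1 := div_le_one_of_le₀ (by exact_mod_cast hjm) (Nat.cast_nonneg m)
  have hnonneg : 0 ≤ (j : ℝ) / m := by positivity
  rw [mul_div_assoc]
  constructor <;> linarith

lemma abs_equispaced_sub (m j k : ℕ) :
    |(-1 + 2 * (k : ℝ) / m) - (-1 + 2 * (j : ℝ) / m)| = 2 * |(k : ℝ) - j| / m := by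
  rw [add_sub_add_left_eq_sub, ← sub_div, ← mul_sub, abs_div, abs_mul, abs_two, Nat.abs_cast]

theorem indicator_sums_far_apart (d : ℕ) (hd : 1 ≤ d) (α : ℝ) (hα0 : 0 < α) (hα1 : α < 1)
    (m : ℕ) (hm : 0 < m) (hmd : (m : ℝ) ≤ (d : ℝ) * Real.sqrt α / 2)
    (b : ℕ → ℝ) (hb : ∀ j ∈ Finset.Icc 1 m, b j = -1 + 2 * (j : ℝ) / m)
    (p : ℕ → Polynomial ℝ)
    (hdeg : ∀ j ∈ Finset.Icc 1 m, (p j).natDegree ≤ d)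
    (hval : ∀ j ∈ Finset.Icc 1 m, (p j).eval (b j) = 1)
    (hsup : ∀ j ∈ Finset.Icc 1 m, (⨆ x : Set.Icc (-1 : ℝ) 1, |(p j).eval (x : ℝ)|) = 1)
    (hbound : ∀ j ∈ Finset.Icc 1 m, ∀ x ∈ Set.Icc (-1 : ℝ) 1, x ≠ b j →
      |(p j).eval x| ≤ 2 / ((d : ℝ) * |x - b j|)) :
    ∀ S ⊆ Finset.Icc 1 m, ∀ S' ⊆ Finset.Icc 1 m, S ≠ S' →
      1 - α ≤ supNorm (fun x => (∑ j ∈ S, ((p j).eval x) ^ 2) -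
          ∑ j ∈ S', ((p j).eval x) ^ 2) ∧
      ∀ q : Polynomial ℝ,
        ¬(supNorm (fun x => q.eval x - ∑ j ∈ S, ((p j).eval x) ^ 2) ≤ (1 - α) / 2 ∧
          supNorm (fun x => q.eval x - ∑ j ∈ S', ((p j).eval x) ^ 2) ≤ (1 - α) / 2) := by
  intro S hS S' hS' hne
  obtain ⟨hfar, hq⟩ := indicator_sums_far_apart_general hmd
    (fun j hj => hb j hj ▸ equispaced_mem_Icc (Finset.mem_Icc.mp hj).2)
    (fun j hj k hk => by rw [hb j hj, hb k hk, abs_equispaced_sub])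
    (fun j _ => .of_continuousOn (p j).continuousOn) hval hbound hS hS' hne
  exact ⟨hfar.le, fun q => hq _ (.of_continuousOn q.continuousOn)⟩
end
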